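/- (Reaction–diffusion regime.) There exist constants κ, σ, C > 0, independent of ε₁, ε₂ and of p, such that for all parameters with ε₂² ≪ ε₁ ≤ 1 (i.e. uniformly over 0 < ε₂² ≤ ε₁ ≤ 1), the solution u of the two-parameter problem and the weak Galerkin solution u_p of degree p on the Spectral Boundary Layer mesh ω_BL(κ,p) satisfy |||u − u_p|||_p ≤ C e^{−σ p}. -/

import Mathlib

noncomputable section

open MeasureTheory Set

/-- A mesh `0 = x₀ < x₁ < ⋯ < x_N = 1` on the interval `I = (0,1)`. -/
structure Mesh (N : ℕ) where
  pt : Fin (N + 1) → ℝ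
  mono : StrictMono pt
  left : pt 0 = 0
  right : pt (Fin.last N) = 1

namespace Mesh

variable {N : ℕ}

/-- The left endpoint `x_{j-1}` of the `j`-th cell `I_j`. -/
def xl (m : Mesh N) (j : Fin N) : ℝ := m.pt j.castSucc

/-- The right endpoint `x_j` of the `j`-th cell `I_j`. -/
def xr (m : Mesh N) (j : Fin N) : ℝ := m.pt j.succ

/-- The width `h_j` of the `j`-th cell. -/
def width (m : Mesh N) (j : Fin N) : ℝ := m.xr j - m.xl j

end Mesh

/-- `f` coincides (everywhere) with a polynomial of degree at most `p`. -/
def IsPolyDeg (f : ℝ → ℝ) (p : ℕ) : Prop :=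
  ∃ q : Polynomial ℝ, q.natDegree ≤ p ∧ ∀ t, f t = q.eval t

/-- `D` is the weak derivative of degree `p` of the weak function with interior part `v0`
and boundary values `vl`, `vr` on the cell `(a,b)`. -/
def IsWeakDerivOn (a b : ℝ) (p : ℕ) (v0 : ℝ → ℝ) (vl vr : ℝ) (D : ℝ → ℝ) : Prop :=
  IsPolyDeg D p ∧ ∀ q : Polynomial ℝ, q.natDegree ≤ p →
    (∫ t in a..b, D t * q.eval t) =
      -(∫ t in a..b, v0 t * q.derivative.eval t) + vr * q.eval b - vl * q.eval a

/-- `D` is the (cellwise) weak derivative `D_p v` of the weak function `v = (v0, vb)`. -/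
def IsWeakDeriv {N : ℕ} (m : Mesh N) (p : ℕ) (v0 : Fin N → ℝ → ℝ)
    (vb : Fin (N + 1) → ℝ) (D : Fin N → ℝ → ℝ) : Prop :=
  ∀ j, IsWeakDerivOn (m.xl j) (m.xr j) p (v0 j) (vb j.castSucc) (vb j.succ) (D j)

/-- `D` is the weak convection derivative of degree `p` on the cell `(a,b)`,
with convection coefficient `bb`. -/
def IsWeakConvDerivOn (bb : ℝ → ℝ) (a b : ℝ) (p : ℕ) (v0 : ℝ → ℝ) (vl vr : ℝ)
    (D : ℝ → ℝ) : Prop :=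
  IsPolyDeg D p ∧ ∀ q : Polynomial ℝ, q.natDegree ≤ p →
    (∫ t in a..b, D t * q.eval t) =
      -(∫ t in a..b, v0 t * deriv (fun s => bb s * q.eval s) t)
      + vr * (bb b * q.eval b) - vl * (bb a * q.eval a)

/-- `D` is the (cellwise) weak convection derivative `D_p^c v` of `v = (v0, vb)`. -/
def IsWeakConvDeriv {N : ℕ} (m : Mesh N) (bb : ℝ → ℝ) (p : ℕ) (v0 : Fin N → ℝ → ℝ)
    (vb : Fin (N + 1) → ℝ) (D : Fin N → ℝ → ℝ) : Prop :=
  ∀ j, IsWeakConvDerivOn bb (m.xl j) (m.xr j) p (v0 j) (vb j.castSucc) (vb j.succ) (D j)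

/-- The stabilisation bilinear form `S(u,v)`. -/
def Sform {N : ℕ} (m : Mesh N) (σ : Fin N → ℝ)
    (u0 : Fin N → ℝ → ℝ) (ub : Fin (N + 1) → ℝ)
    (v0 : Fin N → ℝ → ℝ) (vb : Fin (N + 1) → ℝ) : ℝ :=
  ∑ j : Fin N, σ j * ((u0 j (m.xr j) - ub j.succ) * (v0 j (m.xr j) - vb j.succ)
    + (u0 j (m.xl j) - ub j.castSucc) * (v0 j (m.xl j) - vb j.castSucc))

/-- The convection stabilisation bilinear form `S_c(u,v)`. -/
def Scform {N : ℕ} (m : Mesh N) (ε₂ : ℝ) (bb : ℝ → ℝ)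
    (u0 : Fin N → ℝ → ℝ) (ub : Fin (N + 1) → ℝ)
    (v0 : Fin N → ℝ → ℝ) (vb : Fin (N + 1) → ℝ) : ℝ :=
  ∑ j : Fin N, ε₂ * bb (m.xr j) * (u0 j (m.xr j) - ub j.succ) * (v0 j (m.xr j) - vb j.succ)

/-- The squared jump seminorm `|v|_J²`. -/
def Jsemi2 {N : ℕ} (m : Mesh N) (ε₂ : ℝ) (bb : ℝ → ℝ)
    (v0 : Fin N → ℝ → ℝ) (vb : Fin (N + 1) → ℝ) : ℝ :=
  ∑ j : Fin N, (if j.succ = Fin.last N then (1 : ℝ) / 2 else 1) * ε₂ * bb (m.xr j) *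
    (v0 j (m.xr j) - vb j.succ) ^ 2

/-- The squared WG energy norm `|||v|||_p²`, where `Dv` is the weak derivative `D_{p-1} v`. -/
def normP2 {N : ℕ} (m : Mesh N) (ε₁ ε₂ : ℝ) (bb : ℝ → ℝ) (σ : Fin N → ℝ)
    (v0 : Fin N → ℝ → ℝ) (vb : Fin (N + 1) → ℝ) (Dv : Fin N → ℝ → ℝ) : ℝ :=
  ε₁ * (∑ j : Fin N, ∫ t in (m.xl j)..(m.xr j), (Dv j t) ^ 2)
    + (∑ j : Fin N, ∫ t in (m.xl j)..(m.xr j), (v0 j t) ^ 2)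
    + Sform m σ v0 vb v0 vb + Scform m ε₂ bb v0 vb v0 vb + Jsemi2 m ε₂ bb v0 vb

/-- The squared WG norm `|||v|||²` (with the broken classical derivative). -/
def normT2 {N : ℕ} (m : Mesh N) (ε₁ ε₂ : ℝ) (bb : ℝ → ℝ) (σ : Fin N → ℝ)
    (v0 : Fin N → ℝ → ℝ) (vb : Fin (N + 1) → ℝ) : ℝ :=
  ε₁ * (∑ j : Fin N, ∫ t in (m.xl j)..(m.xr j), (deriv (v0 j) t) ^ 2)
    + (∑ j : Fin N, ∫ t in (m.xl j)..(m.xr j), (v0 j t) ^ 2)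
    + Sform m σ v0 vb v0 vb + Scform m ε₂ bb v0 vb v0 vb + Jsemi2 m ε₂ bb v0 vb

/-- The WG bilinear form `A_p(u,v)`; `Du = D_{p-1}u`, `Dcu = D_p^c u`, `Dv = D_{p-1}v`. -/
def Aform {N : ℕ} (m : Mesh N) (ε₁ ε₂ : ℝ) (bb rr : ℝ → ℝ) (σ : Fin N → ℝ)
    (u0 : Fin N → ℝ → ℝ) (ub : Fin (N + 1) → ℝ) (Du Dcu : Fin N → ℝ → ℝ)
    (v0 : Fin N → ℝ → ℝ) (vb : Fin (N + 1) → ℝ) (Dv : Fin N → ℝ → ℝ) : ℝ :=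
  ε₁ * (∑ j : Fin N, ∫ t in (m.xl j)..(m.xr j), Du j t * Dv j t)
    + ε₂ * (∑ j : Fin N, ∫ t in (m.xl j)..(m.xr j), Dcu j t * v0 j t)
    + (∑ j : Fin N, ∫ t in (m.xl j)..(m.xr j), rr t * u0 j t * v0 j t)
    + Sform m σ u0 ub v0 vb + Scform m ε₂ bb u0 ub v0 vb

/-- `u` solves the two-parameter singularly perturbed boundary-value problem
`-ε₁ u'' + ε₂ b u' + r u = f` on `(0,1)`, `u(0) = u(1) = 0`. -/
def SolvesBVP (ε₁ ε₂ : ℝ) (bb rr ff u : ℝ → ℝ) : Prop :=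
  u 0 = 0 ∧ u 1 = 0 ∧
    ∀ x ∈ Set.Icc (0 : ℝ) 1,
      -ε₁ * deriv (deriv u) x + ε₂ * bb x * deriv u x + rr x * u x = ff x

/-- `P` is the interpolant `I y` of `y` on the cell `(a,b)`. -/
def IsInterpOn (a b : ℝ) (p : ℕ) (y P : ℝ → ℝ) : Prop :=
  IsPolyDeg P p ∧ P a = y a ∧ P b = y b ∧
    ∀ q : Polynomial ℝ, q.natDegree ≤ p →
      (∫ t in a..b, (deriv P t - deriv y t) * q.derivative.eval t) = 0

/-- `P` is the (cellwise) interpolant `I y` of `y` on the mesh `m`. -/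
def IsInterp {N : ℕ} (m : Mesh N) (p : ℕ) (y : ℝ → ℝ) (P : Fin N → ℝ → ℝ) : Prop :=
  ∀ j, IsInterpOn (m.xl j) (m.xr j) p y (P j)

/-- Glue cellwise functions into a single function on `I` (cells taken left-closed). -/
def glue {N : ℕ} (m : Mesh N) (v0 : Fin N → ℝ → ℝ) : ℝ → ℝ :=
  fun t => ∑ j : Fin N, Set.indicator (Set.Ico (m.xl j) (m.xr j)) (v0 j) t

/-- The standard penalty parameters `σ_j = ε₁ p² / h_j`. -/
def stdPen {N : ℕ} (m : Mesh N) (ε₁ : ℝ) (p : ℕ) : Fin N → ℝ :=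
  fun j => ε₁ * (p : ℝ) ^ 2 / m.width j

/-- Membership of the interior part in the broken Sobolev space `H¹(ω)`. -/
def MemM {N : ℕ} (m : Mesh N) (v0 : Fin N → ℝ → ℝ) : Prop :=
  ∀ j, DifferentiableOn ℝ (v0 j) (Set.Icc (m.xl j) (m.xr j))

/-- `(up0, upb)`, with weak derivatives `Du = D_{p-1} u_p` and `Dcu = D_p^c u_p`, is a
weak Galerkin solution of degree `p` on the mesh `m`. -/
def IsWGsol {N : ℕ} (m : Mesh N) (ε₁ ε₂ : ℝ) (bb rr ff : ℝ → ℝ) (p : ℕ)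
    (up0 : Fin N → ℝ → ℝ) (upb : Fin (N + 1) → ℝ) (Du Dcu : Fin N → ℝ → ℝ) : Prop :=
  (∀ j, IsPolyDeg (up0 j) p) ∧ upb 0 = 0 ∧ upb (Fin.last N) = 0 ∧
    IsWeakDeriv m (p - 1) up0 upb Du ∧ IsWeakConvDeriv m bb p up0 upb Dcu ∧
    ∀ (w0 : Fin N → ℝ → ℝ) (wb : Fin (N + 1) → ℝ),
      (∀ j, IsPolyDeg (w0 j) p) → wb 0 = 0 → wb (Fin.last N) = 0 →
      ∀ Dw : Fin N → ℝ → ℝ, IsWeakDeriv m (p - 1) w0 wb Dw →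
        Aform m ε₁ ε₂ bb rr (stdPen m ε₁ p) up0 upb Du Dcu w0 wb Dw
          = ∑ j : Fin N, ∫ t in (m.xl j)..(m.xr j), ff t * w0 j t

/-- Broken `L²` norm over the mesh of a cellwise-given function. -/
def brokenL2 {N : ℕ} (m : Mesh N) (f : Fin N → ℝ → ℝ) : ℝ :=
  Real.sqrt (∑ j : Fin N, ∫ t in (m.xl j)..(m.xr j), (f j t) ^ 2)

/-- `L²(a,b)` norm. -/
def intL2 (a b : ℝ) (f : ℝ → ℝ) : ℝ := Real.sqrt (∫ t in a..b, (f t) ^ 2)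

/-- Analyticity of the data: `‖g⁽ⁿ⁾‖_{∞,[0,1]} ≲ n! γ_g^n`. -/
def AnalyticData (g : ℝ → ℝ) : Prop :=
  ContDiff ℝ (⊤ : ℕ∞) g ∧ ∃ C γg : ℝ, 0 < C ∧ 0 < γg ∧
    ∀ n : ℕ, ∀ x ∈ Set.Icc (0 : ℝ) 1, |iteratedDeriv n g x| ≤ C * n.factorial * γg ^ n

/-- The characteristic values `μ₀` (`sgn = -1`) and `μ₁` (`sgn = 1`). -/
def muVal (sgn ε₁ ε₂ : ℝ) (bb rr : ℝ → ℝ) : ℝ :=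
  sInf ((fun x => (sgn * ε₂ * bb x + Real.sqrt (ε₂ ^ 2 * (bb x) ^ 2 + 4 * ε₁ * rr x))
      / (2 * ε₁)) '' Set.Icc 0 1)

def mu0 (ε₁ ε₂ : ℝ) (bb rr : ℝ → ℝ) : ℝ := muVal (-1) ε₁ ε₂ bb rr

def mu1 (ε₁ ε₂ : ℝ) (bb rr : ℝ → ℝ) : ℝ := muVal 1 ε₁ ε₂ bb rr

/-- The Spectral Boundary Layer mesh in the reaction-convection-diffusion regime. -/
def IsSBLmeshRCD {N : ℕ} (κ : ℝ) (p : ℕ) (ε₁ ε₂ : ℝ) (bb rr : ℝ → ℝ) (m : Mesh N) : Prop :=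
  ((1 : ℝ) / 2 ≤ κ * p * ε₁ ∧ N = 1) ∨
    (κ * p * ε₂ < 1 / 2 ∧ N = 3 ∧
      m.pt 1 = κ * p / mu0 ε₁ ε₂ bb rr ∧ m.pt 2 = 1 - κ * p / mu1 ε₁ ε₂ bb rr)

/-- The Spectral Boundary Layer mesh in the reaction-diffusion regime. -/
def IsSBLmeshRD {N : ℕ} (κ : ℝ) (p : ℕ) (ε₁ : ℝ) (m : Mesh N) : Prop :=
  ((1 : ℝ) / 2 ≤ κ * p * ε₁ ∧ N = 1) ∨
    (κ * p * ε₁ < 1 / 2 ∧ N = 3 ∧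
      m.pt 1 = κ * p * Real.sqrt ε₁ ∧ m.pt 2 = 1 - κ * p * Real.sqrt ε₁)

/-- The Spectral Boundary Layer mesh in the convection-diffusion regime. -/
def IsSBLmeshCD {N : ℕ} (κ : ℝ) (p : ℕ) (ε₁ : ℝ) (m : Mesh N) : Prop :=
  ((1 : ℝ) / 2 ≤ κ * p * ε₁ ∧ N = 1) ∨
    (κ * p * ε₁ ≤ 1 / 2 ∧ N = 2 ∧ m.pt 1 = 1 - κ * p * ε₁)

open Polynomial in
theorem exists_antiderivative (q : ℝ[X]) :
    ∃ P : ℝ[X], P.derivative = q ∧ P.natDegree ≤ q.natDegree + 1 := by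
  refine ⟨∑ i ∈ Finset.range (q.natDegree + 1), C (q.coeff i / (i + 1)) * X ^ (i + 1), ?_, ?_⟩
  · conv_rhs => rw [q.as_sum_range_C_mul_X_pow]
    rw [derivative_sum]
    refine Finset.sum_congr rfl fun i _ => ?_
    have h : ((i : ℝ) + 1) ≠ 0 := by positivity
    rw [derivative_C_mul_X_pow]
    push_cast
    rw [div_mul_cancel₀ _ h]
  · refine natDegree_sum_le_of_forall_le _ _ fun i hi => ?_
    refine (natDegree_C_mul_X_pow_le _ _).trans ?_
    have := Finset.mem_range.1 hi
    omega

theorem integral_cos_int_mul {n : ℤ} (hn : n ≠ 0) :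
    ∫ θ in (-Real.pi)..Real.pi, Real.cos (n * θ) = 0 := by
  have hn' : (n : ℝ) ≠ 0 := by exact_mod_cast hn
  rw [intervalIntegral.integral_comp_mul_left (fun x => Real.cos x) hn']
  simp [Real.sin_int_mul_pi]

theorem integral_cos_mul_cos {n m : ℕ} (h : n ≠ m) :
    ∫ θ in (-Real.pi)..Real.pi, Real.cos (n * θ) * Real.cos (m * θ) = 0 := by
  have e : ∀ θ : ℝ, Real.cos (n * θ) * Real.cos (m * θ)
      = (Real.cos (((n : ℤ) - m : ℤ) * θ) + Real.cos (((n : ℤ) + m : ℤ) * θ)) / 2 := by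
    intro θ; push_cast; rw [sub_mul, add_mul, Real.cos_sub, Real.cos_add]; ring
  simp_rw [e]
  rw [intervalIntegral.integral_div, intervalIntegral.integral_add
    (Continuous.intervalIntegrable (by fun_prop) _ _)
    (Continuous.intervalIntegrable (by fun_prop) _ _),
    integral_cos_int_mul (by omega), integral_cos_int_mul (by omega)]
  simp

theorem integral_cos_sq_pos (n : ℕ) :
    0 < ∫ θ in (-Real.pi)..Real.pi, Real.cos (n * θ) * Real.cos (n * θ) := by
  have hpi := Real.pi_pos
  refine intervalIntegral.integral_pos (by linarith) (by fun_prop) (fun x _ => mul_self_nonneg _)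
    ⟨0, ⟨by linarith, by linarith⟩, by simp⟩

/-- A periodic function whose Fourier coefficients vanish up to order `p` obeys a Poincaré
inequality with constant `1 / (p + 1)`. -/
theorem poincare_of_fourierCoeffOn_eq_zero (F F' : ℝ → ℝ) (hF : ∀ x, HasDerivAt F (F' x) x)
    (hF' : Continuous F') (hper : F (-Real.pi) = F Real.pi) (p : ℕ)
    (hcos : ∀ n : ℕ, n ≤ p → ∫ θ in (-Real.pi)..Real.pi, F θ * Real.cos (n * θ) = 0)
    (hsin : ∀ n : ℕ, n ≤ p → ∫ θ in (-Real.pi)..Real.pi, F θ * Real.sin (n * θ) = 0) :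
    ((p : ℝ) + 1) ^ 2 * ∫ θ in (-Real.pi)..Real.pi, (F θ) ^ 2
      ≤ ∫ θ in (-Real.pi)..Real.pi, (F' θ) ^ 2 := by
  have hpi := Real.pi_pos
  have hab : -Real.pi < Real.pi := by linarith
  have hFc : Continuous F := continuous_iff_continuousAt.2 fun x => (hF x).continuousAt
  have hmem : ∀ G : ℝ → ℝ, Continuous G →
      MemLp (fun x => (G x : ℂ)) 2 (volume.restrict (Ioc (-Real.pi) Real.pi)) := by
    intro G hG
    have hG' : Continuous fun x => (G x : ℂ) := by fun_prop
    have hb : BddAbove ((fun x => ‖(G x : ℂ)‖) '' Icc (-Real.pi) Real.pi) :=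
      (isCompact_Icc.image hG'.norm).bddAbove
    obtain ⟨M, hM⟩ := hb
    refine MemLp.of_bound hG'.aestronglyMeasurable M ?_
    refine (ae_restrict_iff' measurableSet_Ioc).2 (Filter.Eventually.of_forall fun x hx => ?_)
    exact hM ⟨x, Ioc_subset_Icc_self hx, rfl⟩
  have h1 := hasSum_sq_fourierCoeffOn hab (hmem F hFc)
  have h2 := hasSum_sq_fourierCoeffOn hab (hmem F' hF')
  have hzero : ∀ n : ℤ, n.natAbs ≤ p → fourierCoeffOn hab (fun x => (F x : ℂ)) n = 0 := by
    intro n hn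
    have key : ∫ x in (-Real.pi)..Real.pi,
        fourier (-n) (x : AddCircle (Real.pi - -Real.pi)) • (F x : ℂ) = 0 := by
      have e : ∀ x : ℝ, fourier (-n) (x : AddCircle (Real.pi - -Real.pi)) • (F x : ℂ)
          = ((F x * Real.cos (n * x) : ℝ) : ℂ) - Complex.I * ((F x * Real.sin (n * x) : ℝ) : ℂ) := by
        intro x
        rw [fourier_coe_apply]
        have : (2 * Real.pi * Complex.I * ((-n : ℤ) : ℂ) * (x : ℂ) / ((Real.pi - -Real.pi : ℝ) : ℂ))
            = ((-(n * x) : ℝ) : ℂ) * Complex.I := by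
          have : (Real.pi : ℂ) ≠ 0 := by exact_mod_cast hpi.ne'
          push_cast; field_simp; ring
        rw [this, Complex.exp_mul_I, ← Complex.ofReal_cos, ← Complex.ofReal_sin, Real.cos_neg,
          Real.sin_neg]
        push_cast; simp only [smul_eq_mul]; ring
      simp_rw [e]
      rw [intervalIntegral.integral_sub (Continuous.intervalIntegrable (by fun_prop) _ _)
        (Continuous.intervalIntegrable (by fun_prop) _ _), intervalIntegral.integral_const_mul,
        intervalIntegral.integral_ofReal, intervalIntegral.integral_ofReal]
      have c0 : ∫ x in (-Real.pi)..Real.pi, F x * Real.cos (n * x) = 0 := by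
        obtain ⟨m, rfl | rfl⟩ := n.eq_nat_or_neg
        · simpa using hcos m (by simpa using hn)
        · simpa using hcos m (by simpa using hn)
      have s0 : ∫ x in (-Real.pi)..Real.pi, F x * Real.sin (n * x) = 0 := by
        obtain ⟨m, rfl | rfl⟩ := n.eq_nat_or_neg
        · simpa using hsin m (by simpa using hn)
        · simpa using hsin m (by simpa using hn)
      rw [c0, s0]; simp
    rw [fourierCoeffOn_eq_integral, key, smul_zero]
  have hd : ∀ n : ℤ, n ≠ 0 → ‖fourierCoeffOn hab (fun x => (F' x : ℂ)) n‖
      = |(n : ℝ)| * ‖fourierCoeffOn hab (fun x => (F x : ℂ)) n‖ := by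
    intro n hn
    have := fourierCoeffOn_of_hasDerivAt hab (f := fun x => (F x : ℂ)) (f' := fun x => (F' x : ℂ))
      hn (fun x _ => (hF x).ofReal_comp) (Continuous.intervalIntegrable (by fun_prop) _ _)
    rw [this, hper]
    have hn' : (|(n : ℝ)|) ≠ 0 := by simpa using hn
    simp only [sub_self, mul_zero, zero_sub, norm_mul, norm_neg, norm_div, norm_one]
    have : ‖((Real.pi : ℂ) - ((-Real.pi : ℝ) : ℂ))‖ = 2 * Real.pi := by
      rw [← Complex.ofReal_sub, Complex.norm_real]
      rw [Real.norm_of_nonneg (by linarith)]; ring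
    rw [this]
    simp [abs_of_pos hpi]
    field_simp
  have hle : ∀ n : ℤ, ((p : ℝ) + 1) ^ 2 * ‖fourierCoeffOn hab (fun x => (F x : ℂ)) n‖ ^ 2
      ≤ ‖fourierCoeffOn hab (fun x => (F' x : ℂ)) n‖ ^ 2 := by
    intro n
    by_cases hn : n.natAbs ≤ p
    · rw [hzero n hn]; simp
    · have hn0 : n ≠ 0 := by rintro rfl; simp at hn
      rw [hd n hn0, mul_pow]
      gcongr
      have : (p + 1 : ℕ) ≤ n.natAbs := by omega
      have h3 : ((p + 1 : ℕ) : ℝ) ≤ (n.natAbs : ℝ) := by exact_mod_cast this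
      rw [Nat.cast_natAbs] at h3
      push_cast at h3
      exact h3
  have h3 := hasSum_le hle (h1.mul_left _) h2
  simp only [smul_eq_mul, Complex.norm_real, Real.norm_eq_abs, sq_abs] at h3
  rw [mul_left_comm] at h3
  exact le_of_mul_le_mul_left h3 (inv_pos.2 (by linarith))

theorem jackson_first_order (z z' : ℝ → ℝ) (hz : ∀ x, HasDerivAt z (z' x) x)
    (hz' : Continuous z') (p : ℕ) :
    ∃ s : Polynomial ℝ, s.natDegree ≤ p ∧
      ((p : ℝ) + 1) ^ 2 * ∫ θ in (-Real.pi)..Real.pi, (z (Real.cos θ) - s.eval (Real.cos θ)) ^ 2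
        ≤ ∫ θ in (-Real.pi)..Real.pi, (z' (Real.cos θ)) ^ 2 := by
  have hpi := Real.pi_pos
  have hzc : Continuous z := continuous_iff_continuousAt.2 fun x => (hz x).continuousAt
  set a : ℕ → ℝ := fun n => (∫ θ in (-Real.pi)..Real.pi, z (Real.cos θ) * Real.cos (n * θ))
    / ∫ θ in (-Real.pi)..Real.pi, Real.cos (n * θ) * Real.cos (n * θ) with ha
  set R := Finset.range (p + 1) with hR
  set S : ℝ → ℝ := fun θ => ∑ n ∈ R, a n * Real.cos (n * θ) with hS
  set S' : ℝ → ℝ := fun θ => ∑ n ∈ R, a n * (-Real.sin (n * θ) * n) with hS'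
  set S'' : ℝ → ℝ := fun θ => ∑ n ∈ R, a n * (-(Real.cos (n * θ) * n) * n) with hS''
  have hinner : ∀ (n : ℕ) (θ : ℝ), HasDerivAt (fun θ : ℝ => (n : ℝ) * θ) n θ := fun n θ => by
    simpa using (hasDerivAt_id θ).const_mul (n : ℝ)
  have dS : ∀ θ, HasDerivAt S (S' θ) θ := fun θ => by
    refine HasDerivAt.fun_sum fun n _ => ((hinner n θ).cos).const_mul _
  have dS' : ∀ θ, HasDerivAt S' (S'' θ) θ := fun θ => by
    refine HasDerivAt.fun_sum fun n _ => ?_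
    simpa using ((((hinner n θ).sin).neg).mul_const (n : ℝ)).const_mul (a n)
  have cS : Continuous S := by fun_prop
  have cS' : Continuous S' := by fun_prop
  have cS'' : Continuous S'' := by fun_prop
  set G' : ℝ → ℝ := fun θ => z' (Real.cos θ) * -Real.sin θ with hG'
  have dG : ∀ θ, HasDerivAt (fun θ => z (Real.cos θ)) (G' θ) θ := fun θ =>
    (hz (Real.cos θ)).comp θ (Real.hasDerivAt_cos θ)
  have cG' : Continuous G' := by fun_prop
  set H : ℝ → ℝ := fun θ => z (Real.cos θ) - S θ with hH
  have dH : ∀ θ, HasDerivAt H (G' θ - S' θ) θ := fun θ => (dG θ).sub (dS θ)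
  have cH : Continuous H := by fun_prop
  have hcos : ∀ m : ℕ, m ≤ p → ∫ θ in (-Real.pi)..Real.pi, H θ * Real.cos (m * θ) = 0 := by
    intro m hm
    have e : ∀ θ, H θ * Real.cos (m * θ) = z (Real.cos θ) * Real.cos (m * θ)
        - ∑ n ∈ R, a n * (Real.cos (n * θ) * Real.cos (m * θ)) := by
      intro θ; simp only [hH, hS, sub_mul, Finset.sum_mul]
      congr 1; exact Finset.sum_congr rfl fun n _ => by ring
    simp_rw [e]
    rw [intervalIntegral.integral_sub (Continuous.intervalIntegrable (by fun_prop) _ _)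
      (Continuous.intervalIntegrable (by fun_prop) _ _), intervalIntegral.integral_finsetSum
      (fun n _ => Continuous.intervalIntegrable (by fun_prop) _ _)]
    simp_rw [intervalIntegral.integral_const_mul]
    rw [Finset.sum_eq_single_of_mem m (by rw [hR, Finset.mem_range]; omega)
      (fun n _ hn => by rw [integral_cos_mul_cos hn, mul_zero])]
    rw [ha]; simp only
    rw [div_mul_cancel₀ _ (integral_cos_sq_pos m).ne', sub_self]
  have hsin : ∀ m : ℕ, m ≤ p → ∫ θ in (-Real.pi)..Real.pi, H θ * Real.sin (m * θ) = 0 := by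
    intro m _
    have h1 := intervalIntegral.integral_comp_neg (a := -Real.pi) (b := Real.pi)
      (fun θ => H θ * Real.sin (m * θ))
    have e : ∀ θ, H (-θ) * Real.sin (m * -θ) = -(H θ * Real.sin (m * θ)) := by
      intro θ; simp [hH, hS, mul_neg]
    simp_rw [e] at h1
    rw [intervalIntegral.integral_neg, neg_neg] at h1
    linarith
  have hper : H (-Real.pi) = H Real.pi := by simp [hH, hS, mul_neg]
  have main := poincare_of_fourierCoeffOn_eq_zero H (fun θ => G' θ - S' θ) dH (by fun_prop) hper p
    hcos hsin
  have horth : ∫ θ in (-Real.pi)..Real.pi, (G' θ - S' θ) * S' θ = 0 := by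
    have ibp := intervalIntegral.integral_mul_deriv_eq_deriv_mul (a := -Real.pi) (b := Real.pi)
      (fun x _ => dH x) (fun x _ => dS' x) (Continuous.intervalIntegrable (by fun_prop) _ _)
      (cS''.intervalIntegrable _ _)
    have b1 : S' Real.pi = 0 := by simp [hS', Real.sin_nat_mul_pi]
    have b2 : S' (-Real.pi) = 0 := by simp [hS', mul_neg, Real.sin_nat_mul_pi]
    have l : ∫ θ in (-Real.pi)..Real.pi, H θ * S'' θ = 0 := by
      have e : ∀ θ, H θ * S'' θ
          = ∑ n ∈ R, -(a n * (n : ℝ) * n) * (H θ * Real.cos (n * θ)) := by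
        intro θ; simp only [hS'', Finset.mul_sum]
        exact Finset.sum_congr rfl fun n _ => by ring
      simp_rw [e]
      rw [intervalIntegral.integral_finsetSum
        (fun n _ => Continuous.intervalIntegrable (by fun_prop) _ _)]
      refine Finset.sum_eq_zero fun n hn => ?_
      rw [intervalIntegral.integral_const_mul, hcos n (by rw [hR, Finset.mem_range] at hn; omega),
        mul_zero]
    rw [l, b1, b2] at ibp
    linarith
  have hsq : ∫ θ in (-Real.pi)..Real.pi, (G' θ - S' θ) ^ 2
      ≤ ∫ θ in (-Real.pi)..Real.pi, (z' (Real.cos θ)) ^ 2 := by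
    have e : ∫ θ in (-Real.pi)..Real.pi, (G' θ - S' θ) ^ 2
        = ∫ θ in (-Real.pi)..Real.pi, ((G' θ - S' θ) ^ 2 + 2 * ((G' θ - S' θ) * S' θ)) := by
      rw [intervalIntegral.integral_add (Continuous.intervalIntegrable (by fun_prop) _ _)
        (Continuous.intervalIntegrable (by fun_prop) _ _), intervalIntegral.integral_const_mul,
        horth]
      simp
    rw [e]
    refine intervalIntegral.integral_mono_on (by linarith)
      (Continuous.intervalIntegrable (by fun_prop) _ _)
      (Continuous.intervalIntegrable (by fun_prop) _ _) fun θ _ => ?_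
    have h1 : (G' θ) ^ 2 ≤ (z' (Real.cos θ)) ^ 2 := by
      simp only [hG', mul_pow, neg_sq]
      nlinarith [Real.sin_sq_le_one θ, sq_nonneg (z' (Real.cos θ))]
    nlinarith [sq_nonneg (S' θ)]
  refine ⟨∑ n ∈ R, Polynomial.C (a n) * Polynomial.Chebyshev.T ℝ n, ?_, ?_⟩
  · refine Polynomial.natDegree_sum_le_of_forall_le _ _ fun n hn => ?_
    refine (Polynomial.natDegree_C_mul_le _ _).trans ?_
    rw [Polynomial.Chebyshev.natDegree_T]
    rw [hR, Finset.mem_range] at hn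
    simp; omega
  · refine le_trans (le_of_eq ?_) (main.trans hsq)
    congr 1
    refine intervalIntegral.integral_congr fun θ _ => ?_
    simp only [hH, hS, Polynomial.eval_finsetSum, Polynomial.eval_mul, Polynomial.eval_C,
      Polynomial.Chebyshev.T_real_cos, Int.cast_natCast]

theorem jackson_iterated (k : ℕ) : ∀ (p : ℕ) (y : ℝ → ℝ) (A : ℝ), k ≤ p →
    ContDiff ℝ (⊤ : ℕ∞) y → (∀ x ∈ Icc (-1 : ℝ) 1, |iteratedDeriv k y x| ≤ A) →
    ∃ s : Polynomial ℝ, s.natDegree ≤ p ∧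
      ((p : ℝ) + 1 - k) ^ (2 * k) *
        ∫ θ in (-Real.pi)..Real.pi, (y (Real.cos θ) - s.eval (Real.cos θ)) ^ 2
        ≤ 2 * Real.pi * A ^ 2 := by
  have hpi := Real.pi_pos
  induction k with
  | zero =>
    intro p y A _ hy hA
    refine ⟨0, by simp, ?_⟩
    have hyc := hy.continuous
    have : ∫ θ in (-Real.pi)..Real.pi, (y (Real.cos θ)) ^ 2
        ≤ ∫ θ in (-Real.pi)..Real.pi, A ^ 2 := by
      refine intervalIntegral.integral_mono_on (by linarith)
        (Continuous.intervalIntegrable (by fun_prop) _ _) (by simp) fun θ _ => ?_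
      have := hA (Real.cos θ) ⟨Real.neg_one_le_cos θ, Real.cos_le_one θ⟩
      rw [iteratedDeriv_zero] at this
      exact sq_le_sq' (by linarith [neg_abs_le (y (Real.cos θ))]) ((le_abs_self _).trans this)
    simp at this ⊢
    linarith
  | succ k ih =>
    intro p y A hk hy hA
    obtain ⟨q, rfl⟩ : ∃ q, p = q + 1 := ⟨p - 1, by omega⟩
    have hy' : ContDiff ℝ (⊤ : ℕ∞) (deriv y) :=
      (contDiff_infty_iff_deriv.1 hy).2
    obtain ⟨s, hs, hsb⟩ := ih q (deriv y) A (by omega) hy' (by simpa [iteratedDeriv_succ'] using hA)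
    obtain ⟨P, hP, hPd⟩ := exists_antiderivative s
    obtain ⟨t, ht, htb⟩ := jackson_first_order (fun x => y x - P.eval x)
      (fun x => deriv y x - s.eval x)
      (fun x => ((hy.differentiable (by simp)) x).hasDerivAt.sub (by rw [← hP]; exact P.hasDerivAt x))
      (hy'.continuous.sub s.continuous) (q + 1)
    refine ⟨P + t, (Polynomial.natDegree_add_le _ _).trans (by omega), ?_⟩
    have e : ∀ x, y x - (P + t).eval x = y x - P.eval x - t.eval x := fun x => by simp; ring
    simp_rw [e]
    set J := ∫ θ in (-Real.pi)..Real.pi,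
      (y (Real.cos θ) - P.eval (Real.cos θ) - t.eval (Real.cos θ)) ^ 2
    have hJ : 0 ≤ J := intervalIntegral.integral_nonneg (by linarith) fun _ _ => sq_nonneg _
    have hkq : (k : ℝ) ≤ q := by exact_mod_cast (by omega : k ≤ q)
    have hc : ((q + 1 : ℕ) : ℝ) + 1 - ((k + 1 : ℕ) : ℝ) = (q : ℝ) + 1 - k := by push_cast; ring
    rw [hc, show 2 * (k + 1) = 2 * k + 2 by ring, pow_add, mul_assoc]
    have h0 : (0 : ℝ) ≤ (q : ℝ) + 1 - k := by linarith
    refine le_trans ?_ hsb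
    refine mul_le_mul_of_nonneg_left ?_ (by positivity)
    refine le_trans ?_ htb
    refine mul_le_mul_of_nonneg_right ?_ hJ
    refine pow_le_pow_left₀ h0 ?_ 2
    have : (0 : ℝ) ≤ k := by positivity
    push_cast; linarith

theorem integral_neg_one_one_eq_integral_cos (f : ℝ → ℝ) (hf : Continuous f) :
    ∫ x in (-1 : ℝ)..1, f x = ∫ θ in (0 : ℝ)..Real.pi, f (Real.cos θ) * Real.sin θ := by
  have h := intervalIntegral.integral_comp_mul_deriv (a := 0) (b := Real.pi)
    (f := Real.cos) (f' := fun x => -Real.sin x) (g := f)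
    (fun x _ => Real.hasDerivAt_cos x) (by fun_prop) hf
  rw [Real.cos_zero, Real.cos_pi] at h
  have h' := intervalIntegral.integral_symm (μ := volume) (f := f) (-1) 1
  have e : ∀ θ, (f ∘ Real.cos) θ * -Real.sin θ = -(f (Real.cos θ) * Real.sin θ) := fun θ => by
    simp
  simp_rw [e] at h
  rw [intervalIntegral.integral_neg] at h
  linarith

/-- Cauchy-Schwarz on an interval. -/
theorem sq_integral_mul_le {a b : ℝ} (hab : a ≤ b) (f g : ℝ → ℝ) (hf : Continuous f)
    (hg : Continuous g) :
    (∫ x in a..b, f x * g x) ^ 2 ≤ (∫ x in a..b, f x ^ 2) * ∫ x in a..b, g x ^ 2 := by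
  have key : ∀ t : ℝ, 0 ≤ (∫ x in a..b, g x ^ 2) * (t * t) + (2 * ∫ x in a..b, f x * g x) * t
      + ∫ x in a..b, f x ^ 2 := by
    intro t
    have h : 0 ≤ ∫ x in a..b, (f x + t * g x) ^ 2 :=
      intervalIntegral.integral_nonneg hab fun _ _ => sq_nonneg _
    have e : ∀ x, (f x + t * g x) ^ 2
        = (t * t) * g x ^ 2 + (2 * t) * (f x * g x) + f x ^ 2 := fun x => by ring
    simp_rw [e] at h
    rw [intervalIntegral.integral_add (Continuous.intervalIntegrable (by fun_prop) _ _)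
      (Continuous.intervalIntegrable (by fun_prop) _ _), intervalIntegral.integral_add
      (Continuous.intervalIntegrable (by fun_prop) _ _)
      (Continuous.intervalIntegrable (by fun_prop) _ _), intervalIntegral.integral_const_mul,
      intervalIntegral.integral_const_mul] at h
    linarith
  have := discrim_le_zero key
  rw [discrim] at this
  nlinarith

theorem exists_poly_integral_abs_sub_le {a b : ℝ} (hab : a < b) (y : ℝ → ℝ)
    (hy : ContDiff ℝ (⊤ : ℕ∞) y) (k p : ℕ) (hkp : k ≤ p) (A : ℝ)
    (hA : ∀ x ∈ Icc a b, |iteratedDeriv k y x| ≤ A) :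
    ∃ g : Polynomial ℝ, g.natDegree ≤ p ∧
      ∫ x in a..b, |y x - g.eval x|
        ≤ Real.pi * (b - a) * ((b - a) / (2 * ((p : ℝ) + 1 - k))) ^ k * A := by
  have hpi := Real.pi_pos
  set c : ℝ := (b - a) / 2 with hc
  set m : ℝ := (a + b) / 2 with hm
  have hc0 : 0 < c := by rw [hc]; linarith
  have hA0 : 0 ≤ A := (abs_nonneg _).trans (hA a ⟨le_rfl, hab.le⟩)
  have hkp' : (k : ℝ) ≤ p := by exact_mod_cast hkp
  have hq : 0 < (p : ℝ) + 1 - k := by linarith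
  set Y : ℝ → ℝ := fun s => y (c * s + m) with hY
  have hYs : ContDiff ℝ (⊤ : ℕ∞) Y := hy.comp (by fun_prop)
  have hYd : ∀ s ∈ Icc (-1 : ℝ) 1, |iteratedDeriv k Y s| ≤ c ^ k * A := by
    intro s hs
    have e : iteratedDeriv k Y s = c ^ k * iteratedDeriv k y (c * s + m) := by
      have h1 := iteratedDeriv_comp_const_mul (n := k) (f := fun x => y (x + m))
        ((hy.comp (by fun_prop : ContDiff ℝ (⊤ : ℕ∞) fun x : ℝ => x + m)).of_le
          (by exact_mod_cast le_top)) c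
      have h2 := congrFun h1 s
      rw [iteratedDeriv_comp_add_const] at h2
      simpa using h2
    rw [e, abs_mul, abs_of_pos (pow_pos hc0 k)]
    refine mul_le_mul_of_nonneg_left (hA _ ⟨?_, ?_⟩) (by positivity)
    · have := hs.1; rw [hc] at hc0 ⊢; rw [hm]; nlinarith
    · have := hs.2; rw [hc] at hc0 ⊢; rw [hm]; nlinarith
  obtain ⟨s, hs, hsb⟩ := jackson_iterated k p Y (c ^ k * A) hkp hYs hYd
  set g : Polynomial ℝ := s.comp (Polynomial.C c⁻¹ * Polynomial.X - Polynomial.C (m / c)) with hg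
  have hge : ∀ x, g.eval x = s.eval (c⁻¹ * x - m / c) := fun x => by simp [hg]
  refine ⟨g, ?_, ?_⟩
  · rw [hg, Polynomial.natDegree_comp]
    have h1 : (Polynomial.C c⁻¹ * Polynomial.X - Polynomial.C (m / c)).natDegree ≤ 1 := by
      rw [Polynomial.natDegree_sub_C]; exact (Polynomial.natDegree_C_mul_le _ _).trans Polynomial.natDegree_X_le
    nlinarith
  have hYc := hYs.continuous
  have hyc := hy.continuous
  have hsc := s.continuous
  set D : ℝ → ℝ := fun t => |Y t - s.eval t| with hD
  have hDc : Continuous D := by fun_prop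
  have e1 : ∫ x in a..b, |y x - g.eval x| = c * ∫ t in (-1 : ℝ)..1, D t := by
    have h := intervalIntegral.integral_comp_mul_add (a := -1) (b := 1)
      (fun x => |y x - g.eval x|) hc0.ne' m
    have e : ∀ t, |y (c * t + m) - g.eval (c * t + m)| = D t := by
      intro t
      rw [hge, hD]
      have : c⁻¹ * (c * t + m) - m / c = t := by field_simp; ring
      rw [this]
    simp_rw [e] at h
    rw [h, show c * -1 + m = a by rw [hc, hm]; ring, show c * 1 + m = b by rw [hc, hm]; ring,
      smul_eq_mul, mul_inv_cancel_left₀ hc0.ne']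
  set I1 := ∫ θ in (-Real.pi)..Real.pi, D (Real.cos θ) with hI1
  have e2 : ∫ t in (-1 : ℝ)..1, D t ≤ I1 := by
    rw [integral_neg_one_one_eq_integral_cos D hDc]
    have h1 : ∫ θ in (0 : ℝ)..Real.pi, D (Real.cos θ) * Real.sin θ
        ≤ ∫ θ in (0 : ℝ)..Real.pi, D (Real.cos θ) := by
      refine intervalIntegral.integral_mono_on hpi.le
        (Continuous.intervalIntegrable (by fun_prop) _ _)
        (Continuous.intervalIntegrable (by fun_prop) _ _) fun θ _ => ?_
      exact mul_le_of_le_one_right (abs_nonneg _) (Real.sin_le_one θ)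
    have h2 : I1 = (∫ θ in (-Real.pi)..0, D (Real.cos θ)) + ∫ θ in (0 : ℝ)..Real.pi, D (Real.cos θ) :=
      (intervalIntegral.integral_add_adjacent_intervals
        (Continuous.intervalIntegrable (by fun_prop) _ _)
        (Continuous.intervalIntegrable (by fun_prop) _ _)).symm
    have h3 : 0 ≤ ∫ θ in (-Real.pi)..0, D (Real.cos θ) :=
      intervalIntegral.integral_nonneg (by linarith) fun _ _ => abs_nonneg _
    linarith
  have hI0 : 0 ≤ I1 := intervalIntegral.integral_nonneg (by linarith) fun _ _ => abs_nonneg _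
  set I2 := ∫ θ in (-Real.pi)..Real.pi, (Y (Real.cos θ) - s.eval (Real.cos θ)) ^ 2 with hI2
  have e3 : I1 ^ 2 ≤ 2 * Real.pi * I2 := by
    have h := sq_integral_mul_le (a := -Real.pi) (b := Real.pi) (by linarith) (fun _ => 1)
      (fun θ => D (Real.cos θ)) (by fun_prop) (by fun_prop)
    simp only [one_mul, one_pow, hD, sq_abs] at h
    rw [intervalIntegral.integral_const] at h
    simp only [smul_eq_mul, mul_one] at h
    rw [hI1, hI2]
    linarith
  have e4 : ((p : ℝ) + 1 - k) ^ k * I1 ≤ 2 * Real.pi * (c ^ k * A) := by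
    refine le_of_sq_le_sq ?_ (by positivity)
    calc (((p : ℝ) + 1 - k) ^ k * I1) ^ 2 = ((p : ℝ) + 1 - k) ^ (2 * k) * I1 ^ 2 := by
          rw [mul_pow, ← pow_mul, mul_comm k 2]
      _ ≤ ((p : ℝ) + 1 - k) ^ (2 * k) * (2 * Real.pi * I2) := by gcongr
      _ = 2 * Real.pi * (((p : ℝ) + 1 - k) ^ (2 * k) * I2) := by ring
      _ ≤ 2 * Real.pi * (2 * Real.pi * (c ^ k * A) ^ 2) := by gcongr
      _ = (2 * Real.pi * (c ^ k * A)) ^ 2 := by ring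
  rw [e1]
  have e5 : I1 ≤ 2 * Real.pi * (c ^ k * A) / ((p : ℝ) + 1 - k) ^ k := by
    rw [le_div_iff₀ (by positivity)]; linarith
  calc c * ∫ t in (-1 : ℝ)..1, D t ≤ c * (2 * Real.pi * (c ^ k * A) / ((p : ℝ) + 1 - k) ^ k) := by
        gcongr; exact e2.trans e5
    _ = Real.pi * (b - a) * (c / ((p : ℝ) + 1 - k)) ^ k * A := by
        have hba : b - a = 2 * c := by rw [hc]; ring
        rw [hba]
        clear_value c
        rw [div_pow]; ring
    _ = _ := by rw [hc, div_div]

/-- The chord of `y` over `[a, b]`. -/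
theorem exists_linear_interpolant {a b : ℝ} (hab : a < b) (y y' : ℝ → ℝ)
    (hy : ∀ x ∈ Icc a b, HasDerivAt y (y' x) x) :
    ∃ (Q : Polynomial ℝ) (ξ : ℝ), Q.natDegree ≤ 1 ∧ Q.eval a = y a ∧ Q.eval b = y b ∧ ξ ∈ Ioo a b ∧
      (∀ x, Q.derivative.eval x = y' ξ) ∧
      ∀ x ∈ Icc a b, ∀ V, |y a| ≤ V → |y b| ≤ V → |Q.eval x| ≤ V := by
  obtain ⟨ξ, hξ, he⟩ := exists_hasDerivAt_eq_slope y y' hab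
    (fun x hx => (hy x hx).continuousAt.continuousWithinAt)
    (fun x hx => hy x (Ioo_subset_Icc_self hx))
  have hba : b - a ≠ 0 := by linarith
  refine ⟨Polynomial.C (y' ξ) * Polynomial.X + Polynomial.C (y a - y' ξ * a), ξ,
    Polynomial.natDegree_linear_le, by simp, ?_, hξ, by simp, ?_⟩
  · simp only [Polynomial.eval_add, Polynomial.eval_mul, Polynomial.eval_C, Polynomial.eval_X]
    rw [he]; field_simp; ring
  · intro x hx V ha hb
    have e : (Polynomial.C (y' ξ) * Polynomial.X + Polynomial.C (y a - y' ξ * a)).eval x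
        = ((b - x) / (b - a)) * y a + ((x - a) / (b - a)) * y b := by
      simp only [Polynomial.eval_add, Polynomial.eval_mul, Polynomial.eval_C, Polynomial.eval_X]
      rw [he]; field_simp; ring
    rw [e]
    have h1 : 0 ≤ (b - x) / (b - a) := div_nonneg (by linarith [hx.2]) (by linarith)
    have h2 : 0 ≤ (x - a) / (b - a) := div_nonneg (by linarith [hx.1]) (by linarith)
    have h3 : (b - x) / (b - a) + (x - a) / (b - a) = 1 := by field_simp; ring
    calc _ ≤ |(b - x) / (b - a) * y a| + |(x - a) / (b - a) * y b| := abs_add_le _ _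
      _ = (b - x) / (b - a) * |y a| + (x - a) / (b - a) * |y b| := by
          rw [abs_mul, abs_mul, abs_of_nonneg h1, abs_of_nonneg h2]
      _ ≤ (b - x) / (b - a) * V + (x - a) / (b - a) * V := by gcongr
      _ = V := by rw [← add_mul, h3, one_mul]

/-- Polynomial approximation of order `k` with degree `p`, matching the endpoint values. -/
theorem exists_poly_approx {a b : ℝ} (hab : a < b) (y : ℝ → ℝ)
    (hy : ContDiff ℝ (⊤ : ℕ∞) y) (k p : ℕ) (hkp : k + 2 ≤ p) (A : ℝ)
    (hA : ∀ x ∈ Icc a b, |iteratedDeriv (k + 2) y x| ≤ A) :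
    ∃ Q : Polynomial ℝ, Q.natDegree ≤ p ∧ Q.eval a = y a ∧ Q.eval b = y b ∧
      (∀ x ∈ Icc a b, |deriv y x - Q.derivative.eval x|
        ≤ Real.pi * (b - a) * ((b - a) / (2 * ((p : ℝ) - 1 - k))) ^ k * A) ∧
      (∀ x ∈ Icc a b, |y x - Q.eval x|
        ≤ Real.pi * (b - a) ^ 2 * ((b - a) / (2 * ((p : ℝ) - 1 - k))) ^ k * A) := by
  have hy1 : ContDiff ℝ (⊤ : ℕ∞) (deriv y) := (contDiff_infty_iff_deriv.1 hy).2
  have hy2 : ContDiff ℝ (⊤ : ℕ∞) (deriv (deriv y)) := (contDiff_infty_iff_deriv.1 hy1).2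
  obtain ⟨g, hg, hgb⟩ := exists_poly_integral_abs_sub_le hab (deriv (deriv y)) hy2 k (p - 2)
    (by omega) A (by simpa [iteratedDeriv_succ'] using hA)
  have hcast : (((p - 2 : ℕ) : ℝ) + 1 - k) = (p : ℝ) - 1 - k := by
    rw [Nat.cast_sub (by omega)]; push_cast; ring
  rw [hcast] at hgb
  set η := Real.pi * (b - a) * ((b - a) / (2 * ((p : ℝ) - 1 - k))) ^ k * A with hη
  obtain ⟨P1, hP1, hP1d⟩ := exists_antiderivative g
  obtain ⟨P2, hP2, hP2d⟩ := exists_antiderivative P1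
  have d1 : ∀ x, HasDerivAt y (deriv y x) x := fun x =>
    ((hy.differentiable (by simp)) x).hasDerivAt
  have d2 : ∀ x, HasDerivAt (deriv y) (deriv (deriv y) x) x := fun x =>
    ((hy1.differentiable (by simp)) x).hasDerivAt
  have dz : ∀ x, HasDerivAt (fun x => y x - P2.eval x) (deriv y x - P1.eval x) x := fun x =>
    (d1 x).sub (by rw [← hP2]; exact P2.hasDerivAt x)
  have dz' : ∀ x, HasDerivAt (fun x => deriv y x - P1.eval x)
      (deriv (deriv y) x - g.eval x) x := fun x =>
    (d2 x).sub (by rw [← hP1]; exact P1.hasDerivAt x)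
  obtain ⟨L, ξ, hL, hLa, hLb, hξ, hLd, -⟩ := exists_linear_interpolant hab
    (fun x => y x - P2.eval x) (fun x => deriv y x - P1.eval x) (fun x _ => dz x)
  have hc : Continuous fun x => deriv (deriv y) x - g.eval x := hy2.continuous.sub g.continuous
  have hE : ∀ x ∈ Icc a b, |deriv y x - (P2 + L).derivative.eval x| ≤ η := by
    intro x hx
    have e : deriv y x - (P2 + L).derivative.eval x
        = ∫ t in ξ..x, (deriv (deriv y) t - g.eval t) := by
      rw [intervalIntegral.integral_eq_sub_of_hasDerivAt (fun t _ => dz' t)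
        (hc.intervalIntegrable _ _)]
      simp [hLd, hP2]; ring
    rw [e]
    refine le_trans ?_ hgb
    have hi : ∀ c d, IntervalIntegrable (fun t => |deriv (deriv y) t - g.eval t|) volume c d :=
      fun c d => hc.abs.intervalIntegrable c d
    refine (intervalIntegral.norm_integral_le_integral_norm_uIoc (μ := volume)
      (f := fun t => deriv (deriv y) t - g.eval t)).trans ?_
    rw [intervalIntegral.integral_of_le hab.le]
    refine setIntegral_mono_set ((hi a b).1) (Filter.Eventually.of_forall fun _ => abs_nonneg _) ?_
    refine LE.le.eventuallyLE ?_
    exact Ioc_subset_Ioc (le_min hξ.1.le hx.1) (max_le hξ.2.le hx.2)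
  refine ⟨P2 + L, (Polynomial.natDegree_add_le _ _).trans (by omega), by simp [hLa], by simp [hLb],
    hE, fun x hx => ?_⟩
  have h := Convex.norm_image_sub_le_of_norm_hasDerivWithin_le (s := Icc a b) (C := η)
    (f := fun x => y x - (P2 + L).eval x) (f' := fun x => deriv y x - (P2 + L).derivative.eval x)
    (fun x _ => ((d1 x).sub ((P2 + L).hasDerivAt x)).hasDerivWithinAt)
    (fun x hx => hE x hx) (convex_Icc a b) (left_mem_Icc.2 hab.le) hx
  have h0 : y a - (P2 + L).eval a = 0 := by simp [hLa]
  rw [h0, sub_zero, Real.norm_eq_abs, Real.norm_of_nonneg (by linarith [hx.1] : 0 ≤ x - a)] at h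
  have hη0 : 0 ≤ η := (abs_nonneg _).trans (hE a (left_mem_Icc.2 hab.le))
  calc _ ≤ η * (x - a) := h
    _ ≤ η * (b - a) := by gcongr; exact hx.2
    _ = _ := by rw [hη]; ring

open Polynomial in
theorem exists_chebyshevU_expansion (n : ℕ) : ∀ t : ℝ[X], t.natDegree ≤ n →
    ∃ c : ℕ → ℝ, t = ∑ k ∈ Finset.range (n + 1), C (c k) * Chebyshev.U ℝ k := by
  induction n with
  | zero =>
    intro t ht
    refine ⟨fun _ => t.coeff 0, ?_⟩
    simpa using eq_C_of_natDegree_le_zero ht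
  | succ n ih =>
    intro t ht
    set a := t.coeff (n + 1) / 2 ^ (n + 1) with ha
    set U := Chebyshev.U ℝ ((n + 1 : ℕ) : ℤ) with hU
    have hUd : U.natDegree = n + 1 := Chebyshev.natDegree_U_natCast ℝ (n + 1)
    have hUl : U.coeff (n + 1) = 2 ^ (n + 1) := by
      have := Chebyshev.leadingCoeff_U_natCast ℝ (n + 1)
      rw [leadingCoeff, ← hU, hUd] at this
      exact this
    have hdeg : (t - C a * U).natDegree ≤ n := by
      rw [natDegree_le_iff_coeff_eq_zero]
      intro N hN
      rcases Nat.lt_or_ge (n + 1) N with h | h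
      · rw [coeff_sub, coeff_C_mul, coeff_eq_zero_of_natDegree_lt (by omega),
          coeff_eq_zero_of_natDegree_lt (p := U) (by omega)]
        simp
      · obtain rfl : N = n + 1 := by omega
        rw [coeff_sub, coeff_C_mul, hUl, ha]
        field_simp
        simp
    obtain ⟨c, hc⟩ := ih _ hdeg
    refine ⟨Function.update c (n + 1) a, ?_⟩
    rw [Finset.sum_range_succ, Function.update_self, ← hU]
    rw [Finset.sum_congr rfl fun k hk => by
      rw [Function.update_of_ne (by have := Finset.mem_range.1 hk; omega : k ≠ n + 1)], ← hc]
    ring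

theorem integral_sin_mul_sin (n m : ℕ) (hn : 0 < n) :
    ∫ θ in (0 : ℝ)..Real.pi, Real.sin (n * θ) * Real.sin (m * θ)
      = if n = m then Real.pi / 2 else 0 := by
  have hcos : ∀ k : ℤ, k ≠ 0 → ∫ θ in (0 : ℝ)..Real.pi, Real.cos (k * θ) = 0 := by
    intro k hk
    have hk' : (k : ℝ) ≠ 0 := by exact_mod_cast hk
    rw [intervalIntegral.integral_comp_mul_left (fun x => Real.cos x) hk']
    simp [Real.sin_int_mul_pi]
  have e : ∀ θ : ℝ, Real.sin (n * θ) * Real.sin (m * θ)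
      = (Real.cos (((n : ℤ) - m : ℤ) * θ) - Real.cos (((n : ℤ) + m : ℤ) * θ)) / 2 := by
    intro θ; push_cast; rw [sub_mul, add_mul, Real.cos_sub, Real.cos_add]; ring
  simp_rw [e]
  rw [intervalIntegral.integral_div, intervalIntegral.integral_sub
    (Continuous.intervalIntegrable (by fun_prop) _ _)
    (Continuous.intervalIntegrable (by fun_prop) _ _), hcos ((n : ℤ) + m) (by omega)]
  split_ifs with h
  · subst h; simp
  · rw [hcos _ (by omega)]; simp

open Polynomial in
theorem sq_eval_one_le (n : ℕ) (t : ℝ[X]) (ht : t.natDegree ≤ n) :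
    t.eval 1 ^ 2 ≤ ((n : ℝ) + 1) ^ 4 * ∫ x in (-1 : ℝ)..1, t.eval x ^ 2 := by
  have hpi := Real.pi_pos
  obtain ⟨c, hc⟩ := exists_chebyshevU_expansion n t ht
  have htc := t.continuous
  set G := ∫ x in (-1 : ℝ)..1, t.eval x ^ 2 with hG
  have hg : ∀ θ : ℝ, t.eval (Real.cos θ) * Real.sin θ
      = ∑ k ∈ Finset.range (n + 1), c k * Real.sin (((k + 1 : ℕ) : ℝ) * θ) := by
    intro θ
    conv_lhs => rw [hc]
    rw [Polynomial.eval_finsetSum, Finset.sum_mul]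
    refine Finset.sum_congr rfl fun k _ => ?_
    have := Polynomial.Chebyshev.U_real_cos θ k
    rw [eval_mul, eval_C, mul_assoc, this]
    push_cast; rfl
  have hck : ∀ k ∈ Finset.range (n + 1), c k ^ 2 ≤ G := by
    intro k hk
    have h1 : ∫ θ in (0 : ℝ)..Real.pi, (t.eval (Real.cos θ) * Real.sin θ)
        * Real.sin (((k + 1 : ℕ) : ℝ) * θ) = c k * (Real.pi / 2) := by
      simp_rw [hg, Finset.sum_mul, mul_assoc]
      rw [intervalIntegral.integral_finsetSum
        fun i _ => Continuous.intervalIntegrable (by fun_prop) _ _]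
      simp_rw [intervalIntegral.integral_const_mul]
      rw [Finset.sum_congr rfl fun i _ => by rw [integral_sin_mul_sin _ _ (Nat.succ_pos i)]]
      rw [Finset.sum_eq_single k]
      · simp
      · intro i _ hi; simp [hi]
      · intro h; exact absurd hk h
    have h2 := sq_integral_mul_le hpi.le (fun θ => t.eval (Real.cos θ) * Real.sin θ)
      (fun θ => Real.sin (((k + 1 : ℕ) : ℝ) * θ)) (by fun_prop) (by fun_prop)
    have h3 : ∫ θ in (0 : ℝ)..Real.pi, Real.sin (((k + 1 : ℕ) : ℝ) * θ) ^ 2 = Real.pi / 2 := by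
      simp_rw [sq]
      rw [integral_sin_mul_sin _ _ (Nat.succ_pos k)]; simp
    have h4 : ∫ θ in (0 : ℝ)..Real.pi, (t.eval (Real.cos θ) * Real.sin θ) ^ 2 ≤ G := by
      rw [hG, integral_neg_one_one_eq_integral_cos _ (by fun_prop)]
      refine intervalIntegral.integral_mono_on hpi.le
        (Continuous.intervalIntegrable (by fun_prop) _ _)
        (Continuous.intervalIntegrable (by fun_prop) _ _) fun θ hθ => ?_
      have hs := Real.sin_nonneg_of_nonneg_of_le_pi hθ.1 hθ.2
      have hs1 := Real.sin_le_one θ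
      rw [mul_pow]
      refine mul_le_mul_of_nonneg_left ?_ (sq_nonneg _)
      nlinarith
    rw [h1, h3] at h2
    have h5 : c k ^ 2 * (Real.pi / 2) ≤ G := by
      have := h2.trans (mul_le_mul_of_nonneg_right h4 (by positivity))
      have e : (c k * (Real.pi / 2)) ^ 2 = c k ^ 2 * (Real.pi / 2) * (Real.pi / 2) := by ring
      rw [e] at this
      exact le_of_mul_le_mul_right this (by positivity)
    nlinarith [Real.pi_gt_three, sq_nonneg (c k)]
  have hG0 : 0 ≤ G := (sq_nonneg _).trans (hck 0 (by simp))
  have hck' : ∀ k ∈ Finset.range (n + 1), |c k| ≤ Real.sqrt G := fun k hk =>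
    Real.abs_le_sqrt (hck k hk)
  have ht1 : |t.eval 1| ≤ ((n : ℝ) + 1) ^ 2 * Real.sqrt G := by
    conv_lhs => rw [hc]
    rw [Polynomial.eval_finsetSum]
    refine (Finset.abs_sum_le_sum_abs _ _).trans ?_
    calc _ ≤ ∑ k ∈ Finset.range (n + 1), Real.sqrt G * ((n : ℝ) + 1) := by
          refine Finset.sum_le_sum fun k hk => ?_
          rw [eval_mul, eval_C, Polynomial.Chebyshev.U_eval_one, abs_mul]
          have hk' : (k : ℝ) ≤ n := by
            have := Finset.mem_range.1 hk
            exact_mod_cast (by omega : k ≤ n)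
          refine mul_le_mul (hck' k hk) ?_ (abs_nonneg _) (Real.sqrt_nonneg _)
          rw [abs_of_nonneg (by push_cast; positivity)]
          push_cast; linarith
      _ = _ := by simp; ring
  calc t.eval 1 ^ 2 = |t.eval 1| ^ 2 := (sq_abs _).symm
    _ ≤ (((n : ℝ) + 1) ^ 2 * Real.sqrt G) ^ 2 := by gcongr
    _ = _ := by rw [mul_pow, Real.sq_sqrt hG0]; ring

open Polynomial in
/-- Discrete trace inequality on `[a, b]`. -/
theorem polynomial_trace_le {a b : ℝ} (hab : a < b) (n : ℕ) (t : ℝ[X]) (ht : t.natDegree ≤ n) :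
    (b - a) * t.eval b ^ 2 ≤ 2 * ((n : ℝ) + 1) ^ 4 * ∫ x in a..b, t.eval x ^ 2 ∧
    (b - a) * t.eval a ^ 2 ≤ 2 * ((n : ℝ) + 1) ^ 4 * ∫ x in a..b, t.eval x ^ 2 := by
  have key : ∀ c : ℝ, c ≠ 0 → t.eval (c + (a + b) / 2) ^ 2 ≤ ((n : ℝ) + 1) ^ 4 *
      (c⁻¹ * ∫ x in (c * -1 + (a + b) / 2)..(c * 1 + (a + b) / 2), t.eval x ^ 2) := by
    intro c hc
    have hl : (C c * X + C ((a + b) / 2) : ℝ[X]).natDegree ≤ 1 := natDegree_linear_le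
    have h := sq_eval_one_le n (t.comp (C c * X + C ((a + b) / 2)))
      (by rw [natDegree_comp]; nlinarith)
    simp only [eval_comp, eval_add, eval_mul, eval_C, eval_X, mul_one] at h
    rwa [intervalIntegral.integral_comp_mul_add (fun x => t.eval x ^ 2) hc, smul_eq_mul] at h
  have hh : 0 < b - a := by linarith
  constructor
  · have h := key ((b - a) / 2) (by linarith)
    rw [show (b - a) / 2 + (a + b) / 2 = b by ring,
      show (b - a) / 2 * -1 + (a + b) / 2 = a by ring,
      show (b - a) / 2 * 1 + (a + b) / 2 = b by ring] at h
    refine (mul_le_mul_of_nonneg_left h hh.le).trans_eq ?_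
    field_simp
  · have h := key (-((b - a) / 2)) (by linarith)
    rw [show -((b - a) / 2) + (a + b) / 2 = a by ring,
      show -((b - a) / 2) * -1 + (a + b) / 2 = b by ring,
      show -((b - a) / 2) * 1 + (a + b) / 2 = a by ring, intervalIntegral.integral_symm] at h
    refine (mul_le_mul_of_nonneg_left h hh.le).trans_eq ?_
    field_simp

theorem integral_deriv_mul_eq (a b : ℝ) {F F' G G' : ℝ → ℝ} (hF : ∀ x, HasDerivAt F (F' x) x)
    (hG : ∀ x, HasDerivAt G (G' x) x) (hF' : Continuous F') (hG' : Continuous G') :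
    ∫ x in a..b, F' x * G x = F b * G b - F a * G a - ∫ x in a..b, F x * G' x := by
  have h := intervalIntegral.integral_mul_deriv_eq_deriv_mul (fun x _ => hF x) (fun x _ => hG x)
    (hF'.intervalIntegrable a b) (hG'.intervalIntegrable a b)
  rw [h]; ring

/-- Weak derivative of `Q - U` when the boundary values are those of `Q` minus those of `U`. -/
theorem weakDeriv_interp_sub {a b : ℝ} {n : ℕ} (Q U dU : Polynomial ℝ) (ul ur : ℝ)
    (hdU : ∀ t : Polynomial ℝ, t.natDegree ≤ n → ∫ x in a..b, dU.eval x * t.eval x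
      = -(∫ x in a..b, U.eval x * t.derivative.eval x) + ur * t.eval b - ul * t.eval a)
    (t : Polynomial ℝ) (ht : t.natDegree ≤ n) :
    ∫ x in a..b, (Q.derivative - dU).eval x * t.eval x
      = -(∫ x in a..b, (Q - U).eval x * t.derivative.eval x)
        + (Q.eval b - ur) * t.eval b - (Q.eval a - ul) * t.eval a := by
  have hc := fun q : Polynomial ℝ => q.continuous
  have h1 := hdU t ht
  have h2 := integral_deriv_mul_eq a b (fun x => Q.hasDerivAt x) (fun x => t.hasDerivAt x)
    (hc _) (hc _)
  simp only [Polynomial.eval_sub, sub_mul]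
  rw [intervalIntegral.integral_sub (Continuous.intervalIntegrable (by fun_prop) _ _)
    (Continuous.intervalIntegrable (by fun_prop) _ _), intervalIntegral.integral_sub
    (Continuous.intervalIntegrable (by fun_prop) _ _)
    (Continuous.intervalIntegrable (by fun_prop) _ _), h1, h2]
  ring

/-- The difference of the weak derivatives of `u - U` and `Q - U` is the `L²` projection of
`u' - Q'`. -/
theorem weakDeriv_sub_eq_projection {a b : ℝ} {n : ℕ} {u u' : ℝ → ℝ}
    (hu : ∀ x, HasDerivAt u (u' x) x) (hu' : Continuous u')
    (Q U dU D : Polynomial ℝ) (ul ur : ℝ) (hQa : Q.eval a = u a) (hQb : Q.eval b = u b)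
    (hdU : ∀ t : Polynomial ℝ, t.natDegree ≤ n → ∫ x in a..b, dU.eval x * t.eval x
      = -(∫ x in a..b, U.eval x * t.derivative.eval x) + ur * t.eval b - ul * t.eval a)
    (hD : ∀ t : Polynomial ℝ, t.natDegree ≤ n → ∫ x in a..b, D.eval x * t.eval x
      = -(∫ x in a..b, (u x - U.eval x) * t.derivative.eval x)
        + (u b - ur) * t.eval b - (u a - ul) * t.eval a)
    (t : Polynomial ℝ) (ht : t.natDegree ≤ n) :
    ∫ x in a..b, (D - (Q.derivative - dU)).eval x * t.eval x
      = ∫ x in a..b, (u' x - Q.derivative.eval x) * t.eval x := by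
  have hc := fun q : Polynomial ℝ => q.continuous
  have huc : Continuous u := continuous_iff_continuousAt.2 fun x => (hu x).continuousAt
  have h1 := weakDeriv_interp_sub Q U dU ul ur hdU t ht
  have h2 := hD t ht
  have h3 := integral_deriv_mul_eq a b (fun x => (hu x).sub (Q.hasDerivAt x))
    (fun x => t.hasDerivAt x) (hu'.sub (hc _)) (hc _)
  simp only [Polynomial.eval_sub D, sub_mul (Polynomial.eval _ D)]
  rw [intervalIntegral.integral_sub (Continuous.intervalIntegrable (by fun_prop) _ _)
    (Continuous.intervalIntegrable (by fun_prop) _ _), h1, h2, h3, hQa, hQb]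
  have h4 : ∀ x, (u x - U.eval x) * t.derivative.eval x
      = (u - fun x => Q.eval x) x * t.derivative.eval x + (Q - U).eval x * t.derivative.eval x := by
    intro x; simp; ring
  simp_rw [h4]
  rw [intervalIntegral.integral_add]
  · simp [hQa, hQb]
  · exact Continuous.intervalIntegrable (by simp only [Pi.sub_apply]; fun_prop) _ _
  · exact Continuous.intervalIntegrable (by fun_prop) _ _

/-- Energy identity on one cell. -/
theorem cell_energy_identity {a b ε₁ ε₂ : ℝ} {n : ℕ} {u u' u'' bb bb' rr : ℝ → ℝ}
    (hu : ∀ x, HasDerivAt u (u' x) x) (hu' : ∀ x, HasDerivAt u' (u'' x) x)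
    (hu'' : Continuous u'') (hb : ∀ x, HasDerivAt bb (bb' x) x) (hb' : Continuous bb')
    (hr : Continuous rr)
    (Q U dU D Dc : Polynomial ℝ) (ul ur : ℝ) (hQa : Q.eval a = u a) (hQb : Q.eval b = u b)
    (hQd : Q.natDegree ≤ n + 1) (hUd : U.natDegree ≤ n + 1) (hdUd : dU.natDegree ≤ n)
    (hDd : D.natDegree ≤ n)
    (hdU : ∀ t : Polynomial ℝ, t.natDegree ≤ n → ∫ x in a..b, dU.eval x * t.eval x
      = -(∫ x in a..b, U.eval x * t.derivative.eval x) + ur * t.eval b - ul * t.eval a)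
    (hD : ∀ t : Polynomial ℝ, t.natDegree ≤ n → ∫ x in a..b, D.eval x * t.eval x
      = -(∫ x in a..b, (u x - U.eval x) * t.derivative.eval x)
        + (u b - ur) * t.eval b - (u a - ul) * t.eval a)
    (hDc : ∫ x in a..b, Dc.eval x * (Q - U).eval x
      = -(∫ x in a..b, U.eval x * deriv (fun s => bb s * (Q - U).eval s) x)
        + ur * (bb b * (Q - U).eval b) - ul * (bb a * (Q - U).eval a)) :
    ε₁ * (∫ x in a..b, dU.eval x * (Q.derivative - dU).eval x)
      + ε₂ * (∫ x in a..b, Dc.eval x * (Q - U).eval x)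
      + (∫ x in a..b, rr x * U.eval x * (Q - U).eval x)
      - (∫ x in a..b, (-ε₁ * u'' x + ε₂ * bb x * u' x + rr x * u x) * (Q - U).eval x)
    = -ε₁ * (∫ x in a..b, (Q.derivative - dU).eval x ^ 2)
      - ε₁ * (∫ x in a..b, (D - (Q.derivative - dU)).eval x * (Q.derivative - dU).eval x)
      + ε₁ * ((Q - U).eval b - (u b - ur))
          * (u' b - Q.derivative.eval b - (D - (Q.derivative - dU)).eval b)
      - ε₁ * ((Q - U).eval a - (u a - ul))
          * (u' a - Q.derivative.eval a - (D - (Q.derivative - dU)).eval a)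
      - ε₂ * (∫ x in a..b, bb x * (u' x - Q.derivative.eval x) * (Q - U).eval x)
      + ε₂ / 2 * (∫ x in a..b, bb' x * (Q - U).eval x ^ 2)
      - (∫ x in a..b, rr x * (Q - U).eval x ^ 2)
      - (∫ x in a..b, rr x * (u x - Q.eval x) * (Q - U).eval x)
      + ε₂ / 2 * (bb b * ((Q - U).eval b - (u b - ur)) ^ 2
          - bb a * ((Q - U).eval a - (u a - ul)) ^ 2)
      + ε₁ * (u' b * (u b - ur) - u' a * (u a - ul))
      - ε₂ / 2 * (bb b * (u b - ur) ^ 2 - bb a * (u a - ul) ^ 2) := by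
  have hc := fun q : Polynomial ℝ => q.continuous
  have huc : Continuous u := continuous_iff_continuousAt.2 fun x => (hu x).continuousAt
  have hu'c : Continuous u' := continuous_iff_continuousAt.2 fun x => (hu' x).continuousAt
  have hbc : Continuous bb := continuous_iff_continuousAt.2 fun x => (hb x).continuousAt
  set X := Q - U with hX
  set Y := Q.derivative - dU with hY
  set θ := D - Y with hθ
  have hQ'd : Q.derivative.natDegree ≤ n := (Polynomial.natDegree_derivative_le Q).trans (by omega)
  have hX'd : X.derivative.natDegree ≤ n :=
    (Polynomial.natDegree_derivative_le X).trans
      (by have := (Polynomial.natDegree_sub_le Q U); rw [hX]; omega)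
  have hYd : Y.natDegree ≤ n := (Polynomial.natDegree_sub_le _ _).trans (by omega)
  have hθd : θ.natDegree ≤ n := (Polynomial.natDegree_sub_le _ _).trans (by omega)
  have hXdU : ∀ x, U.eval x = Q.eval x - X.eval x := fun x => by simp [hX]
  have hYdU : ∀ x, dU.eval x = Q.derivative.eval x - Y.eval x := fun x => by simp [hY]
  -- diffusion
  have d1 : ∫ x in a..b, dU.eval x * Y.eval x
      = (∫ x in a..b, Y.eval x * Q.derivative.eval x) - ∫ x in a..b, Y.eval x ^ 2 := by
    rw [← intervalIntegral.integral_sub (Continuous.intervalIntegrable (by fun_prop) _ _)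
      (Continuous.intervalIntegrable (by fun_prop) _ _)]
    refine intervalIntegral.integral_congr fun x _ => ?_
    simp only [hYdU]; ring
  have d2 := weakDeriv_interp_sub Q U dU ul ur hdU _ hQ'd
  have d3 := weakDeriv_interp_sub Q U dU ul ur hdU _ hθd
  have d4 := weakDeriv_sub_eq_projection hu hu'c Q U dU D ul ur hQa hQb hdU hD _ hX'd
  have d5 := integral_deriv_mul_eq a b (fun x => X.hasDerivAt x)
    (fun x => Q.derivative.hasDerivAt x) (hc _) (hc _)
  have d6 := integral_deriv_mul_eq a b (fun x => X.hasDerivAt x) (fun x => θ.hasDerivAt x)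
    (hc _) (hc _)
  have d7 := integral_deriv_mul_eq a b (fun x => X.hasDerivAt x) (fun x => hu' x) (hc _) hu''
  rw [← hX, ← hY] at d2 d3
  rw [← hY, ← hθ] at d4
  have d8 : ∫ x in a..b, (u' x - Q.derivative.eval x) * X.derivative.eval x
      = (∫ x in a..b, X.derivative.eval x * u' x)
        - ∫ x in a..b, X.derivative.eval x * Q.derivative.eval x := by
    rw [← intervalIntegral.integral_sub (Continuous.intervalIntegrable (by fun_prop) _ _)
      (Continuous.intervalIntegrable (by fun_prop) _ _)]
    exact intervalIntegral.integral_congr fun x _ => by ring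
  have d9 : ∫ x in a..b, θ.eval x * X.derivative.eval x
      = ∫ x in a..b, X.derivative.eval x * θ.eval x :=
    intervalIntegral.integral_congr fun x _ => by ring
  have d10 : ∫ x in a..b, θ.eval x * Y.eval x = ∫ x in a..b, Y.eval x * θ.eval x :=
    intervalIntegral.integral_congr fun x _ => by ring
  -- convection
  have hbX : ∀ x, HasDerivAt (fun s => bb s * X.eval s)
      (bb' x * X.eval x + bb x * X.derivative.eval x) x := fun x => (hb x).mul (X.hasDerivAt x)
  have c1 : ∫ x in a..b, U.eval x * deriv (fun s => bb s * X.eval s) x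
      = (∫ x in a..b, Q.eval x * (bb' x * X.eval x + bb x * X.derivative.eval x))
        - (∫ x in a..b, X.eval x * (bb' x * X.eval x + bb x * X.derivative.eval x)) := by
    rw [← intervalIntegral.integral_sub (Continuous.intervalIntegrable (by fun_prop) _ _)
      (Continuous.intervalIntegrable (by fun_prop) _ _)]
    refine intervalIntegral.integral_congr fun x _ => ?_
    simp only [hXdU, (hbX x).deriv]; ring
  have c2 := integral_deriv_mul_eq a b (fun x => Q.hasDerivAt x) hbX (hc _) (by fun_prop)
  have c3 := integral_deriv_mul_eq a b (fun x => X.hasDerivAt x) hbX (hc _) (by fun_prop)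
  have c4 : ∫ x in a..b, X.eval x * (bb' x * X.eval x + bb x * X.derivative.eval x)
      = (∫ x in a..b, bb' x * X.eval x ^ 2)
        + ∫ x in a..b, X.derivative.eval x * (bb x * X.eval x) := by
    rw [← intervalIntegral.integral_add (Continuous.intervalIntegrable (by fun_prop) _ _)
      (Continuous.intervalIntegrable (by fun_prop) _ _)]
    exact intervalIntegral.integral_congr fun x _ => by ring
  have c5 : ∫ x in a..b, bb x * (u' x - Q.derivative.eval x) * X.eval x
      = (∫ x in a..b, bb x * u' x * X.eval x)
        - ∫ x in a..b, Q.derivative.eval x * (bb x * X.eval x) := by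
    rw [← intervalIntegral.integral_sub (Continuous.intervalIntegrable (by fun_prop) _ _)
      (Continuous.intervalIntegrable (by fun_prop) _ _)]
    exact intervalIntegral.integral_congr fun x _ => by ring
  -- reaction
  have r1 : ∫ x in a..b, rr x * U.eval x * X.eval x
      = (∫ x in a..b, rr x * u x * X.eval x) - (∫ x in a..b, rr x * (u x - Q.eval x) * X.eval x)
        - ∫ x in a..b, rr x * X.eval x ^ 2 := by
    rw [← intervalIntegral.integral_sub (Continuous.intervalIntegrable (by fun_prop) _ _)
      (Continuous.intervalIntegrable (by fun_prop) _ _),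
      ← intervalIntegral.integral_sub (Continuous.intervalIntegrable (by fun_prop) _ _)
      (Continuous.intervalIntegrable (by fun_prop) _ _)]
    refine intervalIntegral.integral_congr fun x _ => ?_
    simp only [hXdU]; ring
  have f1 : ∫ x in a..b, (-ε₁ * u'' x + ε₂ * bb x * u' x + rr x * u x) * X.eval x
      = -ε₁ * (∫ x in a..b, X.eval x * u'' x) + ε₂ * (∫ x in a..b, bb x * u' x * X.eval x)
        + ∫ x in a..b, rr x * u x * X.eval x := by
    rw [← intervalIntegral.integral_const_mul, ← intervalIntegral.integral_const_mul,
      ← intervalIntegral.integral_add (Continuous.intervalIntegrable (by fun_prop) _ _)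
      (Continuous.intervalIntegrable (by fun_prop) _ _),
      ← intervalIntegral.integral_add (Continuous.intervalIntegrable (by fun_prop) _ _)
      (Continuous.intervalIntegrable (by fun_prop) _ _)]
    exact intervalIntegral.integral_congr fun x _ => by ring
  rw [hQa, hQb] at d2 d3 c2
  have hconv : ∫ x in a..b, Dc.eval x * X.eval x
      = (∫ x in a..b, bb x * u' x * X.eval x)
        - (∫ x in a..b, bb x * (u' x - Q.derivative.eval x) * X.eval x)
        + 1 / 2 * (∫ x in a..b, bb' x * X.eval x ^ 2)
        + 1 / 2 * (bb b * (X.eval b - (u b - ur)) ^ 2 - bb a * (X.eval a - (u a - ul)) ^ 2)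
        - 1 / 2 * (bb b * (u b - ur) ^ 2 - bb a * (u a - ul) ^ 2) := by
    rw [hDc, c1]
    linarith
  have hdiff : (∫ x in a..b, dU.eval x * Y.eval x) + (∫ x in a..b, X.eval x * u'' x)
      = -(∫ x in a..b, Y.eval x ^ 2) - (∫ x in a..b, θ.eval x * Y.eval x)
        + (X.eval b - (u b - ur)) * (u' b - Q.derivative.eval b - θ.eval b)
        - (X.eval a - (u a - ul)) * (u' a - Q.derivative.eval a - θ.eval a)
        + (u' b * (u b - ur) - u' a * (u a - ul)) := by
    rw [d1]
    linarith
  rw [hconv, r1, f1]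
  linear_combination ε₁ * hdiff

theorem jump_term_le {ε₁ h P j e t η : ℝ} (hε : 0 < ε₁) (hh : 0 < h) (hh1 : h ≤ 1) (hP : 1 ≤ P)
    (he : ε₁ * e ^ 2 ≤ η ^ 2) (ht : ε₁ * (h * t ^ 2) ≤ 2 * P ^ 4 * η ^ 2) :
    ε₁ * j * (e - t) ≤ 1 / 2 * (ε₁ * P ^ 2 / h * j ^ 2) + 3 * P ^ 2 * η ^ 2 := by
  have hP0 : 0 < P := by linarith
  have hP2 : 1 ≤ P ^ 2 := by nlinarith
  have h1 : ε₁ * j * (e - t)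
      ≤ 1 / 2 * (ε₁ * P ^ 2 / h * j ^ 2) + 1 / 2 * (ε₁ * h * (e - t) ^ 2 / P ^ 2) := by
    have h2 : 0 ≤ ε₁ * (P ^ 2 * j - h * (e - t)) ^ 2 / (2 * h * P ^ 2) := by positivity
    have h3 : ε₁ * (P ^ 2 * j - h * (e - t)) ^ 2 / (2 * h * P ^ 2)
        = 1 / 2 * (ε₁ * P ^ 2 / h * j ^ 2) + 1 / 2 * (ε₁ * h * (e - t) ^ 2 / P ^ 2)
          - ε₁ * j * (e - t) := by
      field_simp; ring
    linarith
  have h4 : ε₁ * h * (e - t) ^ 2 / P ^ 2 ≤ 6 * P ^ 2 * η ^ 2 := by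
    rw [div_le_iff₀ (by positivity)]
    have h5 : ε₁ * h * (e - t) ^ 2 ≤ 2 * (ε₁ * h * e ^ 2) + 2 * (ε₁ * (h * t ^ 2)) := by
      have : 0 ≤ ε₁ * h * (e + t) ^ 2 := by positivity
      nlinarith
    have h6 : ε₁ * h * e ^ 2 ≤ η ^ 2 := by
      have : 0 ≤ ε₁ * e ^ 2 := by positivity
      nlinarith
    have h7 : η ^ 2 ≤ P ^ 4 * η ^ 2 := by
      have : 1 ≤ P ^ 4 := one_le_pow₀ hP
      nlinarith [sq_nonneg η]
    nlinarith
  linarith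

theorem neg_mul_le_young {γ B s x η : ℝ} (hγ : 0 < γ) (hs : s ^ 2 ≤ B ^ 2 * η ^ 2) :
    -(s * x) ≤ γ / 4 * x ^ 2 + B ^ 2 * η ^ 2 / γ := by
  have h : 0 ≤ (γ / 2 * x + s) ^ 2 / γ := by positivity
  have e : (γ / 2 * x + s) ^ 2 / γ = γ / 4 * x ^ 2 + s * x + s ^ 2 / γ := by
    field_simp; ring
  have h2 : s ^ 2 / γ ≤ B ^ 2 * η ^ 2 / γ := by gcongr
  linarith

set_option maxHeartbeats 1000000 in
/-- On one cell, the WG error is controlled by the Galerkin residual, telescoping terms and the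
interpolation error. -/
theorem cell_error_le {a b ε₁ ε₂ γ B η : ℝ} {n : ℕ} {u u' u'' bb bb' rr : ℝ → ℝ}
    (hab : a < b) (hh1 : b - a ≤ 1) (hε₁ : 0 < ε₁) (hε₂ : 0 < ε₂) (hεε : ε₂ ^ 2 ≤ ε₁)
    (hγ : 0 < γ)
    (hu : ∀ x, HasDerivAt u (u' x) x) (hu' : ∀ x, HasDerivAt u' (u'' x) x)
    (hu'' : Continuous u'') (hb : ∀ x, HasDerivAt bb (bb' x) x) (hb' : Continuous bb')
    (hr : Continuous rr)
    (hbB : ∀ x ∈ Icc a b, |bb x| ≤ B) (hrB : ∀ x ∈ Icc a b, |rr x| ≤ B)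
    (hb0 : ∀ x ∈ Icc a b, 0 ≤ bb x) (hrb : ∀ x ∈ Icc a b, γ ≤ rr x - ε₂ * bb' x / 2)
    (Q U dU D Dc : Polynomial ℝ) (ul ur : ℝ) (hQa : Q.eval a = u a) (hQb : Q.eval b = u b)
    (hQη : ∀ x ∈ Icc a b, |u x - Q.eval x| ≤ η)
    (hQη' : ∀ x ∈ Icc a b, ε₁ * (u' x - Q.derivative.eval x) ^ 2 ≤ η ^ 2)
    (hQd : Q.natDegree ≤ n + 1) (hUd : U.natDegree ≤ n + 1) (hdUd : dU.natDegree ≤ n)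
    (hDd : D.natDegree ≤ n)
    (hdU : ∀ t : Polynomial ℝ, t.natDegree ≤ n → ∫ x in a..b, dU.eval x * t.eval x
      = -(∫ x in a..b, U.eval x * t.derivative.eval x) + ur * t.eval b - ul * t.eval a)
    (hD : ∀ t : Polynomial ℝ, t.natDegree ≤ n → ∫ x in a..b, D.eval x * t.eval x
      = -(∫ x in a..b, (u x - U.eval x) * t.derivative.eval x)
        + (u b - ur) * t.eval b - (u a - ul) * t.eval a)
    (hDc : ∫ x in a..b, Dc.eval x * (Q - U).eval x
      = -(∫ x in a..b, U.eval x * deriv (fun s => bb s * (Q - U).eval s) x)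
        + ur * (bb b * (Q - U).eval b) - ul * (bb a * (Q - U).eval a)) :
    ε₁ * (∫ x in a..b, D.eval x ^ 2) + (∫ x in a..b, (u x - U.eval x) ^ 2)
      + ε₁ * ((n : ℝ) + 1) ^ 2 / (b - a) * (((Q - U).eval b - (u b - ur)) ^ 2
          + ((Q - U).eval a - (u a - ul)) ^ 2)
      + 2 * (ε₂ * bb b * ((Q - U).eval b - (u b - ur)) ^ 2)
    ≤ (4 + 4 / γ) * (-(ε₁ * (∫ x in a..b, dU.eval x * (Q.derivative - dU).eval x)
        + ε₂ * (∫ x in a..b, Dc.eval x * (Q - U).eval x)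
        + (∫ x in a..b, rr x * U.eval x * (Q - U).eval x)
        - (∫ x in a..b, (-ε₁ * u'' x + ε₂ * bb x * u' x + rr x * u x) * (Q - U).eval x)
        - ε₁ * ((n : ℝ) + 1) ^ 2 / (b - a) * (((Q - U).eval b - (u b - ur)) ^ 2
          + ((Q - U).eval a - (u a - ul)) ^ 2)
        - ε₂ * bb b * ((Q - U).eval b - (u b - ur)) ^ 2)
        + (ε₁ * (u' b * (u b - ur) - u' a * (u a - ul))
          - ε₂ / 2 * (bb b * (u b - ur) ^ 2 - bb a * (u a - ul) ^ 2)))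
      + ((4 + 4 / γ) * (7 + 2 * B ^ 2 / γ) + 4) * ((n : ℝ) + 1) ^ 2 * η ^ 2 := by
  have key := cell_energy_identity (ε₁ := ε₁) (ε₂ := ε₂) hu hu' hu'' hb hb' hr Q U dU D Dc ul ur
    hQa hQb hQd hUd hdUd hDd hdU hD hDc
  rw [key]
  have hc := fun q : Polynomial ℝ => q.continuous
  have huc : Continuous u := continuous_iff_continuousAt.2 fun x => (hu x).continuousAt
  have hu'c : Continuous u' := continuous_iff_continuousAt.2 fun x => (hu' x).continuousAt
  have hbc : Continuous bb := continuous_iff_continuousAt.2 fun x => (hb x).continuousAt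
  clear key hDc
  have hproj := weakDeriv_sub_eq_projection hu hu'c Q U dU D ul ur hQa hQb hdU hD
  set X := Q - U with hX
  set Y := Q.derivative - dU with hY
  set θ := D - Y with hθ
  have hYd : Y.natDegree ≤ n := (Polynomial.natDegree_sub_le _ _).trans
    (max_le ((Polynomial.natDegree_derivative_le Q).trans (by omega)) hdUd)
  have hθd : θ.natDegree ≤ n := (Polynomial.natDegree_sub_le _ _).trans (by omega)
  have hh : 0 < b - a := by linarith
  have hη0 : 0 ≤ η ^ 2 := sq_nonneg _
  have hconst : ∀ c : ℝ, 0 ≤ c → ∫ _ in a..b, c ≤ c := fun c hc0 => by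
    rw [intervalIntegral.integral_const, smul_eq_mul]
    exact mul_le_of_le_one_left hc0 hh1
  -- the projection of the derivative error
  have hT : ε₁ * ∫ x in a..b, θ.eval x ^ 2 ≤ η ^ 2 := by
    have h1 : 0 ≤ ∫ x in a..b, (u' x - Q.derivative.eval x - θ.eval x) ^ 2 :=
      intervalIntegral.integral_nonneg hab.le fun _ _ => sq_nonneg _
    have h2 : ∫ x in a..b, (u' x - Q.derivative.eval x - θ.eval x) ^ 2
        = (∫ x in a..b, (u' x - Q.derivative.eval x) ^ 2)
          - 2 * (∫ x in a..b, (u' x - Q.derivative.eval x) * θ.eval x)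
          + ∫ x in a..b, θ.eval x ^ 2 := by
      rw [← intervalIntegral.integral_const_mul, ← intervalIntegral.integral_sub
        (Continuous.intervalIntegrable (by fun_prop) _ _)
        (Continuous.intervalIntegrable (by fun_prop) _ _), ← intervalIntegral.integral_add
        (Continuous.intervalIntegrable (by fun_prop) _ _)
        (Continuous.intervalIntegrable (by fun_prop) _ _)]
      exact intervalIntegral.integral_congr fun x _ => by ring
    have h3 : ∫ x in a..b, (u' x - Q.derivative.eval x) * θ.eval x
        = ∫ x in a..b, θ.eval x ^ 2 := by
      rw [← hproj θ hθd]
      exact intervalIntegral.integral_congr fun x _ => by ring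
    have h4 : ε₁ * ∫ x in a..b, (u' x - Q.derivative.eval x) ^ 2 ≤ η ^ 2 := by
      rw [← intervalIntegral.integral_const_mul]
      refine le_trans ?_ (hconst _ hη0)
      exact intervalIntegral.integral_mono_on hab.le
        (Continuous.intervalIntegrable (by fun_prop) _ _)
        (Continuous.intervalIntegrable (by fun_prop) _ _) hQη'
    have h5 : ∫ x in a..b, θ.eval x ^ 2 ≤ ∫ x in a..b, (u' x - Q.derivative.eval x) ^ 2 := by
      linarith
    exact (mul_le_mul_of_nonneg_left h5 hε₁.le).trans h4
  have hTY : -(∫ x in a..b, θ.eval x * Y.eval x)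
      ≤ 1 / 4 * (∫ x in a..b, Y.eval x ^ 2) + ∫ x in a..b, θ.eval x ^ 2 := by
    rw [← intervalIntegral.integral_neg, ← intervalIntegral.integral_const_mul,
      ← intervalIntegral.integral_add
        (Continuous.intervalIntegrable (by fun_prop) _ _)
        (Continuous.intervalIntegrable (by fun_prop) _ _)]
    refine intervalIntegral.integral_mono_on hab.le
        (Continuous.intervalIntegrable (by fun_prop) _ _)
        (Continuous.intervalIntegrable (by fun_prop) _ _) fun x _ => ?_
    nlinarith [sq_nonneg (1 / 2 * Y.eval x + θ.eval x)]
  have hRX : γ * (∫ x in a..b, X.eval x ^ 2)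
      ≤ (∫ x in a..b, rr x * X.eval x ^ 2) - ε₂ / 2 * ∫ x in a..b, bb' x * X.eval x ^ 2 := by
    rw [← intervalIntegral.integral_const_mul, ← intervalIntegral.integral_const_mul,
      ← intervalIntegral.integral_sub
        (Continuous.intervalIntegrable (by fun_prop) _ _)
        (Continuous.intervalIntegrable (by fun_prop) _ _)]
    refine intervalIntegral.integral_mono_on hab.le
        (Continuous.intervalIntegrable (by fun_prop) _ _)
        (Continuous.intervalIntegrable (by fun_prop) _ _) fun x hx => ?_
    have := mul_le_mul_of_nonneg_right (hrb x hx) (sq_nonneg (X.eval x))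
    linarith
  have hyoung : ∀ s : ℝ → ℝ, Continuous s → (∀ x ∈ Icc a b, s x ^ 2 ≤ B ^ 2 * η ^ 2) →
      -(∫ x in a..b, s x * X.eval x)
        ≤ γ / 4 * (∫ x in a..b, X.eval x ^ 2) + B ^ 2 * η ^ 2 / γ := by
    intro s hs hsB
    have h1 : -(∫ x in a..b, s x * X.eval x)
        ≤ γ / 4 * (∫ x in a..b, X.eval x ^ 2) + ∫ _ in a..b, B ^ 2 * η ^ 2 / γ := by
      rw [← intervalIntegral.integral_neg, ← intervalIntegral.integral_const_mul,
        ← intervalIntegral.integral_add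
        (Continuous.intervalIntegrable (by fun_prop) _ _)
        (Continuous.intervalIntegrable (by fun_prop) _ _)]
      exact intervalIntegral.integral_mono_on hab.le
        (Continuous.intervalIntegrable (by fun_prop) _ _)
        (Continuous.intervalIntegrable (by fun_prop) _ _)
        fun x hx => neg_mul_le_young hγ (hsB x hx)
    have := hconst (B ^ 2 * η ^ 2 / γ) (by positivity)
    linarith
  have hBE : -(ε₂ * ∫ x in a..b, bb x * (u' x - Q.derivative.eval x) * X.eval x)
      ≤ γ / 4 * (∫ x in a..b, X.eval x ^ 2) + B ^ 2 * η ^ 2 / γ := by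
    have h := hyoung (fun x => ε₂ * (bb x * (u' x - Q.derivative.eval x))) (by fun_prop) ?_
    · rw [← intervalIntegral.integral_const_mul]
      refine le_trans (le_of_eq ?_) h
      congr 1
      exact intervalIntegral.integral_congr fun x _ => by ring
    · intro x hx
      have h1 : bb x ^ 2 ≤ B ^ 2 := sq_le_sq' (neg_le_of_abs_le (hbB x hx)) (le_of_abs_le (hbB x hx))
      have h2 := hQη' x hx
      have h3 : ε₂ ^ 2 * (u' x - Q.derivative.eval x) ^ 2 ≤ η ^ 2 :=
        (mul_le_mul_of_nonneg_right hεε (sq_nonneg _)).trans h2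
      calc (ε₂ * (bb x * (u' x - Q.derivative.eval x))) ^ 2
          = bb x ^ 2 * (ε₂ ^ 2 * (u' x - Q.derivative.eval x) ^ 2) := by ring
        _ ≤ B ^ 2 * η ^ 2 := by gcongr
  have hRQ : -(∫ x in a..b, rr x * (u x - Q.eval x) * X.eval x)
      ≤ γ / 4 * (∫ x in a..b, X.eval x ^ 2) + B ^ 2 * η ^ 2 / γ := by
    refine hyoung (fun x => rr x * (u x - Q.eval x)) (by fun_prop) fun x hx => ?_
    have h1 : rr x ^ 2 ≤ B ^ 2 := sq_le_sq' (neg_le_of_abs_le (hrB x hx)) (le_of_abs_le (hrB x hx))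
    have h2 : (u x - Q.eval x) ^ 2 ≤ η ^ 2 :=
      sq_le_sq' (neg_le_of_abs_le (hQη x hx)) (le_of_abs_le (hQη x hx))
    rw [mul_pow]; gcongr
  have hDD : ∫ x in a..b, D.eval x ^ 2
      ≤ 2 * (∫ x in a..b, Y.eval x ^ 2) + 2 * ∫ x in a..b, θ.eval x ^ 2 := by
    rw [← intervalIntegral.integral_const_mul, ← intervalIntegral.integral_const_mul,
      ← intervalIntegral.integral_add
        (Continuous.intervalIntegrable (by fun_prop) _ _)
        (Continuous.intervalIntegrable (by fun_prop) _ _)]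
    refine intervalIntegral.integral_mono_on hab.le
        (Continuous.intervalIntegrable (by fun_prop) _ _)
        (Continuous.intervalIntegrable (by fun_prop) _ _) fun x _ => ?_
    have : D.eval x = Y.eval x + θ.eval x := by simp [hθ]
    rw [this]
    nlinarith [sq_nonneg (Y.eval x - θ.eval x)]
  have hUU : ∫ x in a..b, (u x - U.eval x) ^ 2 ≤ 2 * (∫ x in a..b, X.eval x ^ 2) + 2 * η ^ 2 := by
    have h1 : ∫ x in a..b, (u x - U.eval x) ^ 2
        ≤ 2 * (∫ x in a..b, X.eval x ^ 2) + ∫ _ in a..b, 2 * η ^ 2 := by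
      rw [← intervalIntegral.integral_const_mul, ← intervalIntegral.integral_add
        (Continuous.intervalIntegrable (by fun_prop) _ _)
        (Continuous.intervalIntegrable (by fun_prop) _ _)]
      refine intervalIntegral.integral_mono_on hab.le
        (Continuous.intervalIntegrable (by fun_prop) _ _)
        (Continuous.intervalIntegrable (by fun_prop) _ _) fun x hx => ?_
      have h2 : (u x - Q.eval x) ^ 2 ≤ η ^ 2 :=
        sq_le_sq' (neg_le_of_abs_le (hQη x hx)) (le_of_abs_le (hQη x hx))
      have : u x - U.eval x = X.eval x + (u x - Q.eval x) := by simp [hX]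
      rw [this]
      nlinarith [sq_nonneg (X.eval x - (u x - Q.eval x))]
    have := hconst (2 * η ^ 2) (by positivity)
    linarith
  obtain ⟨htb, hta⟩ := polynomial_trace_le hab n θ hθd
  have hP : (1 : ℝ) ≤ (n : ℝ) + 1 := by have : (0 : ℝ) ≤ n := Nat.cast_nonneg n; linarith
  have htr : ∀ t : ℝ, (b - a) * t ^ 2 ≤ 2 * ((n : ℝ) + 1) ^ 4 * ∫ x in a..b, θ.eval x ^ 2 →
      ε₁ * ((b - a) * t ^ 2) ≤ 2 * ((n : ℝ) + 1) ^ 4 * η ^ 2 := by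
    intro t ht
    calc ε₁ * ((b - a) * t ^ 2)
        ≤ ε₁ * (2 * ((n : ℝ) + 1) ^ 4 * ∫ x in a..b, θ.eval x ^ 2) := by gcongr
      _ = 2 * ((n : ℝ) + 1) ^ 4 * (ε₁ * ∫ x in a..b, θ.eval x ^ 2) := by ring
      _ ≤ _ := by gcongr
  have jb := jump_term_le (j := X.eval b - (u b - ur)) hε₁ hh hh1 hP
    (hQη' b (right_mem_Icc.2 hab.le)) (htr _ htb)
  have ja := jump_term_le (j := -(X.eval a - (u a - ul))) hε₁ hh hh1 hP
    (hQη' a (left_mem_Icc.2 hab.le)) (htr _ hta)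
  rw [neg_sq] at ja
  set iY := ∫ x in a..b, Y.eval x ^ 2
  set iX := ∫ x in a..b, X.eval x ^ 2
  set iT := ∫ x in a..b, θ.eval x ^ 2
  set iTY := ∫ x in a..b, θ.eval x * Y.eval x
  set iD := ∫ x in a..b, D.eval x ^ 2
  set iU := ∫ x in a..b, (u x - U.eval x) ^ 2
  set iR := ∫ x in a..b, rr x * X.eval x ^ 2
  set iB := ∫ x in a..b, bb' x * X.eval x ^ 2
  set iBE := ∫ x in a..b, bb x * (u' x - Q.derivative.eval x) * X.eval x
  set iRQ := ∫ x in a..b, rr x * (u x - Q.eval x) * X.eval x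
  set jr := X.eval b - (u b - ur)
  set jl := X.eval a - (u a - ul)
  have hiY : 0 ≤ iY := intervalIntegral.integral_nonneg hab.le fun _ _ => sq_nonneg _
  have hiX : 0 ≤ iX := intervalIntegral.integral_nonneg hab.le fun _ _ => sq_nonneg _
  have hTY' := mul_le_mul_of_nonneg_left hTY hε₁.le
  have hDD' := mul_le_mul_of_nonneg_left hDD hε₁.le
  have hsr : 0 ≤ ε₁ * ((n : ℝ) + 1) ^ 2 / (b - a) * jr ^ 2 := by positivity
  have hsl : 0 ≤ ε₁ * ((n : ℝ) + 1) ^ 2 / (b - a) * jl ^ 2 := by positivity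
  have hbr : 0 ≤ ε₂ * bb b * jr ^ 2 := by
    have := hb0 b (right_mem_Icc.2 hab.le); positivity
  have hbl : 0 ≤ ε₂ * bb a * jl ^ 2 := by
    have := hb0 a (left_mem_Icc.2 hab.le); positivity
  have hεY : 0 ≤ ε₁ * iY := by positivity
  set sr := ε₁ * ((n : ℝ) + 1) ^ 2 / (b - a) * jr ^ 2
  set sl := ε₁ * ((n : ℝ) + 1) ^ 2 / (b - a) * jl ^ 2
  set tel := ε₁ * (u' b * (u b - ur) - u' a * (u a - ul))
    - ε₂ / 2 * (bb b * (u b - ur) ^ 2 - bb a * (u a - ul) ^ 2)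
  have hP2 : 1 ≤ ((n : ℝ) + 1) ^ 2 := one_le_pow₀ hP
  have hη2 : η ^ 2 ≤ ((n : ℝ) + 1) ^ 2 * η ^ 2 := le_mul_of_one_le_left hη0 hP2
  have hBη : B ^ 2 * η ^ 2 / γ ≤ B ^ 2 / γ * (((n : ℝ) + 1) ^ 2 * η ^ 2) := by
    rw [mul_div_right_comm]; gcongr
  have hmain : 3 / 4 * (ε₁ * iY) + γ / 2 * iX + 1 / 2 * (sr + sl) + 1 / 2 * (ε₂ * bb b * jr ^ 2)
      ≤ ε₁ * iY + ε₁ * iTY - ε₁ * jr * (u' b - Q.derivative.eval b - θ.eval b)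
        + ε₁ * jl * (u' a - Q.derivative.eval a - θ.eval a) + ε₂ * iBE - ε₂ / 2 * iB + iR + iRQ
        - ε₂ / 2 * (bb b * jr ^ 2 - bb a * jl ^ 2) + sr + sl + ε₂ * bb b * jr ^ 2
        + (7 + 2 * B ^ 2 / γ) * (((n : ℝ) + 1) ^ 2 * η ^ 2) := by
    have : 2 * B ^ 2 / γ = 2 * (B ^ 2 / γ) := by ring
    rw [this]
    linarith
  have hg4 : 4 / γ * (γ / 2 * iX) = 2 * iX := by field_simp; ring
  have hg5 : 0 ≤ 4 / γ := by positivity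
  have hM := mul_le_mul_of_nonneg_left hmain (by positivity : 0 ≤ 4 + 4 / γ)
  have hlow : 2 * (ε₁ * iY) + 2 * iX + (sr + sl) + 2 * (ε₂ * bb b * jr ^ 2)
      ≤ (4 + 4 / γ) * (3 / 4 * (ε₁ * iY) + γ / 2 * iX + 1 / 2 * (sr + sl)
        + 1 / 2 * (ε₂ * bb b * jr ^ 2)) := by
    have t1 : 0 ≤ 4 / γ * (3 / 4 * (ε₁ * iY) + 1 / 2 * (sr + sl) + 1 / 2 * (ε₂ * bb b * jr ^ 2)) := by
      positivity
    have t2 : 0 ≤ γ / 2 * iX := by positivity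
    have e : (4 + 4 / γ) * (3 / 4 * (ε₁ * iY) + γ / 2 * iX + 1 / 2 * (sr + sl)
        + 1 / 2 * (ε₂ * bb b * jr ^ 2)) = 3 * (ε₁ * iY) + 4 * (γ / 2 * iX) + 2 * (sr + sl)
        + 2 * (ε₂ * bb b * jr ^ 2) + 4 / γ * (γ / 2 * iX) + 4 / γ * (3 / 4 * (ε₁ * iY)
        + 1 / 2 * (sr + sl) + 1 / 2 * (ε₂ * bb b * jr ^ 2)) := by ring
    rw [e, hg4]
    linarith
  have hfin := hlow.trans hM
  have e1 : ε₁ * ((n : ℝ) + 1) ^ 2 / (b - a) * (jr ^ 2 + jl ^ 2) = sr + sl := by ring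
  rw [e1]
  refine le_trans (b := 2 * (ε₁ * iY) + 2 * iX + (sr + sl) + 2 * (ε₂ * bb b * jr ^ 2)
    + 4 * (((n : ℝ) + 1) ^ 2 * η ^ 2)) (by linarith) ?_
  refine (add_le_add_left hfin _).trans (le_of_eq ?_)
  ring

theorem sum_succ_sub_castSucc {N : ℕ} (g : Fin (N + 1) → ℝ) :
    ∑ j : Fin N, (g j.succ - g j.castSucc) = g (Fin.last N) - g 0 := by
  rw [Finset.sum_sub_distrib]
  have h1 := Fin.sum_univ_succ g
  have h2 := Fin.sum_univ_castSucc g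
  linarith

theorem exists_polynomials {N n : ℕ} {f : Fin N → ℝ → ℝ} (hf : ∀ j, IsPolyDeg (f j) n) :
    ∃ P : Fin N → Polynomial ℝ, (∀ j, (P j).natDegree ≤ n) ∧ f = fun j t => (P j).eval t := by
  choose P hP hP' using hf
  exact ⟨P, hP, funext fun j => funext fun t => hP' j t⟩

theorem Mesh.xl_lt_xr {N : ℕ} (m : Mesh N) (j : Fin N) : m.xl j < m.xr j :=
  m.mono Fin.castSucc_lt_succ

theorem Mesh.xl_nonneg {N : ℕ} (m : Mesh N) (j : Fin N) : 0 ≤ m.xl j := by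
  rw [← m.left]; exact m.mono.monotone (Fin.zero_le _)

theorem Mesh.xr_le_one {N : ℕ} (m : Mesh N) (j : Fin N) : m.xr j ≤ 1 := by
  rw [← m.right]; exact m.mono.monotone (Fin.le_last _)

set_option maxHeartbeats 1000000 in
/-- The squared WG energy error is bounded by the squared cellwise approximation error, up to a
factor `p²`. -/
theorem wg_error_le {N n : ℕ} (m : Mesh N) {ε₁ ε₂ γ B η : ℝ} {u bb rr ff : ℝ → ℝ}
    (hε₁ : 0 < ε₁) (hε₂ : 0 < ε₂) (hεε : ε₂ ^ 2 ≤ ε₁) (hγ : 0 < γ)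
    (hus : ContDiff ℝ (⊤ : ℕ∞) u) (hbs : ContDiff ℝ (⊤ : ℕ∞) bb) (hrc : Continuous rr)
    (hbB : ∀ x ∈ Icc (0 : ℝ) 1, |bb x| ≤ B) (hrB : ∀ x ∈ Icc (0 : ℝ) 1, |rr x| ≤ B)
    (hb0 : ∀ x ∈ Icc (0 : ℝ) 1, 0 ≤ bb x)
    (hrb : ∀ x ∈ Icc (0 : ℝ) 1, γ ≤ rr x - ε₂ * deriv bb x / 2)
    (hu : SolvesBVP ε₁ ε₂ bb rr ff u)
    {up0 : Fin N → ℝ → ℝ} {upb : Fin (N + 1) → ℝ} {Dup Dcup D : Fin N → ℝ → ℝ}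
    (hwg : IsWGsol m ε₁ ε₂ bb rr ff (n + 1) up0 upb Dup Dcup)
    (hD : IsWeakDeriv m n (fun j t => u t - up0 j t) (fun i => u (m.pt i) - upb i) D)
    (Q : Fin N → Polynomial ℝ) (hQd : ∀ j, (Q j).natDegree ≤ n + 1)
    (hQl : ∀ j, (Q j).eval (m.xl j) = u (m.xl j)) (hQr : ∀ j, (Q j).eval (m.xr j) = u (m.xr j))
    (hQη : ∀ j, ∀ x ∈ Icc (m.xl j) (m.xr j), |u x - (Q j).eval x| ≤ η)
    (hQη' : ∀ j, ∀ x ∈ Icc (m.xl j) (m.xr j),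
      ε₁ * (deriv u x - (Q j).derivative.eval x) ^ 2 ≤ η ^ 2) :
    normP2 m ε₁ ε₂ bb (stdPen m ε₁ (n + 1)) (fun j t => u t - up0 j t)
      (fun i => u (m.pt i) - upb i) D
      ≤ N * (((4 + 4 / γ) * (7 + 2 * B ^ 2 / γ) + 4) * ((n : ℝ) + 1) ^ 2 * η ^ 2) := by
  obtain ⟨hU0, hub0, hub1, hdU, hDc, hgal⟩ := hwg
  simp only [Nat.add_sub_cancel] at hdU hgal
  obtain ⟨U, hUd, rfl⟩ := exists_polynomials hU0
  obtain ⟨dU, hdUd, rfl⟩ := exists_polynomials fun j => (hdU j).1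
  obtain ⟨Dc, hDcd, rfl⟩ := exists_polynomials fun j => (hDc j).1
  obtain ⟨Dp, hDpd, rfl⟩ := exists_polynomials fun j => (hD j).1
  have hus1 := (contDiff_infty_iff_deriv.1 hus).2
  have hus2 := (contDiff_infty_iff_deriv.1 hus1).2
  have hbs1 := (contDiff_infty_iff_deriv.1 hbs).2
  have du : ∀ x, HasDerivAt u (deriv u x) x := fun x =>
    ((hus.differentiable (by simp)) x).hasDerivAt
  have du' : ∀ x, HasDerivAt (deriv u) (deriv (deriv u) x) x := fun x =>
    ((hus1.differentiable (by simp)) x).hasDerivAt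
  have db : ∀ x, HasDerivAt bb (deriv bb x) x := fun x =>
    ((hbs.differentiable (by simp)) x).hasDerivAt
  have hsub : ∀ j, ∀ x ∈ Icc (m.xl j) (m.xr j), x ∈ Icc (0 : ℝ) 1 := fun j x hx =>
    ⟨(m.xl_nonneg j).trans hx.1, hx.2.trans (m.xr_le_one j)⟩
  set z : Fin (N + 1) → ℝ := fun i => u (m.pt i) - upb i with hz
  have hz0 : z 0 = 0 := by simp [hz, m.left, hu.1, hub0]
  have hz1 : z (Fin.last N) = 0 := by simp [hz, m.right, hu.2.1, hub1]
  have hcell := fun j => cell_error_le (m.xl_lt_xr j)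
    (by linarith [m.xl_nonneg j, m.xr_le_one j]) hε₁ hε₂ hεε hγ du du' hus2.continuous db
    hbs1.continuous hrc (fun x hx => hbB x (hsub j x hx)) (fun x hx => hrB x (hsub j x hx))
    (fun x hx => hb0 x (hsub j x hx)) (fun x hx => hrb x (hsub j x hx)) (Q j) (U j) (dU j) (Dp j)
    (Dc j) (upb j.castSucc) (upb j.succ) (hQl j) (hQr j) (hQη j) (hQη' j) (hQd j) (hUd j)
    (hdUd j) (hDpd j) (hdU j).2 (hD j).2
    ((hDc j).2 (Q j - U j) ((Polynomial.natDegree_sub_le _ _).trans (max_le (hQd j) (hUd j))))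
  -- the Galerkin equation tested with the discrete error
  have hG := hgal (fun j t => (Q j - U j).eval t) z
    (fun j => ⟨Q j - U j, (Polynomial.natDegree_sub_le _ _).trans (max_le (hQd j) (hUd j)),
      fun _ => rfl⟩) hz0 hz1 (fun j t => ((Q j).derivative - dU j).eval t) fun j => by
    refine ⟨⟨(Q j).derivative - dU j, (Polynomial.natDegree_sub_le _ _).trans
      (max_le ((Polynomial.natDegree_derivative_le _).trans (by have := hQd j; omega)) (hdUd j)),
      fun _ => rfl⟩, fun t ht => ?_⟩
    have := weakDeriv_interp_sub (Q j) (U j) (dU j) (upb j.castSucc) (upb j.succ) (hdU j).2 t ht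
    rw [this, hQl, hQr]
    rfl
  have hff : ∀ j, ∫ t in (m.xl j)..(m.xr j), ff t * (Q j - U j).eval t
      = ∫ t in (m.xl j)..(m.xr j), (-ε₁ * deriv (deriv u) t + ε₂ * bb t * deriv u t + rr t * u t)
        * (Q j - U j).eval t := by
    intro j
    refine intervalIntegral.integral_congr fun x hx => ?_
    rw [uIcc_of_le (m.xl_lt_xr j).le] at hx
    rw [hu.2.2 x (hsub j x hx)]
  simp only [hff] at hG
  set tel : Fin (N + 1) → ℝ := fun i => ε₁ * (deriv u (m.pt i) * z i)
    - ε₂ / 2 * (bb (m.pt i) * z i ^ 2) with htel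
  have htel0 : ∑ j : Fin N, (tel j.succ - tel j.castSucc) = 0 := by
    rw [sum_succ_sub_castSucc]; simp [htel, hz0, hz1]
  set jr : Fin N → ℝ := fun j => (Q j - U j).eval (m.xr j) - z j.succ with hjr
  set jl : Fin N → ℝ := fun j => (Q j - U j).eval (m.xl j) - z j.castSucc with hjl
  set s : Fin N → ℝ := fun j => ε₁ * ((n : ℝ) + 1) ^ 2 / (m.xr j - m.xl j) with hs
  have hpen : ∀ j, stdPen m ε₁ (n + 1) j = s j := fun j => by
    simp [stdPen, hs, Mesh.width]
  have hUr : ∀ j, (U j).eval (m.xr j) - upb j.succ = -jr j := fun j => by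
    simp only [hjr, hz, Polynomial.eval_sub, hQr]; simp only [Mesh.xr]; ring
  have hUl : ∀ j, (U j).eval (m.xl j) - upb j.castSucc = -jl j := fun j => by
    simp only [hjl, hz, Polynomial.eval_sub, hQl]; simp only [Mesh.xl]; ring
  have hEr : ∀ j, u (m.xr j) - (U j).eval (m.xr j) - z j.succ = jr j := fun j => by
    simp only [hjr, Polynomial.eval_sub, hQr]
  have hEl : ∀ j, u (m.xl j) - (U j).eval (m.xl j) - z j.castSucc = jl j := fun j => by
    simp only [hjl, Polynomial.eval_sub, hQl]
  have hres : ∑ j : Fin N, (ε₁ * (∫ x in (m.xl j)..(m.xr j), (dU j).eval x * ((Q j).derivative - dU j).eval x)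
        + ε₂ * (∫ x in (m.xl j)..(m.xr j), (Dc j).eval x * (Q j - U j).eval x)
        + (∫ x in (m.xl j)..(m.xr j), rr x * (U j).eval x * (Q j - U j).eval x)
        - (∫ x in (m.xl j)..(m.xr j), (-ε₁ * deriv (deriv u) x + ε₂ * bb x * deriv u x + rr x * u x)
          * (Q j - U j).eval x)
        - s j * (jr j ^ 2 + jl j ^ 2) - ε₂ * bb (m.xr j) * jr j ^ 2) = 0 := by
    simp only [Finset.sum_sub_distrib, Finset.sum_add_distrib, ← Finset.mul_sum]
    rw [← hG]
    simp only [Aform, Sform, Scform, hpen, hUr, hUl]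
    have e1 : ∀ j, s j * (-jr j * ((Q j - U j).eval (m.xr j) - z j.succ)
        + -jl j * ((Q j - U j).eval (m.xl j) - z j.castSucc)) = -(s j * (jr j ^ 2 + jl j ^ 2)) := by
      intro j; simp only [hjr, hjl]; ring
    have e2 : ∀ j, ε₂ * bb (m.xr j) * -jr j * ((Q j - U j).eval (m.xr j) - z j.succ)
        = -(ε₂ * bb (m.xr j) * jr j ^ 2) := by
      intro j; simp only [hjr]; ring
    simp only [e1, e2, Finset.sum_neg_distrib]
    ring
  have hsum := Finset.sum_le_sum fun j (_ : j ∈ Finset.univ) => hcell j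
  set K := 4 + 4 / γ with hK
  set R := ((4 + 4 / γ) * (7 + 2 * B ^ 2 / γ) + 4) * ((n : ℝ) + 1) ^ 2 * η ^ 2 with hR
  refine le_trans ?_ (hsum.trans (le_of_eq ?_))
  · simp only [normP2, Sform, Scform, Jsemi2, hpen, hEr, hEl]
    rw [Finset.mul_sum, ← Finset.sum_add_distrib, ← Finset.sum_add_distrib,
      ← Finset.sum_add_distrib, ← Finset.sum_add_distrib]
    refine Finset.sum_le_sum fun j _ => ?_
    have hbr : 0 ≤ ε₂ * bb (m.xr j) * jr j ^ 2 := by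
      have := hb0 (m.xr j) (hsub j _ (right_mem_Icc.2 (m.xl_lt_xr j).le)); positivity
    have hw : (if j.succ = Fin.last N then (1 : ℝ) / 2 else 1) * ε₂ * bb (m.xr j) * jr j ^ 2
        ≤ ε₂ * bb (m.xr j) * jr j ^ 2 := by
      split_ifs <;> linarith
    change _ ≤ ε₁ * (∫ x in (m.xl j)..(m.xr j), (Dp j).eval x ^ 2)
      + (∫ x in (m.xl j)..(m.xr j), (u x - (U j).eval x) ^ 2) + s j * (jr j ^ 2 + jl j ^ 2)
      + 2 * (ε₂ * bb (m.xr j) * jr j ^ 2)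
    linarith
  · rw [Finset.sum_add_distrib, ← Finset.mul_sum, Finset.sum_add_distrib, Finset.sum_neg_distrib]
    have e3 := hres
    have e4 : ∑ j : Fin N, (ε₁ * (deriv u (m.xr j) * (u (m.xr j) - upb j.succ)
        - deriv u (m.xl j) * (u (m.xl j) - upb j.castSucc))
        - ε₂ / 2 * (bb (m.xr j) * (u (m.xr j) - upb j.succ) ^ 2
          - bb (m.xl j) * (u (m.xl j) - upb j.castSucc) ^ 2)) = 0 := by
      rw [← htel0]
      refine Finset.sum_congr rfl fun j _ => ?_
      simp only [htel, hz, Mesh.xl, Mesh.xr]; ring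
    rw [e4]
    have e5 : ∀ A Z : ℝ, A = 0 → Z = N * R → K * (-A + 0) + Z = N * R := by
      intro A Z hA hZ; rw [hA, hZ]; ring
    exact e5 _ _ e3 (by simp)

theorem deriv_deriv_nonneg_of_isLocalMin {y : ℝ → ℝ} {x : ℝ} (hc : ContinuousAt y x)
    (h : IsLocalMin y x) : 0 ≤ deriv (deriv y) x := by
  by_contra! hneg
  have hmax := isLocalMax_of_deriv_deriv_neg hneg h.deriv_eq_zero hc
  have heq : y =ᶠ[nhds x] fun _ => y x := by
    filter_upwards [h, hmax] with z hz1 hz2 using le_antisymm hz2 hz1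
  have h2 := heq.deriv.deriv_eq
  simp at h2
  linarith

/-- Minimum principle for a singularly perturbed operator. -/
theorem nonneg_of_operator_nonneg {y c R : ℝ → ℝ} {e : ℝ} (he : 0 ≤ e) (hy : Continuous y)
    (hR : ∀ x ∈ Ioo (0 : ℝ) 1, 0 < R x)
    (hL : ∀ x ∈ Ioo (0 : ℝ) 1, 0 ≤ -e * deriv (deriv y) x + c x * deriv y x + R x * y x)
    (h0 : 0 ≤ y 0) (h1 : 0 ≤ y 1) : ∀ x ∈ Icc (0 : ℝ) 1, 0 ≤ y x := by
  obtain ⟨x₀, hx₀, hmin⟩ := isCompact_Icc.exists_isMinOn (nonempty_Icc.2 zero_le_one)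
    hy.continuousOn (s := Icc (0 : ℝ) 1)
  intro x hx
  refine le_trans ?_ (hmin hx)
  by_contra! hneg
  have hne0 : x₀ ≠ 0 := fun h => by rw [h] at hneg; linarith
  have hne1 : x₀ ≠ 1 := fun h => by rw [h] at hneg; linarith
  have hI : x₀ ∈ Ioo (0 : ℝ) 1 := ⟨lt_of_le_of_ne hx₀.1 hne0.symm, lt_of_le_of_ne hx₀.2 hne1⟩
  have hloc : IsLocalMin y x₀ := hmin.isLocalMin (Icc_mem_nhds hI.1 hI.2)
  have hd2 := deriv_deriv_nonneg_of_isLocalMin hy.continuousAt hloc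
  have := hL x₀ hI
  rw [hloc.deriv_eq_zero] at this
  nlinarith [hR x₀ hI]

/-- Barrier estimate: the solution is bounded by the size of the right-hand side plus two
exponential boundary layers. -/
theorem abs_le_of_barrier {y b R : ℝ → ℝ} {ε ε₂ γ B α ρ V : ℝ} (hε : 0 < ε) (hε₂ : 0 ≤ ε₂)
    (hεε : ε₂ ≤ ε) (hγ : 0 < γ) (hα : 0 ≤ α) (hαγ : α ^ 2 + B * α ≤ γ) (hρ : 0 ≤ ρ) (hV : 0 ≤ V)
    (hy : ContDiff ℝ (⊤ : ℕ∞) y)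
    (hb : ∀ x ∈ Icc (0 : ℝ) 1, |b x| ≤ B) (hR : ∀ x ∈ Icc (0 : ℝ) 1, γ ≤ R x)
    (hL : ∀ x ∈ Icc (0 : ℝ) 1,
      |-ε ^ 2 * deriv (deriv y) x + ε₂ * b x * deriv y x + R x * y x| ≤ ρ)
    (h0 : |y 0| ≤ V) (h1 : |y 1| ≤ V) :
    ∀ x ∈ Icc (0 : ℝ) 1, |y x| ≤ ρ / γ
      + V * (Real.exp (-(α / ε) * x) + Real.exp (-(α / ε) * (1 - x))) := by
  set ψ : ℝ → ℝ := fun x => ρ / γ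
      + V * (Real.exp (-(α / ε) * x) + Real.exp (-(α / ε) * (1 - x))) with hψ
  have hy1 := (contDiff_infty_iff_deriv.1 hy).2
  have d0 : ∀ x, HasDerivAt y (deriv y x) x := fun x =>
    ((hy.differentiable (by simp)) x).hasDerivAt
  have d1 : ∀ x, HasDerivAt (deriv y) (deriv (deriv y) x) x := fun x =>
    ((hy1.differentiable (by simp)) x).hasDerivAt
  have e1 : ∀ x, HasDerivAt (fun x => Real.exp (-(α / ε) * x))
      (-(α / ε) * Real.exp (-(α / ε) * x)) x := fun x => by
    have := ((hasDerivAt_id x).const_mul (-(α / ε))).exp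
    simpa [mul_comm] using this
  have e2 : ∀ x, HasDerivAt (fun x => Real.exp (-(α / ε) * (1 - x)))
      ((α / ε) * Real.exp (-(α / ε) * (1 - x))) x := fun x => by
    have := (((hasDerivAt_id x).const_sub 1).const_mul (-(α / ε))).exp
    simpa [mul_comm] using this
  have p0 : ∀ x, HasDerivAt ψ (V * (-(α / ε) * Real.exp (-(α / ε) * x)
      + (α / ε) * Real.exp (-(α / ε) * (1 - x)))) x := fun x =>
    (((e1 x).add (e2 x)).const_mul V).const_add _
  have p1 : ∀ x, HasDerivAt (fun x => V * (-(α / ε) * Real.exp (-(α / ε) * x)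
      + (α / ε) * Real.exp (-(α / ε) * (1 - x)))) (V * (-(α / ε) * (-(α / ε)
      * Real.exp (-(α / ε) * x)) + (α / ε) * ((α / ε) * Real.exp (-(α / ε) * (1 - x))))) x :=
    fun x => (((e1 x).const_mul _).add ((e2 x).const_mul _)).const_mul V
  have hψ0 : V ≤ ψ 0 := by
    have : 0 ≤ ρ / γ + V * Real.exp (-(α / ε)) := by positivity
    simp only [hψ, mul_zero, Real.exp_zero, sub_zero, mul_one]
    linarith
  have hψ1 : V ≤ ψ 1 := by
    have : 0 ≤ ρ / γ + V * Real.exp (-(α / ε)) := by positivity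
    simp only [hψ, mul_zero, Real.exp_zero, sub_self, mul_one]
    linarith
  have hψL : ∀ x ∈ Icc (0 : ℝ) 1, ρ ≤ -ε ^ 2 * deriv (deriv ψ) x + ε₂ * b x * deriv ψ x
      + R x * ψ x := by
    intro x hx
    have hdψ : deriv ψ = fun x => V * (-(α / ε) * Real.exp (-(α / ε) * x)
      + (α / ε) * Real.exp (-(α / ε) * (1 - x))) := funext fun x => (p0 x).deriv
    rw [hdψ, (p1 x).deriv]
    simp only [hψ]
    set E1 := Real.exp (-(α / ε) * x) with hE1
    set E2 := Real.exp (-(α / ε) * (1 - x)) with hE2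
    have hE1p : 0 < E1 := Real.exp_pos _
    have hE2p : 0 < E2 := Real.exp_pos _
    have hq : |ε₂ * b x * (α / ε)| ≤ B * α := by
      rw [abs_mul, abs_mul, abs_of_nonneg hε₂, abs_of_nonneg (by positivity : 0 ≤ α / ε)]
      have h3 : ε₂ * (α / ε) ≤ α := by
        rw [mul_div_assoc', div_le_iff₀ hε]; nlinarith
      have hB := hb x hx
      calc ε₂ * |b x| * (α / ε) = |b x| * (ε₂ * (α / ε)) := by ring
        _ ≤ B * α := by
          exact mul_le_mul hB h3 (by positivity) ((abs_nonneg _).trans hB)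
    obtain ⟨hq1, hq2⟩ := abs_le.1 hq
    have hRx := hR x hx
    have hRρ : ρ ≤ R x * (ρ / γ) := by
      rw [mul_div_assoc', le_div_iff₀ hγ]; nlinarith
    have ee : -ε ^ 2 * (V * (-(α / ε) * (-(α / ε) * E1) + α / ε * (α / ε * E2)))
        + ε₂ * b x * (V * (-(α / ε) * E1 + α / ε * E2)) + R x * (ρ / γ + V * (E1 + E2))
        = R x * (ρ / γ) + V * (E1 * (R x - α ^ 2 - ε₂ * b x * (α / ε))
          + E2 * (R x - α ^ 2 + ε₂ * b x * (α / ε))) := by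
      field_simp; ring
    rw [ee]
    have t1 : 0 ≤ E1 * (R x - α ^ 2 - ε₂ * b x * (α / ε)) :=
      mul_nonneg hE1p.le (by linarith)
    have t2 : 0 ≤ E2 * (R x - α ^ 2 + ε₂ * b x * (α / ε)) :=
      mul_nonneg hE2p.le (by linarith)
    have := mul_nonneg hV (add_nonneg t1 t2)
    linarith
  have hψc : ContDiff ℝ (⊤ : ℕ∞) ψ := by
    have := Real.contDiff_exp (n := (⊤ : ℕ∞))
    fun_prop
  have main : ∀ s : ℝ, s = 1 ∨ s = -1 → ∀ x ∈ Icc (0 : ℝ) 1, 0 ≤ ψ x + s * y x := by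
    intro s hs
    have g0 : ∀ x, HasDerivAt (fun x => ψ x + s * y x) (deriv ψ x + s * deriv y x) x := fun x =>
      ((p0 x).differentiableAt.hasDerivAt).add ((d0 x).const_mul s)
    have g0' : deriv (fun x => ψ x + s * y x) = fun x => deriv ψ x + s * deriv y x :=
      funext fun x => (g0 x).deriv
    have hψ1 := (contDiff_infty_iff_deriv.1 hψc).2
    have g1 : ∀ x, deriv (fun x => deriv ψ x + s * deriv y x) x
        = deriv (deriv ψ) x + s * deriv (deriv y) x := fun x =>
      (((hψ1.differentiable (by simp)) x).hasDerivAt.add ((d1 x).const_mul s)).deriv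
    refine nonneg_of_operator_nonneg (c := fun x => ε₂ * b x) (R := R) (sq_nonneg ε)
      (hψc.continuous.add (hy.continuous.const_smul s))
      (fun x hx => lt_of_lt_of_le hγ (hR x (Ioo_subset_Icc_self hx))) (fun x hx => ?_) ?_ ?_
    · rw [g0', g1]
      have h2 := hψL x (Ioo_subset_Icc_self hx)
      have h3 := abs_le.1 (hL x (Ioo_subset_Icc_self hx))
      rcases hs with rfl | rfl <;> linarith [h3.1, h3.2]
    · have := abs_le.1 h0
      rcases hs with rfl | rfl <;> linarith [this.1, this.2]
    · have := abs_le.1 h1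
      rcases hs with rfl | rfl <;> linarith [this.1, this.2]
  intro x hx
  have m1 := main 1 (Or.inl rfl) x hx
  have m2 := main (-1) (Or.inr rfl) x hx
  exact abs_le.2 ⟨by linarith, by linarith⟩

/-- Interior derivative bound from a bound on the function and on the equation. -/
theorem deriv_bound_of_second_order {y y' y'' : ℝ → ℝ} {a b ε δ B Y F : ℝ} (hε : 0 < ε)
    (hδ : 0 < δ) (hδB : δ * B ≤ 1 / 2) (hlen : δ * ε ≤ b - a)
    (hy : ∀ x, HasDerivAt y (y' x) x) (hy' : ∀ x, HasDerivAt y' (y'' x) x)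
    (hB : 0 ≤ B) (hF : 0 ≤ F)
    (hY : ∀ x ∈ Icc a b, |y x| ≤ Y)
    (hL : ∀ x ∈ Icc a b, ε ^ 2 * |y'' x| ≤ B * ε * |y' x| + F) :
    ∀ x ∈ Icc a b, ε * |y' x| ≤ 4 * Y / δ + 2 * δ * F := by
  have hδε : 0 < δ * ε := by positivity
  have hab : a ≤ b := by linarith
  have hy'c : Continuous y' := continuous_iff_continuousAt.2 fun x => (hy' x).continuousAt
  obtain ⟨x₀, hx₀, hmax⟩ := isCompact_Icc.exists_isMaxOn (nonempty_Icc.2 hab)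
    hy'c.abs.continuousOn (s := Icc a b)
  set M := |y' x₀| with hM
  have hMx : ∀ x ∈ Icc a b, |y' x| ≤ M := fun x hx => hmax hx
  have hM0 : 0 ≤ M := abs_nonneg _
  obtain ⟨c, hca, hcb, hcx, hxc⟩ : ∃ c, a ≤ c ∧ c + δ * ε ≤ b ∧ c ≤ x₀ ∧ x₀ ≤ c + δ * ε := by
    by_cases h : x₀ + δ * ε ≤ b
    · exact ⟨x₀, hx₀.1, h, le_rfl, by linarith⟩
    · exact ⟨b - δ * ε, by linarith, by linarith, by linarith, by linarith [hx₀.2]⟩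
  have hsub : Icc c (c + δ * ε) ⊆ Icc a b := Icc_subset_Icc hca hcb
  obtain ⟨ξ, hξ, hξe⟩ := exists_hasDerivAt_eq_slope y y' (by linarith : c < c + δ * ε)
    (fun x _ => (hy x).continuousAt.continuousWithinAt) (fun x _ => hy x)
  have hξ' : |y' ξ| * (δ * ε) ≤ 2 * Y := by
    have h1 : y' ξ * (δ * ε) = y (c + δ * ε) - y c := by
      rw [hξe]; field_simp; ring
    rw [← abs_of_pos hδε, ← abs_mul, h1]
    have h2 := hY _ (hsub (right_mem_Icc.2 (by linarith)))
    have h3 := hY _ (hsub (left_mem_Icc.2 (by linarith : c ≤ c + δ * ε)))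
    calc _ ≤ |y (c + δ * ε)| + |y c| := abs_sub _ _
      _ ≤ _ := by linarith
  have hlip := Convex.norm_image_sub_le_of_norm_hasDerivWithin_le (s := Icc a b)
    (C := (B * ε * M + F) / ε ^ 2) (f := y') (f' := y'')
    (fun x _ => (hy' x).hasDerivWithinAt)
    (fun x hx => by
      rw [Real.norm_eq_abs, le_div_iff₀ (by positivity), mul_comm]
      refine (hL x hx).trans ?_
      have := hMx x hx
      gcongr) (convex_Icc a b) (hsub (Ioo_subset_Icc_self hξ)) hx₀
  rw [Real.norm_eq_abs, Real.norm_eq_abs] at hlip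
  have hdist : |x₀ - ξ| ≤ δ * ε := by
    rw [abs_le]; constructor <;> linarith [hξ.1, hξ.2]
  have hM1 : M ≤ |y' ξ| + (B * ε * M + F) / ε ^ 2 * (δ * ε) := by
    have h1 : |y' x₀| ≤ |y' ξ| + |y' x₀ - y' ξ| := by
      have := abs_add_le (y' ξ) (y' x₀ - y' ξ); simpa using this
    have h2 : (B * ε * M + F) / ε ^ 2 * |x₀ - ξ| ≤ (B * ε * M + F) / ε ^ 2 * (δ * ε) := by
      gcongr
    linarith
  have hM2 : ε * M ≤ 4 * Y / δ + 2 * δ * F := by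
    have h1 : ε * M ≤ ε * |y' ξ| + δ * B * (ε * M) + δ * F := by
      have := mul_le_mul_of_nonneg_left hM1 hε.le
      have e : ε * (|y' ξ| + (B * ε * M + F) / ε ^ 2 * (δ * ε))
          = ε * |y' ξ| + δ * B * (ε * M) + δ * F := by field_simp; ring
      rwa [e] at this
    have h2 : ε * |y' ξ| ≤ 2 * Y / δ := by
      rw [le_div_iff₀ hδ]; linarith
    have h3 : δ * B * (ε * M) ≤ 1 / 2 * (ε * M) := by gcongr
    have e : 4 * Y / δ = 2 * (2 * Y / δ) := by ring
    rw [e]; linarith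
  intro x hx
  exact (mul_le_mul_of_nonneg_left (hMx x hx) hε.le).trans hM2

/-- The derivatives of a smooth function vanishing on `[0, 1]` vanish there. -/
theorem iteratedDeriv_eq_zero_of_eq_zero_on (n : ℕ) : ∀ h : ℝ → ℝ, ContDiff ℝ (⊤ : ℕ∞) h →
    (∀ x ∈ Icc (0 : ℝ) 1, h x = 0) → ∀ x ∈ Icc (0 : ℝ) 1, iteratedDeriv n h x = 0 := by
  induction n with
  | zero => intro h _ h0 x hx; simpa using h0 x hx
  | succ n ih =>
    intro h hs h0
    rw [iteratedDeriv_succ']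
    refine ih _ (contDiff_infty_iff_deriv.1 hs).2 fun x hx => ?_
    have d : HasDerivWithinAt h (deriv h x) (Icc 0 1) x :=
      ((hs.differentiable (by simp)) x).hasDerivAt.hasDerivWithinAt
    have d' : HasDerivWithinAt h 0 (Icc 0 1) x :=
      (hasDerivWithinAt_const x (Icc 0 1) (0 : ℝ)).congr h0 (h0 x hx)
    exact (uniqueDiffOn_Icc_zero_one x hx).eq_deriv _ d d'

/-- A single term of the Leibniz formula for `g * y`, where `g` satisfies analytic bounds and `y`
satisfies bounds on a fixed length scale `Λ⁻¹`. -/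
theorem leibniz_term_le {C₀ γ₀ A Λ θ G Y : ℝ} {n k N₀ : ℕ} (hC : 0 ≤ C₀) (hγ₀ : 0 ≤ γ₀)
    (hA : 0 ≤ A) (hΛ : 0 ≤ Λ) (hθΛ : N₀ * γ₀ ≤ θ * Λ) (hkn : k ≤ n)
    (hn : n ≤ N₀) (hG : |G| ≤ C₀ * k.factorial * γ₀ ^ k) (hY : |Y| ≤ A * Λ ^ (n - k)) :
    |(n.choose k : ℝ) * G * Y| ≤ C₀ * A * Λ ^ n * θ ^ k := by
  have h1 : (n.choose k : ℝ) * k.factorial ≤ (N₀ : ℝ) ^ k := by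
    have : n.choose k * k.factorial ≤ N₀ ^ k := by
      calc n.choose k * k.factorial = n.descFactorial k := by
            rw [Nat.descFactorial_eq_factorial_mul_choose, mul_comm]
        _ ≤ n ^ k := Nat.descFactorial_le_pow n k
        _ ≤ N₀ ^ k := Nat.pow_le_pow_left hn k
    exact_mod_cast this
  have h2 : (N₀ : ℝ) ^ k * γ₀ ^ k ≤ θ ^ k * Λ ^ k := by
    rw [← mul_pow, ← mul_pow]
    exact pow_le_pow_left₀ (by positivity) hθΛ k
  rw [abs_mul, abs_mul, abs_of_nonneg (by positivity : (0 : ℝ) ≤ n.choose k)]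
  calc (n.choose k : ℝ) * |G| * |Y|
      ≤ n.choose k * (C₀ * k.factorial * γ₀ ^ k) * (A * Λ ^ (n - k)) := by gcongr
    _ = (n.choose k * k.factorial) * γ₀ ^ k * (C₀ * A * Λ ^ (n - k)) := by ring
    _ ≤ (N₀ : ℝ) ^ k * γ₀ ^ k * (C₀ * A * Λ ^ (n - k)) := by gcongr
    _ ≤ θ ^ k * Λ ^ k * (C₀ * A * Λ ^ (n - k)) := by gcongr
    _ = C₀ * A * (Λ ^ k * Λ ^ (n - k)) * θ ^ k := by ring
    _ = C₀ * A * Λ ^ n * θ ^ k := by rw [← pow_add, Nat.add_sub_cancel' hkn]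

/-- Multiplication by an analytic function preserves bounds on a fixed length scale. -/
theorem abs_iteratedDeriv_mul_le {g y : ℝ → ℝ} {C₀ γ₀ A Λ x : ℝ} {n N₀ : ℕ} (hC : 0 ≤ C₀)
    (hγ₀ : 0 ≤ γ₀) (hA : 0 ≤ A) (hΛ : 0 ≤ Λ) (hΛN : 2 * N₀ * γ₀ ≤ Λ) (hn : n ≤ N₀)
    (hg : ContDiff ℝ (⊤ : ℕ∞) g) (hy : ContDiff ℝ (⊤ : ℕ∞) y)
    (hgx : ∀ k, |iteratedDeriv k g x| ≤ C₀ * k.factorial * γ₀ ^ k)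
    (hyx : ∀ k ≤ n, |iteratedDeriv k y x| ≤ A * Λ ^ k) :
    |iteratedDeriv n (fun t => g t * y t) x| ≤ 2 * C₀ * A * Λ ^ n := by
  have hle : (n : WithTop ℕ∞) ≤ ((⊤ : ℕ∞) : WithTop ℕ∞) := by exact_mod_cast le_top
  rw [iteratedDeriv_fun_mul (hg.contDiffAt.of_le hle) (hy.contDiffAt.of_le hle)]
  calc _ ≤ ∑ i ∈ Finset.range (n + 1),
        |(n.choose i : ℝ) * iteratedDeriv i g x * iteratedDeriv (n - i) y x| :=
        Finset.abs_sum_le_sum_abs _ _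
    _ ≤ ∑ i ∈ Finset.range (n + 1), C₀ * A * Λ ^ n * (1 / 2 : ℝ) ^ i := by
        refine Finset.sum_le_sum fun i hi => ?_
        exact leibniz_term_le (θ := 1 / 2) hC hγ₀ hA hΛ (by linarith)
          (Nat.lt_succ_iff.1 (Finset.mem_range.1 hi)) hn (hgx i) (hyx _ (Nat.sub_le _ _))
    _ = C₀ * A * Λ ^ n * ∑ i ∈ Finset.range (n + 1), (1 / 2 : ℝ) ^ i := by rw [Finset.mul_sum]
    _ ≤ C₀ * A * Λ ^ n * 2 := by
        gcongr
        exact sum_geometric_two_le _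
    _ = _ := by ring

/-- Division by an analytic function bounded below preserves bounds on a fixed length scale. -/
theorem abs_iteratedDeriv_le_of_mul {g y : ℝ → ℝ} {C₀ γ₀ γ A Λ θ x : ℝ} {N₀ : ℕ} (hC : 0 < C₀)
    (hγ₀ : 0 ≤ γ₀) (hγ : 0 < γ) (hA : 0 ≤ A) (hΛ : 0 ≤ Λ) (hθ : 0 ≤ θ) (hθ2 : θ ≤ 1 / 2)
    (hθγ : 4 * C₀ * θ ≤ γ) (hθΛ : N₀ * γ₀ ≤ θ * Λ)
    (hg : ContDiff ℝ (⊤ : ℕ∞) g) (hy : ContDiff ℝ (⊤ : ℕ∞) y)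
    (hgx : ∀ k, |iteratedDeriv k g x| ≤ C₀ * k.factorial * γ₀ ^ k) (hgγ : γ ≤ g x)
    {n : ℕ} (hn : n ≤ N₀)
    (hF : ∀ k ≤ n, |iteratedDeriv k (fun t => g t * y t) x| ≤ A * Λ ^ k) :
    |iteratedDeriv n y x| ≤ 2 / γ * A * Λ ^ n := by
  induction n using Nat.strong_induction_on with
  | _ n ih =>
  have hle : (n : WithTop ℕ∞) ≤ ((⊤ : ℕ∞) : WithTop ℕ∞) := by exact_mod_cast le_top
  have hsum := iteratedDeriv_fun_mul (x := x) (hg.contDiffAt.of_le hle) (hy.contDiffAt.of_le hle)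
  rw [Finset.sum_range_succ'] at hsum
  simp only [Nat.choose_zero_right, Nat.cast_one, one_mul, iteratedDeriv_zero, Nat.sub_zero]
    at hsum
  set S := ∑ k ∈ Finset.range n, ((n.choose (k + 1) : ℕ) : ℝ) * iteratedDeriv (k + 1) g x *
    iteratedDeriv (n - (k + 1)) y x with hSdef
  have hS : |S| ≤ A * Λ ^ n := by
    calc |S| ≤ ∑ i ∈ Finset.range n, |(n.choose (i + 1) : ℝ) * iteratedDeriv (i + 1) g x *
          iteratedDeriv (n - (i + 1)) y x| := Finset.abs_sum_le_sum_abs _ _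
      _ ≤ ∑ i ∈ Finset.range n, C₀ * (2 / γ * A) * Λ ^ n * θ ^ (i + 1) := by
          refine Finset.sum_le_sum fun i hi => ?_
          have hi' := Finset.mem_range.1 hi
          refine leibniz_term_le hC.le hγ₀ (by positivity) hΛ hθΛ hi' hn (hgx _) ?_
          exact ih _ (by omega) (by omega) fun k hk => hF k (by omega)
      _ ≤ ∑ i ∈ Finset.range n, C₀ * (2 / γ * A) * Λ ^ n * θ * (1 / 2) ^ i := by
          refine Finset.sum_le_sum fun i _ => ?_
          rw [pow_succ, mul_comm (θ ^ i), ← mul_assoc]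
          gcongr
      _ = C₀ * (2 / γ * A) * Λ ^ n * θ * ∑ i ∈ Finset.range n, (1 / 2 : ℝ) ^ i := by
          rw [Finset.mul_sum]
      _ ≤ C₀ * (2 / γ * A) * Λ ^ n * θ * 2 := by
          gcongr
          exact sum_geometric_two_le _
      _ = 4 * C₀ * θ / γ * (A * Λ ^ n) := by ring
      _ ≤ 1 * (A * Λ ^ n) := by
          gcongr
          rwa [div_le_one hγ]
      _ = _ := one_mul _
  have hFn := hF n le_rfl
  have h1 : γ * |iteratedDeriv n y x| ≤ 2 * (A * Λ ^ n) := by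
    calc γ * |iteratedDeriv n y x| ≤ |g x| * |iteratedDeriv n y x| := by
          gcongr; exact hgγ.trans (le_abs_self _)
      _ = |iteratedDeriv n (fun t => g t * y t) x - S| := by
          rw [← abs_mul, hsum]; congr 1; ring
      _ ≤ |iteratedDeriv n (fun t => g t * y t) x| + |S| := abs_sub _ _
      _ ≤ _ := by linarith
  rw [show 2 / γ * A * Λ ^ n = 2 * (A * Λ ^ n) / γ by ring, le_div_iff₀ hγ]
  linarith

/-- Analytic bounds imply bounds on a fixed length scale for finitely many derivatives. -/
theorem factorial_mul_pow_le {γ₀ Λ : ℝ} {n N₀ : ℕ} (hγ₀ : 0 ≤ γ₀) (hΛ : N₀ * γ₀ ≤ Λ)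
    (hn : n ≤ N₀) : (n.factorial : ℝ) * γ₀ ^ n ≤ Λ ^ n := by
  have h : (n.factorial : ℝ) ≤ (N₀ : ℝ) ^ n := by
    exact_mod_cast (Nat.factorial_le_pow n).trans (Nat.pow_le_pow_left hn n)
  calc (n.factorial : ℝ) * γ₀ ^ n ≤ (N₀ : ℝ) ^ n * γ₀ ^ n := by gcongr
    _ = (N₀ * γ₀) ^ n := (mul_pow _ _ _).symm
    _ ≤ Λ ^ n := pow_le_pow_left₀ (by positivity) hΛ n

/-- Derivative bounds for the solution on the length scale of the boundary layer. -/
theorem abs_iteratedDeriv_solution_le {b r f u : ℝ → ℝ} {C₀ γ₀ ε ε₂ M Λ x : ℝ} {N₀ : ℕ}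
    (hC : 1 ≤ C₀) (hγ₀ : 0 ≤ γ₀) (hε : 0 < ε) (hε₂ : 0 ≤ ε₂) (hεε : ε₂ ≤ ε) (hM : 1 ≤ M)
    (hΛN : 2 * N₀ * γ₀ ≤ Λ) (hεΛ : 5 * C₀ + 1 ≤ ε * Λ)
    (hb : ContDiff ℝ (⊤ : ℕ∞) b) (hr : ContDiff ℝ (⊤ : ℕ∞) r) (hf : ContDiff ℝ (⊤ : ℕ∞) f)
    (hu : ContDiff ℝ (⊤ : ℕ∞) u)
    (hbx : ∀ k, ∀ x ∈ Icc (0 : ℝ) 1, |iteratedDeriv k b x| ≤ C₀ * k.factorial * γ₀ ^ k)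
    (hrx : ∀ k, ∀ x ∈ Icc (0 : ℝ) 1, |iteratedDeriv k r x| ≤ C₀ * k.factorial * γ₀ ^ k)
    (hfx : ∀ k, ∀ x ∈ Icc (0 : ℝ) 1, |iteratedDeriv k f x| ≤ C₀ * k.factorial * γ₀ ^ k)
    (hL : ∀ x ∈ Icc (0 : ℝ) 1,
      -ε ^ 2 * deriv (deriv u) x + ε₂ * b x * deriv u x + r x * u x = f x)
    (hx : x ∈ Icc (0 : ℝ) 1) (hu0 : |u x| ≤ M) (hu1 : ε * |deriv u x| ≤ M) :
    ∀ n ≤ N₀ + 2, |iteratedDeriv n u x| ≤ M * Λ ^ n := by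
  have hΛ : 0 < Λ := by
    have : 0 < ε * Λ := by linarith
    exact pos_of_mul_pos_right this hε.le
  have hu' := (contDiff_infty_iff_deriv.1 hu).2
  have hu'' := (contDiff_infty_iff_deriv.1 hu').2
  intro n
  induction n using Nat.strong_induction_on with
  | _ n ih =>
  intro hn
  match n, hn, ih with
  | 0, _, _ => simpa using hu0
  | 1, _, _ =>
    rw [iteratedDeriv_one, pow_one]
    have h1 : ε * |deriv u x| ≤ ε * (M * Λ) := by nlinarith
    exact le_of_mul_le_mul_left h1 hε
  | n + 2, hn, ih =>
    have hle : (n : WithTop ℕ∞) ≤ ((⊤ : ℕ∞) : WithTop ℕ∞) := by exact_mod_cast le_top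
    have hz := iteratedDeriv_eq_zero_of_eq_zero_on n
      (fun t => -ε ^ 2 * deriv (deriv u) t + ε₂ * (b t * deriv u t) + r t * u t - f t)
      (((((contDiff_const.mul hu'').add (contDiff_const.mul (hb.mul hu'))).add
        (hr.mul hu)).sub hf)) (fun t ht => by have := hL t ht; linarith) x hx
    have c1 : ContDiffAt ℝ n (fun t => -ε ^ 2 * deriv (deriv u) t) x :=
      (contDiff_const.mul hu'').contDiffAt.of_le hle
    have c2 : ContDiffAt ℝ n (fun t => ε₂ * (b t * deriv u t)) x :=
      (contDiff_const.mul (hb.mul hu')).contDiffAt.of_le hle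
    have c3 : ContDiffAt ℝ n (fun t => r t * u t) x := (hr.mul hu).contDiffAt.of_le hle
    rw [iteratedDeriv_fun_sub ((c1.add c2).add c3) (hf.contDiffAt.of_le hle),
      iteratedDeriv_fun_add (c1.add c2) c3, iteratedDeriv_fun_add c1 c2,
      iteratedDeriv_const_mul_field, iteratedDeriv_const_mul_field,
      ← iteratedDeriv_succ', ← iteratedDeriv_succ'] at hz
    have hb1 := abs_iteratedDeriv_mul_le (x := x) (A := M * Λ) (by linarith) hγ₀ (by positivity)
      hΛ.le hΛN (by omega : n ≤ N₀) hb hu' (fun k => hbx k x hx) (fun k hk => by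
        rw [← iteratedDeriv_succ']
        have := ih (k + 1) (by omega) (by omega)
        rwa [pow_succ', ← mul_assoc] at this)
    have hr1 := abs_iteratedDeriv_mul_le (x := x) (A := M) (by linarith) hγ₀ (by positivity)
      hΛ.le hΛN (by omega : n ≤ N₀) hr hu (fun k => hrx k x hx) (fun k hk =>
        ih k (by omega) (by omega))
    have hf1 : |iteratedDeriv n f x| ≤ C₀ * Λ ^ n := by
      refine (hfx n x hx).trans ?_
      rw [mul_assoc]
      gcongr
      refine factorial_mul_pow_le hγ₀ ?_ (by omega : n ≤ N₀)
      have : 0 ≤ N₀ * γ₀ := by positivity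
      linarith
    have e : ε ^ 2 * iteratedDeriv (n + 2) u x
        = ε₂ * iteratedDeriv n (fun t => b t * deriv u t) x
          + iteratedDeriv n (fun t => r t * u t) x - iteratedDeriv n f x := by linarith
    have h1 : ε ^ 2 * |iteratedDeriv (n + 2) u x| ≤ ε ^ 2 * (M * Λ ^ (n + 2)) := by
      rw [← abs_of_pos (by positivity : 0 < ε ^ 2), ← abs_mul, e,
        abs_of_pos (by positivity : 0 < ε ^ 2)]
      calc _ ≤ |ε₂ * iteratedDeriv n (fun t => b t * deriv u t) x|
            + |iteratedDeriv n (fun t => r t * u t) x| + |iteratedDeriv n f x| :=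
            (abs_sub _ _).trans (add_le_add_left (abs_add_le _ _) _)
        _ ≤ ε * (2 * C₀ * (M * Λ) * Λ ^ n) + 2 * C₀ * M * Λ ^ n + C₀ * Λ ^ n := by
            rw [abs_mul, abs_of_nonneg hε₂]
            gcongr
        _ ≤ ε * (2 * C₀ * (M * Λ) * Λ ^ n) + 2 * C₀ * M * Λ ^ n + C₀ * M * Λ ^ n := by
            gcongr
            nlinarith
        _ = (C₀ * (2 * (ε * Λ) + 3)) * (M * Λ ^ n) := by ring
        _ ≤ (ε * Λ) ^ 2 * (M * Λ ^ n) := by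
            gcongr
            nlinarith
        _ = _ := by ring
    exact le_of_mul_le_mul_left h1 (by positivity)

/-- The terms of the smooth asymptotic expansion: formally inverting the reaction term. -/
def smoothTerm (ε ε₂ : ℝ) (b R f : ℝ → ℝ) : ℕ → ℝ → ℝ
  | 0 => fun t => f t / R t
  | j + 1 => fun t => (ε ^ 2 * deriv (deriv (smoothTerm ε ε₂ b R f j)) t
      - ε₂ * (b t * deriv (smoothTerm ε ε₂ b R f j) t)) / R t

theorem contDiff_smoothTerm {ε ε₂ : ℝ} {b R f : ℝ → ℝ} (hb : ContDiff ℝ (⊤ : ℕ∞) b)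
    (hR : ContDiff ℝ (⊤ : ℕ∞) R) (hf : ContDiff ℝ (⊤ : ℕ∞) f) (hR0 : ∀ t, R t ≠ 0) (j : ℕ) :
    ContDiff ℝ (⊤ : ℕ∞) (smoothTerm ε ε₂ b R f j) := by
  induction j with
  | zero => exact hf.div hR hR0
  | succ j ih =>
    have h' := (contDiff_infty_iff_deriv.1 ih).2
    have h'' := (contDiff_infty_iff_deriv.1 h').2
    exact ((contDiff_const.mul h'').sub (contDiff_const.mul (hb.mul h'))).div hR hR0

/-- Bounds for the terms of the smooth asymptotic expansion. -/
theorem abs_iteratedDeriv_smoothTerm_le {b R f : ℝ → ℝ} {C₀ γ₀ γ ε ε₂ Λ θ τ q x : ℝ} {N₀ : ℕ}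
    (hC : 0 < C₀) (hγ₀ : 0 ≤ γ₀) (hγ : 0 < γ) (hε : 0 ≤ ε) (hε₂ : 0 ≤ ε₂) (hεε : ε₂ ≤ ε)
    (hΛ : 0 ≤ Λ) (hθ : 0 ≤ θ) (hθ2 : θ ≤ 1 / 2) (hθγ : 4 * C₀ * θ ≤ γ) (hθΛ : N₀ * γ₀ ≤ θ * Λ)
    (hεΛ : ε * Λ ≤ τ) (hq : 2 / γ * (τ ^ 2 + 2 * C₀ * τ) ≤ q)
    (hb : ContDiff ℝ (⊤ : ℕ∞) b) (hR : ContDiff ℝ (⊤ : ℕ∞) R) (hf : ContDiff ℝ (⊤ : ℕ∞) f)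
    (hR0 : ∀ t, R t ≠ 0) (hRγ : γ ≤ R x)
    (hbx : ∀ k, |iteratedDeriv k b x| ≤ C₀ * k.factorial * γ₀ ^ k)
    (hRx : ∀ k, |iteratedDeriv k R x| ≤ C₀ * k.factorial * γ₀ ^ k)
    (hfx : ∀ k, |iteratedDeriv k f x| ≤ C₀ * k.factorial * γ₀ ^ k) (j : ℕ) :
    ∀ n, n + 2 * j ≤ N₀ →
      |iteratedDeriv n (smoothTerm ε ε₂ b R f j) x| ≤ 2 / γ * C₀ * q ^ j * Λ ^ n := by
  have hτ : 0 ≤ τ := (mul_nonneg hε hΛ).trans hεΛ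
  have hq0 : 0 ≤ q := le_trans (by positivity) hq
  have hN : 0 ≤ N₀ * γ₀ := by positivity
  have hNΛ : 2 * N₀ * γ₀ ≤ Λ := by nlinarith
  induction j with
  | zero =>
    intro n hn
    rw [pow_zero, mul_one]
    refine abs_iteratedDeriv_le_of_mul hC hγ₀ hγ hC.le hΛ hθ hθ2 hθγ hθΛ hR
      (contDiff_smoothTerm hb hR hf hR0 0) hRx hRγ (by omega : n ≤ N₀) fun k hk => ?_
    have e : (fun t => R t * smoothTerm ε ε₂ b R f 0 t) = f := by
      funext t
      exact mul_div_cancel₀ _ (hR0 t)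
    rw [e]
    refine (hfx k).trans ?_
    rw [mul_assoc]
    gcongr
    exact factorial_mul_pow_le hγ₀ (by linarith) (by omega : k ≤ N₀)
  | succ j ih =>
    intro n hn
    set y := smoothTerm ε ε₂ b R f j with hydef
    have hy : ContDiff ℝ (⊤ : ℕ∞) y := contDiff_smoothTerm hb hR hf hR0 j
    have hy' := (contDiff_infty_iff_deriv.1 hy).2
    have hy'' := (contDiff_infty_iff_deriv.1 hy').2
    have key : |iteratedDeriv n (smoothTerm ε ε₂ b R f (j + 1)) x|
        ≤ 2 / γ * (2 / γ * C₀ * q ^ j * (τ ^ 2 + 2 * C₀ * τ)) * Λ ^ n := by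
      refine abs_iteratedDeriv_le_of_mul hC hγ₀ hγ (by positivity) hΛ hθ hθ2 hθγ hθΛ hR
        (contDiff_smoothTerm hb hR hf hR0 (j + 1)) hRx hRγ (by omega : n ≤ N₀) fun k hk => ?_
      have e : (fun t => R t * smoothTerm ε ε₂ b R f (j + 1) t)
          = fun t => ε ^ 2 * deriv (deriv y) t - ε₂ * (b t * deriv y t) := by
        funext t
        exact mul_div_cancel₀ _ (hR0 t)
      have hle : (k : WithTop ℕ∞) ≤ ((⊤ : ℕ∞) : WithTop ℕ∞) := by exact_mod_cast le_top
      rw [e, iteratedDeriv_fun_sub ((contDiff_const.mul hy'').contDiffAt.of_le hle)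
        ((contDiff_const.mul (hb.mul hy')).contDiffAt.of_le hle),
        iteratedDeriv_const_mul_field, iteratedDeriv_const_mul_field,
        ← iteratedDeriv_succ', ← iteratedDeriv_succ']
      have h1 := ih (k + 2) (by omega)
      have h2 := abs_iteratedDeriv_mul_le (x := x) (A := 2 / γ * C₀ * q ^ j * Λ) hC.le hγ₀
        (by positivity) hΛ hNΛ (by omega : k ≤ N₀) hb hy' hbx (fun i hi => by
          rw [← iteratedDeriv_succ']
          have := ih (i + 1) (by omega)
          rwa [pow_succ', ← mul_assoc] at this)
      calc _ ≤ |ε ^ 2 * iteratedDeriv (k + 1 + 1) y x|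
            + |ε₂ * iteratedDeriv k (fun t => b t * deriv y t) x| := abs_sub _ _
        _ ≤ ε ^ 2 * (2 / γ * C₀ * q ^ j * Λ ^ (k + 2))
            + ε * (2 * C₀ * (2 / γ * C₀ * q ^ j * Λ) * Λ ^ k) := by
            rw [abs_mul, abs_mul, abs_of_nonneg hε₂, abs_of_nonneg (sq_nonneg ε)]
            gcongr
        _ = 2 / γ * C₀ * q ^ j * ((ε * Λ) ^ 2 + 2 * C₀ * (ε * Λ)) * Λ ^ k := by ring
        _ ≤ _ := by
            have := mul_nonneg hε hΛ
            gcongr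
    refine key.trans (le_of_eq_of_le (b := 2 / γ * (τ ^ 2 + 2 * C₀ * τ)
      * (2 / γ * C₀ * q ^ j * Λ ^ n)) (by ring) ?_)
    calc _ ≤ q * (2 / γ * C₀ * q ^ j * Λ ^ n) := by gcongr
      _ = _ := by ring

/-- The truncated smooth expansion. -/
def smoothPart (ε ε₂ : ℝ) (b R f : ℝ → ℝ) (k : ℕ) : ℝ → ℝ :=
  fun t => ∑ j ∈ Finset.range k, smoothTerm ε ε₂ b R f j t

theorem contDiff_smoothPart {ε ε₂ : ℝ} {b R f : ℝ → ℝ} (hb : ContDiff ℝ (⊤ : ℕ∞) b)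
    (hR : ContDiff ℝ (⊤ : ℕ∞) R) (hf : ContDiff ℝ (⊤ : ℕ∞) f) (hR0 : ∀ t, R t ≠ 0) (k : ℕ) :
    ContDiff ℝ (⊤ : ℕ∞) (smoothPart ε ε₂ b R f k) :=
  ContDiff.sum fun j _ => contDiff_smoothTerm hb hR hf hR0 j

/-- The residual of the truncated smooth expansion. -/
theorem operator_smoothPart {ε ε₂ : ℝ} {b R f : ℝ → ℝ} (hb : ContDiff ℝ (⊤ : ℕ∞) b)
    (hR : ContDiff ℝ (⊤ : ℕ∞) R) (hf : ContDiff ℝ (⊤ : ℕ∞) f) (hR0 : ∀ t, R t ≠ 0) (k : ℕ)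
    (x : ℝ) :
    -ε ^ 2 * deriv (deriv (smoothPart ε ε₂ b R f (k + 1))) x
      + ε₂ * b x * deriv (smoothPart ε ε₂ b R f (k + 1)) x
      + R x * smoothPart ε ε₂ b R f (k + 1) x
      = f x - R x * smoothTerm ε ε₂ b R f (k + 1) x := by
  have hs : ∀ j, ContDiff ℝ (⊤ : ℕ∞) (smoothTerm ε ε₂ b R f j) :=
    contDiff_smoothTerm hb hR hf hR0
  have d1 : ∀ n, deriv (smoothPart ε ε₂ b R f n)
      = fun t => ∑ j ∈ Finset.range n, deriv (smoothTerm ε ε₂ b R f j) t := by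
    intro n
    funext t
    exact deriv_fun_sum fun j _ => ((hs j).differentiable (by simp)) t
  have d2 : ∀ n, deriv (deriv (smoothPart ε ε₂ b R f n))
      = fun t => ∑ j ∈ Finset.range n, deriv (deriv (smoothTerm ε ε₂ b R f j)) t := by
    intro n
    rw [d1 n]
    funext t
    exact deriv_fun_sum fun j _ =>
      (((contDiff_infty_iff_deriv.1 (hs j)).2).differentiable (by simp)) t
  have hstep : ∀ j, R x * smoothTerm ε ε₂ b R f (j + 1) x
      = ε ^ 2 * deriv (deriv (smoothTerm ε ε₂ b R f j)) x
        - ε₂ * (b x * deriv (smoothTerm ε ε₂ b R f j) x) := fun j =>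
    mul_div_cancel₀ _ (hR0 x)
  have h0 : R x * smoothTerm ε ε₂ b R f 0 x = f x := mul_div_cancel₀ _ (hR0 x)
  rw [d2, d1]
  simp only [smoothPart]
  induction k with
  | zero =>
    have := hstep 0
    simp only [zero_add, Finset.sum_range_one] at this ⊢
    linarith
  | succ k ih =>
    have := hstep (k + 1)
    simp only [Finset.sum_range_succ _ (k + 1)]
    linarith

/-- Bounds for the truncated smooth expansion. -/
theorem abs_iteratedDeriv_smoothPart_le {ε ε₂ W q Λ x : ℝ} {b R f : ℝ → ℝ} {n k : ℕ}
    (hb : ContDiff ℝ (⊤ : ℕ∞) b)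
    (hR : ContDiff ℝ (⊤ : ℕ∞) R) (hf : ContDiff ℝ (⊤ : ℕ∞) f) (hR0 : ∀ t, R t ≠ 0)
    (hW : 0 ≤ W) (hΛ : 0 ≤ Λ) (hq0 : 0 ≤ q) (hq : q ≤ 1 / 2)
    (h : ∀ j < k, |iteratedDeriv n (smoothTerm ε ε₂ b R f j) x| ≤ W * q ^ j * Λ ^ n) :
    |iteratedDeriv n (smoothPart ε ε₂ b R f k) x| ≤ 2 * W * Λ ^ n := by
  have hle : (n : WithTop ℕ∞) ≤ ((⊤ : ℕ∞) : WithTop ℕ∞) := by exact_mod_cast le_top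
  have e : iteratedDeriv n (smoothPart ε ε₂ b R f k) x
      = ∑ j ∈ Finset.range k, iteratedDeriv n (smoothTerm ε ε₂ b R f j) x := by
    unfold smoothPart
    exact iteratedDeriv_fun_sum fun j _ =>
      (contDiff_smoothTerm hb hR hf hR0 j).contDiffAt.of_le hle
  rw [e]
  calc _ ≤ ∑ j ∈ Finset.range k, |iteratedDeriv n (smoothTerm ε ε₂ b R f j) x| :=
        Finset.abs_sum_le_sum_abs _ _
    _ ≤ ∑ j ∈ Finset.range k, W * Λ ^ n * (1 / 2 : ℝ) ^ j := by
        refine Finset.sum_le_sum fun j hj => (h j (Finset.mem_range.1 hj)).trans ?_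
        rw [mul_right_comm]
        gcongr
    _ = W * Λ ^ n * ∑ j ∈ Finset.range k, (1 / 2 : ℝ) ^ j := by rw [Finset.mul_sum]
    _ ≤ W * Λ ^ n * 2 := by
        gcongr
        exact sum_geometric_two_le _
    _ = _ := by ring

/-- A function positive on `[0, 1]` agrees there with a positive smooth function. -/
theorem exists_positive_extension {r : ℝ → ℝ} (hr : ContDiff ℝ (⊤ : ℕ∞) r)
    (hpos : ∀ x ∈ Icc (0 : ℝ) 1, 0 < r x) :
    ∃ R : ℝ → ℝ, ContDiff ℝ (⊤ : ℕ∞) R ∧ (∀ t, 0 < R t) ∧ ∀ x ∈ Icc (0 : ℝ) 1, R x = r x := by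
  have hopen : IsOpen {x | 0 < r x} := isOpen_lt continuous_const hr.continuous
  obtain ⟨δ, hδ, hsub⟩ := isCompact_Icc.exists_thickening_subset_open hopen
    (fun x hx => hpos x hx : Icc (0 : ℝ) 1 ⊆ {x | 0 < r x})
  let φ : ContDiffBump (1 / 2 : ℝ) := ⟨1 / 2, 1 / 2 + δ, by norm_num, by linarith⟩
  refine ⟨fun t => φ t * r t + (1 - φ t), ?_, fun t => ?_, fun x hx => ?_⟩
  · exact (φ.contDiff.mul hr).add (contDiff_const.sub φ.contDiff)
  · show 0 < φ t * r t + (1 - φ t)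
    have h0 : 0 ≤ φ t := φ.nonneg
    have h1 : φ t ≤ 1 := φ.le_one
    by_cases ht : t ∈ Metric.ball (1 / 2 : ℝ) (1 / 2 + δ)
    · have hr0 : 0 < r t := by
        refine hsub ?_
        rw [Metric.mem_thickening_iff]
        rw [Metric.mem_ball, Real.dist_eq, abs_lt] at ht
        rcases le_total t 0 with h | h
        · exact ⟨0, by simp, by rw [Real.dist_eq, abs_lt]; constructor <;> linarith [ht.1]⟩
        rcases le_total t 1 with h' | h'
        · exact ⟨t, ⟨h, h'⟩, by simpa using hδ⟩
        · exact ⟨1, by simp, by rw [Real.dist_eq, abs_lt]; constructor <;> linarith [ht.2]⟩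
      rcases h0.eq_or_lt with h | h
      · rw [← h]; simp
      · nlinarith [mul_pos h hr0]
    · have : φ t = 0 := φ.zero_of_le_dist (not_lt.1 ht)
      rw [this]; simp
  · show φ x * r x + (1 - φ x) = r x
    have : φ x = 1 := φ.one_of_mem_closedBall (by
      rw [Metric.mem_closedBall, Real.dist_eq, abs_le]
      constructor
      · show -(1 / 2 : ℝ) ≤ _
        linarith [hx.1]
      · show _ ≤ (1 / 2 : ℝ)
        linarith [hx.2])
    rw [this]; simp

/-- Smooth functions agreeing on `[0, 1]` have the same derivatives there. -/
theorem iteratedDeriv_eq_of_eq_on {g h : ℝ → ℝ} (hg : ContDiff ℝ (⊤ : ℕ∞) g)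
    (hh : ContDiff ℝ (⊤ : ℕ∞) h) (he : ∀ x ∈ Icc (0 : ℝ) 1, g x = h x) (n : ℕ) {x : ℝ}
    (hx : x ∈ Icc (0 : ℝ) 1) : iteratedDeriv n g x = iteratedDeriv n h x := by
  have hle : (n : WithTop ℕ∞) ≤ ((⊤ : ℕ∞) : WithTop ℕ∞) := by exact_mod_cast le_top
  have := iteratedDeriv_eq_zero_of_eq_zero_on n (fun t => g t - h t) (hg.sub hh)
    (fun t ht => sub_eq_zero.2 (he t ht)) x hx
  rw [iteratedDeriv_fun_sub (hg.contDiffAt.of_le hle) (hh.contDiffAt.of_le hle)] at this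
  linarith

/-- Analytic data of a reaction-dominated problem, with common constants. -/
structure DataBounds (b r f : ℝ → ℝ) (C₀ γ₀ γ : ℝ) : Prop where
  smooth_b : ContDiff ℝ (⊤ : ℕ∞) b
  smooth_r : ContDiff ℝ (⊤ : ℕ∞) r
  smooth_f : ContDiff ℝ (⊤ : ℕ∞) f
  one_le_C : 1 ≤ C₀
  one_le_rate : 1 ≤ γ₀
  pos : 0 < γ
  b_le : ∀ k, ∀ x ∈ Icc (0 : ℝ) 1, |iteratedDeriv k b x| ≤ C₀ * k.factorial * γ₀ ^ k
  r_le : ∀ k, ∀ x ∈ Icc (0 : ℝ) 1, |iteratedDeriv k r x| ≤ C₀ * k.factorial * γ₀ ^ k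
  f_le : ∀ k, ∀ x ∈ Icc (0 : ℝ) 1, |iteratedDeriv k f x| ≤ C₀ * k.factorial * γ₀ ^ k
  le_r : ∀ x ∈ Icc (0 : ℝ) 1, γ ≤ r x

namespace DataBounds

variable {b r f : ℝ → ℝ} {C₀ γ₀ γ : ℝ}

theorem abs_b_le (h : DataBounds b r f C₀ γ₀ γ) {x : ℝ} (hx : x ∈ Icc (0 : ℝ) 1) :
    |b x| ≤ C₀ := by simpa using h.b_le 0 x hx

theorem abs_r_le (h : DataBounds b r f C₀ γ₀ γ) {x : ℝ} (hx : x ∈ Icc (0 : ℝ) 1) :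
    |r x| ≤ C₀ := by simpa using h.r_le 0 x hx

theorem abs_f_le (h : DataBounds b r f C₀ γ₀ γ) {x : ℝ} (hx : x ∈ Icc (0 : ℝ) 1) :
    |f x| ≤ C₀ := by simpa using h.f_le 0 x hx

/-- A weighted derivative bound from a bound on the function and on its image under the
differential operator. -/
theorem deriv_le (h : DataBounds b r f C₀ γ₀ γ) {ε ε₂ s Y ρ : ℝ} {v : ℝ → ℝ}
    (hε : 0 < ε) (hε1 : ε ≤ 1) (hε₂ : 0 ≤ ε₂) (hεε : ε₂ ≤ ε) (hs : 0 ≤ s) (hs4 : s ≤ 1 / 4)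
    (hv : ContDiff ℝ (⊤ : ℕ∞) v) (hρ : 0 ≤ ρ) (hY0 : 0 ≤ Y)
    (hY : ∀ x ∈ Icc s (1 - s), |v x| ≤ Y)
    (hL : ∀ x ∈ Icc s (1 - s),
      |-ε ^ 2 * deriv (deriv v) x + ε₂ * b x * deriv v x + r x * v x| ≤ ρ) :
    ∀ x ∈ Icc s (1 - s), ε * |deriv v x| ≤ (8 * C₀ + 1) * Y + ρ := by
  have hC := h.one_le_C
  have hC0 : 0 < C₀ := by linarith
  have hv' := (contDiff_infty_iff_deriv.1 hv).2
  have key := deriv_bound_of_second_order (a := s) (b := 1 - s) (δ := 1 / (2 * C₀)) (B := C₀)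
    (Y := Y) (F := C₀ * Y + ρ) hε (by positivity) (le_of_eq (by field_simp))
    (by
      have : 1 / (2 * C₀) ≤ 1 / 2 := by gcongr; linarith
      have h2 : 1 / (2 * C₀) * ε ≤ 1 / 2 * 1 := by gcongr
      linarith)
    (fun x => ((hv.differentiable (by simp)) x).hasDerivAt)
    (fun x => ((hv'.differentiable (by simp)) x).hasDerivAt) hC0.le (by positivity) hY
    (fun x hx => by
      have hx1 : x ∈ Icc (0 : ℝ) 1 := ⟨by linarith [hx.1], by linarith [hx.2]⟩
      rw [← abs_of_pos (by positivity : 0 < ε ^ 2), ← abs_mul]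
      have e : ε ^ 2 * deriv (deriv v) x = ε₂ * b x * deriv v x + r x * v x
          - (-ε ^ 2 * deriv (deriv v) x + ε₂ * b x * deriv v x + r x * v x) := by ring
      rw [e]
      calc _ ≤ |ε₂ * b x * deriv v x| + |r x * v x|
            + |-ε ^ 2 * deriv (deriv v) x + ε₂ * b x * deriv v x + r x * v x| :=
            (abs_sub _ _).trans (add_le_add_left (abs_add_le _ _) _)
        _ ≤ ε * C₀ * |deriv v x| + C₀ * Y + ρ := by
            rw [abs_mul, abs_mul, abs_mul, abs_of_nonneg hε₂]
            have h1 := h.abs_b_le hx1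
            have h2 := h.abs_r_le hx1
            have h3 := hY x hx
            have h4 := hL x hx
            gcongr
        _ = _ := by ring)
  intro x hx
  refine (key x hx).trans ?_
  have e : 4 * Y / (1 / (2 * C₀)) + 2 * (1 / (2 * C₀)) * (C₀ * Y + ρ)
      = (8 * C₀ + 1) * Y + ρ / C₀ := by field_simp; ring
  rw [e]
  have : ρ / C₀ ≤ ρ := div_le_self hρ hC
  linarith

/-- Uniform a priori bounds for the solution and its weighted derivative. -/
theorem exists_solution_bound (h : DataBounds b r f C₀ γ₀ γ) :
    ∃ M : ℝ, 1 ≤ M ∧ ∀ (ε ε₂ : ℝ) (u : ℝ → ℝ), 0 < ε → ε ≤ 1 → 0 ≤ ε₂ → ε₂ ≤ ε →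
      ContDiff ℝ (⊤ : ℕ∞) u → SolvesBVP (ε ^ 2) ε₂ b r f u →
      ∀ x ∈ Icc (0 : ℝ) 1, |u x| ≤ M ∧ ε * |deriv u x| ≤ M := by
  have hC := h.one_le_C
  have hγ := h.pos
  have hC0 : 0 < C₀ := by linarith
  refine ⟨1 + C₀ / γ + ((8 * C₀ + 1) * (C₀ / γ) + C₀), ?_, ?_⟩
  · have : 0 ≤ C₀ / γ + ((8 * C₀ + 1) * (C₀ / γ) + C₀) := by positivity
    linarith
  intro ε ε₂ u hε hε1 hε₂ hεε hu hbvp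
  have hL : ∀ x ∈ Icc (0 : ℝ) 1,
      |-ε ^ 2 * deriv (deriv u) x + ε₂ * b x * deriv u x + r x * u x| ≤ C₀ := fun x hx => by
    rw [hbvp.2.2 x hx]; exact h.abs_f_le hx
  have h1 : ∀ x ∈ Icc (0 : ℝ) 1, |u x| ≤ C₀ / γ := by
    have := abs_le_of_barrier (y := u) (b := b) (R := r) (B := C₀) (α := 0) (ρ := C₀) (V := 0)
      hε hε₂ hεε hγ le_rfl (by simpa using hγ.le) hC0.le le_rfl hu (fun x hx => h.abs_b_le hx)
      h.le_r hL (by simp [hbvp.1]) (by simp [hbvp.2.1])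
    simpa using this
  have h2 := h.deriv_le (s := 0) (Y := C₀ / γ) hε hε1 hε₂ hεε le_rfl (by norm_num) hu hC0.le
    (by positivity) (by simpa using h1) (by simpa using hL)
  intro x hx
  have h3 := h2 x (by simpa using hx)
  have : 0 ≤ C₀ / γ := by positivity
  have : 0 ≤ (8 * C₀ + 1) * (C₀ / γ) := by positivity
  constructor
  · linarith [h1 x hx]
  · linarith

/-- Decomposition of the solution into a smooth part and a boundary layer remainder. -/
theorem exists_decomposition (h : DataBounds b r f C₀ γ₀ γ) :
    ∃ K τ α C : ℝ, 0 < K ∧ 0 < τ ∧ 0 < α ∧ 0 < C ∧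
      ∀ (ε ε₂ : ℝ) (u : ℝ → ℝ), 0 < ε → ε ≤ 1 → 0 ≤ ε₂ → ε₂ ≤ ε →
      ContDiff ℝ (⊤ : ℕ∞) u → SolvesBVP (ε ^ 2) ε₂ b r f u →
      ∀ k : ℕ, ε * (K * (3 * k + 4)) ≤ τ →
      ∃ w : ℝ → ℝ, ContDiff ℝ (⊤ : ℕ∞) w ∧
        (∀ x ∈ Icc (0 : ℝ) 1, ∀ n ≤ k + 2,
          |iteratedDeriv n w x| ≤ C * (K * (3 * k + 4)) ^ n) ∧
        ∀ s : ℝ, 0 ≤ s → s ≤ 1 / 4 → ∀ x ∈ Icc s (1 - s),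
          |u x - w x| ≤ C * (Real.exp (-k) + Real.exp (-(α * s / ε))) ∧
          ε * |deriv u x - deriv w x| ≤ C * (Real.exp (-k) + Real.exp (-(α * s / ε))) := by
  have hC := h.one_le_C
  have hγ := h.pos
  have hγ₀ := h.one_le_rate
  have hC0 : 0 < C₀ := by linarith
  set q := Real.exp (-1) with hq
  have hq0 : 0 < q := Real.exp_pos _
  have hq2 : q ≤ 1 / 2 := by
    rw [hq, Real.exp_neg, one_div]
    have := Real.add_one_le_exp (1 : ℝ)
    exact inv_anti₀ (by norm_num) (by linarith)
  set θ := min (1 / 2) (γ / (4 * C₀)) with hθ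
  have hθ0 : 0 < θ := lt_min (by norm_num) (by positivity)
  have hθ2 : θ ≤ 1 / 2 := min_le_left _ _
  have hθγ : 4 * C₀ * θ ≤ γ := by
    have : θ ≤ γ / (4 * C₀) := min_le_right _ _
    rw [le_div_iff₀ (by positivity)] at this
    linarith
  set τ := min 1 (γ * q / (6 * C₀)) with hτ
  have hτ0 : 0 < τ := lt_min (by norm_num) (by positivity)
  have hτ1 : τ ≤ 1 := min_le_left _ _
  have hτq : 2 / γ * (τ ^ 2 + 2 * C₀ * τ) ≤ q := by
    have h1 : τ ≤ γ * q / (6 * C₀) := min_le_right _ _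
    rw [le_div_iff₀ (by positivity)] at h1
    have h2 : 2 * (τ ^ 2 + 2 * C₀ * τ) ≤ q * γ := by nlinarith
    rw [div_mul_eq_mul_div, div_le_iff₀ hγ]
    exact h2
  set α := min 1 (γ / (C₀ + 1)) with hα
  have hα0 : 0 < α := lt_min (by norm_num) (by positivity)
  have hαγ : α ^ 2 + C₀ * α ≤ γ := by
    have h1 : α ≤ 1 := min_le_left _ _
    have h2 : α ≤ γ / (C₀ + 1) := min_le_right _ _
    rw [le_div_iff₀ (by positivity)] at h2
    nlinarith
  set W := 2 / γ * C₀ with hW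
  have hW0 : 0 < W := by positivity
  set C₁ := C₀ * W / γ + 4 * W with hC₁
  have hC₁0 : 0 < C₁ := by positivity
  refine ⟨γ₀ / θ, τ, α, 2 * W + C₁ + ((8 * C₀ + 1) * C₁ + C₀ * W), by positivity, hτ0, hα0,
    by positivity, ?_⟩
  intro ε ε₂ u hε hε1 hε₂ hεε hu hbvp k hk
  set Λ := γ₀ / θ * (3 * k + 4) with hΛ
  have hΛ0 : 0 < Λ := by positivity
  obtain ⟨R, hRs, hRpos, hRr⟩ := exists_positive_extension h.smooth_r
    fun x hx => hγ.trans_le (h.le_r x hx)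
  have hR0 : ∀ t, R t ≠ 0 := fun t => (hRpos t).ne'
  have hterm : ∀ x ∈ Icc (0 : ℝ) 1, ∀ j n, n + 2 * j ≤ 3 * k + 4 →
      |iteratedDeriv n (smoothTerm ε ε₂ b R f j) x| ≤ W * q ^ j * Λ ^ n := fun x hx j n hn =>
    abs_iteratedDeriv_smoothTerm_le (N₀ := 3 * k + 4) (θ := θ) (τ := τ) hC0 (by linarith) hγ
      hε.le hε₂ hεε hΛ0.le hθ0.le hθ2 hθγ
      (le_of_eq (by rw [hΛ]; push_cast; field_simp)) hk hτq h.smooth_b hRs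
      h.smooth_f hR0 (by rw [hRr x hx]; exact h.le_r x hx) (fun i => h.b_le i x hx)
      (fun i => by
        rw [iteratedDeriv_eq_of_eq_on hRs h.smooth_r hRr i hx]
        exact h.r_le i x hx)
      (fun i => h.f_le i x hx) j n hn
  set w := smoothPart ε ε₂ b R f (k + 1) with hw
  have hws : ContDiff ℝ (⊤ : ℕ∞) w := contDiff_smoothPart h.smooth_b hRs h.smooth_f hR0 _
  have hwb : ∀ x ∈ Icc (0 : ℝ) 1, ∀ n ≤ k + 2, |iteratedDeriv n w x| ≤ 2 * W * Λ ^ n :=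
    fun x hx n hn => abs_iteratedDeriv_smoothPart_le h.smooth_b hRs h.smooth_f hR0 hW0.le hΛ0.le
      hq0.le hq2 fun j hj => hterm x hx j n (by omega)
  have hqk : q ^ k = Real.exp (-k) := by
    rw [hq, ← Real.exp_nat_mul]; congr 1; ring
  have hres : ∀ x ∈ Icc (0 : ℝ) 1, |R x * smoothTerm ε ε₂ b R f (k + 1) x|
      ≤ C₀ * W * Real.exp (-k) := by
    intro x hx
    have h1 := hterm x hx (k + 1) 0 (by omega)
    rw [iteratedDeriv_zero, pow_zero, mul_one] at h1
    rw [abs_mul, hRr x hx, ← hqk, mul_assoc]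
    have h2 := h.abs_r_le hx
    have h3 : W * q ^ (k + 1) ≤ W * q ^ k := by
      gcongr ?_ * ?_
      exact pow_le_pow_of_le_one hq0.le (by linarith) (by omega)
    gcongr
    exact h1.trans h3
  have hus : ContDiff ℝ (⊤ : ℕ∞) (fun t => u t - w t) := hu.sub hws
  have d1 : deriv (fun t => u t - w t) = fun t => deriv u t - deriv w t := by
    funext t
    exact deriv_fun_sub ((hu.differentiable (by simp)) t) ((hws.differentiable (by simp)) t)
  have d2 : deriv (deriv (fun t => u t - w t))
      = fun t => deriv (deriv u) t - deriv (deriv w) t := by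
    rw [d1]
    funext t
    exact deriv_fun_sub (((contDiff_infty_iff_deriv.1 hu).2.differentiable (by simp)) t)
      (((contDiff_infty_iff_deriv.1 hws).2.differentiable (by simp)) t)
  have hL : ∀ x ∈ Icc (0 : ℝ) 1, |-ε ^ 2 * deriv (deriv (fun t => u t - w t)) x
      + ε₂ * b x * deriv (fun t => u t - w t) x + r x * (u x - w x)|
        ≤ C₀ * W * Real.exp (-k) := by
    intro x hx
    have h1 := operator_smoothPart (ε := ε) (ε₂ := ε₂) h.smooth_b hRs h.smooth_f hR0 k x
    rw [← hw] at h1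
    have h2 := hbvp.2.2 x hx
    have h3 := hres x hx
    rw [d2, d1]
    refine le_of_eq_of_le (congrArg _ ?_) h3
    rw [hRr x hx] at h1 ⊢
    simp only
    linarith
  have hw0 : ∀ x ∈ Icc (0 : ℝ) 1, |w x| ≤ 2 * W := fun x hx => by
    simpa using hwb x hx 0 (by omega)
  have hbar := abs_le_of_barrier (y := fun t => u t - w t) (b := b) (R := r) (B := C₀) (α := α)
    (ρ := C₀ * W * Real.exp (-k)) (V := 2 * W) hε hε₂ hεε hγ hα0.le hαγ (by positivity)
    (by positivity) hus (fun x hx => h.abs_b_le hx) h.le_r hL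
    (by simpa [hbvp.1] using hw0 0 (by simp)) (by simpa [hbvp.2.1] using hw0 1 (by simp))
  refine ⟨w, hws, fun x hx n hn => (hwb x hx n hn).trans ?_, fun s hs hs4 => ?_⟩
  · have : 0 ≤ C₁ + ((8 * C₀ + 1) * C₁ + C₀ * W) := by positivity
    have h2 : 0 ≤ Λ ^ n := by positivity
    nlinarith [mul_nonneg this h2]
  set E := Real.exp (-k) + Real.exp (-(α * s / ε)) with hE
  have hE0 : 0 < E := by positivity
  have hY : ∀ x ∈ Icc s (1 - s), |u x - w x| ≤ C₁ * E := by
    intro x hx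
    have hx1 : x ∈ Icc (0 : ℝ) 1 := ⟨by linarith [hx.1], by linarith [hx.2]⟩
    refine (hbar x hx1).trans ?_
    have e1 : Real.exp (-(α / ε) * x) ≤ Real.exp (-(α * s / ε)) := by
      apply Real.exp_le_exp.2
      have : α / ε * s ≤ α / ε * x := by gcongr; exact hx.1
      rw [show α * s / ε = α / ε * s by ring]; linarith
    have e2 : Real.exp (-(α / ε) * (1 - x)) ≤ Real.exp (-(α * s / ε)) := by
      apply Real.exp_le_exp.2
      have : α / ε * s ≤ α / ε * (1 - x) := by gcongr; linarith [hx.2]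
      rw [show α * s / ε = α / ε * s by ring]; linarith
    calc _ ≤ C₀ * W * Real.exp (-k) / γ
          + 2 * W * (Real.exp (-(α * s / ε)) + Real.exp (-(α * s / ε))) := by gcongr
      _ = C₀ * W / γ * Real.exp (-k) + 4 * W * Real.exp (-(α * s / ε)) := by ring
      _ ≤ C₀ * W / γ * E + 4 * W * E := by
          have h1 : Real.exp (-k) ≤ E := le_add_of_nonneg_right (Real.exp_nonneg _)
          have h2 : Real.exp (-(α * s / ε)) ≤ E := le_add_of_nonneg_left (Real.exp_nonneg _)
          gcongr
      _ = _ := by rw [hC₁]; ring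
  have hkE : C₀ * W * Real.exp (-k) ≤ C₀ * W * E := by
    gcongr
    exact le_add_of_nonneg_right (Real.exp_nonneg _)
  have hD := h.deriv_le (s := s) (Y := C₁ * E) (ρ := C₀ * W * E) hε hε1 hε₂ hεε hs hs4 hus
    (by positivity) (by positivity) hY
    (fun x hx => (hL x ⟨by linarith [hx.1], by linarith [hx.2]⟩).trans hkE)
  rw [d1] at hD
  intro x hx
  have p1 : 0 ≤ W * E := by positivity
  have p2 : 0 ≤ C₁ * E := by positivity
  have p3 : 0 ≤ C₀ * W * E := by positivity
  have p4 : 0 ≤ (8 * C₀ + 1) * (C₁ * E) := by positivity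
  constructor
  · refine (hY x hx).trans ?_
    linarith
  · refine (hD x hx).trans ?_
    linarith

end DataBounds

/-- `y` has on the cell `[a, b]` a polynomial approximation of degree at most `p`, exact at the
end points, with error at most `η` in the maximum norm and in the `ε`-weighted derivative. -/
def CellApprox (y : ℝ → ℝ) (ε a b : ℝ) (p : ℕ) (η : ℝ) : Prop :=
  ∃ Q : Polynomial ℝ, Q.natDegree ≤ p ∧ Q.eval a = y a ∧ Q.eval b = y b ∧
    ∀ x ∈ Icc a b, |y x - Q.eval x| ≤ η ∧ ε * |deriv y x - Q.derivative.eval x| ≤ η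

theorem CellApprox.mono {y : ℝ → ℝ} {ε a b η η' : ℝ} {p : ℕ} (h : CellApprox y ε a b p η)
    (hη : η ≤ η') : CellApprox y ε a b p η' := by
  obtain ⟨Q, hd, ha, hb, hQ⟩ := h
  exact ⟨Q, hd, ha, hb, fun x hx => ⟨(hQ x hx).1.trans hη, (hQ x hx).2.trans hη⟩⟩

theorem CellApprox.of_add {u w : ℝ → ℝ} {ε a b η η' : ℝ} {p : ℕ} (hε : 0 ≤ ε)
    (hu : ContDiff ℝ (⊤ : ℕ∞) u) (hw : ContDiff ℝ (⊤ : ℕ∞) w)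
    (h : CellApprox w ε a b p η) (h' : CellApprox (fun t => u t - w t) ε a b p η') :
    CellApprox u ε a b p (η + η') := by
  obtain ⟨Q, hd, ha, hb, hQ⟩ := h
  obtain ⟨P, hd', ha', hb', hP⟩ := h'
  refine ⟨Q + P, Polynomial.natDegree_add_le_of_degree_le hd hd', ?_, ?_, fun x hx => ⟨?_, ?_⟩⟩
  · rw [Polynomial.eval_add, ha, ha']; ring
  · rw [Polynomial.eval_add, hb, hb']; ring
  · rw [Polynomial.eval_add, show u x - (Q.eval x + P.eval x)
      = (w x - Q.eval x) + (u x - w x - P.eval x) by ring]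
    exact (abs_add_le _ _).trans (add_le_add (hQ x hx).1 (hP x hx).1)
  · have d : deriv (fun t => u t - w t) x = deriv u x - deriv w x :=
      deriv_fun_sub ((hu.differentiable (by simp)) x) ((hw.differentiable (by simp)) x)
    have h2 := (hP x hx).2
    rw [d] at h2
    rw [Polynomial.derivative_add, Polynomial.eval_add,
      show deriv u x - (Q.derivative.eval x + P.derivative.eval x)
      = (deriv w x - Q.derivative.eval x) + (deriv u x - deriv w x - P.derivative.eval x) by ring]
    calc _ ≤ ε * (|deriv w x - Q.derivative.eval x|
          + |deriv u x - deriv w x - P.derivative.eval x|) := by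
          gcongr; exact abs_add_le _ _
      _ ≤ _ := by rw [mul_add]; exact add_le_add (hQ x hx).2 h2

/-- Linear interpolation. -/
theorem CellApprox.of_bound {y : ℝ → ℝ} {ε a b Y : ℝ} {p : ℕ} (hab : a < b) (hp : 1 ≤ p)
    (hε : 0 ≤ ε) (hy : ContDiff ℝ (⊤ : ℕ∞) y) (hY : ∀ x ∈ Icc a b, |y x| ≤ Y)
    (hY' : ∀ x ∈ Icc a b, ε * |deriv y x| ≤ Y) : CellApprox y ε a b p (2 * Y) := by
  obtain ⟨Q, ξ, hd, ha, hb, hξ, hQ', hQ⟩ := exists_linear_interpolant hab y (deriv y)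
    (fun x _ => ((hy.differentiable (by simp)) x).hasDerivAt)
  refine ⟨Q, hd.trans hp, ha, hb, fun x hx => ⟨?_, ?_⟩⟩
  · have h1 := hQ x hx Y (hY a (left_mem_Icc.2 hab.le)) (hY b (right_mem_Icc.2 hab.le))
    linarith [abs_sub (y x) (Q.eval x), hY x hx]
  · rw [hQ']
    have h1 := hY' x hx
    have h2 := hY' ξ (Ioo_subset_Icc_self hξ)
    have h3 := mul_le_mul_of_nonneg_left (abs_sub (deriv y x) (deriv y ξ)) hε
    linarith

/-- Exponentially accurate approximation of functions with bounded derivatives on the length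
scale `Λ⁻¹`. -/
theorem CellApprox.of_scale {y : ℝ → ℝ} {ε a b M Λ K : ℝ} {k p : ℕ} (hab : a < b)
    (hε : 0 ≤ ε) (hy : ContDiff ℝ (⊤ : ℕ∞) y) (hM : 0 ≤ M) (hΛ : 0 ≤ Λ) (hK : 0 ≤ K)
    (hA : ∀ x ∈ Icc a b, |iteratedDeriv (k + 2) y x| ≤ M * Λ ^ (k + 2))
    (hlen : (b - a) * Λ * Real.exp 1 ≤ p) (hεΛ : ε * Λ ≤ K * p) (hkp : 2 * k + 2 ≤ p) :
    CellApprox y ε a b p (Real.pi * M * (1 + K) * (p : ℝ) ^ 2 * Real.exp (-k)) := by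
  obtain ⟨Q, hd, ha, hb, hQ', hQ⟩ := exists_poly_approx hab y hy k p (by omega) _ hA
  have hkp' : 2 * (k : ℝ) + 2 ≤ p := by exact_mod_cast hkp
  have hp : (0 : ℝ) < p := by have : (0 : ℝ) ≤ k := by positivity
                              linarith
  have hh : 0 < b - a := sub_pos.2 hab
  have hhΛ : (b - a) * Λ ≤ p := by
    have h1 : (1 : ℝ) ≤ Real.exp 1 := Real.one_le_exp (by norm_num)
    have h2 : 0 ≤ (b - a) * Λ := by positivity
    nlinarith
  have hpow : ((b - a) / (2 * ((p : ℝ) - 1 - k))) ^ k * Λ ^ k ≤ Real.exp (-k) := by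
    rw [← mul_pow, show (-(k : ℝ)) = k * (-1 : ℝ) by ring, Real.exp_nat_mul]
    have hpos : 0 < 2 * ((p : ℝ) - 1 - k) := by
      have : (0 : ℝ) ≤ k := by positivity
      linarith
    refine pow_le_pow_left₀ (by positivity) ?_ k
    calc (b - a) / (2 * ((p : ℝ) - 1 - k)) * Λ ≤ (b - a) / p * Λ := by
          gcongr; linarith
      _ ≤ Real.exp (-1) := by
          rw [Real.exp_neg, div_mul_eq_mul_div, div_le_iff₀ hp, inv_mul_eq_div,
            le_div_iff₀ (Real.exp_pos 1)]
          exact hlen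
  set X := ((b - a) / (2 * ((p : ℝ) - 1 - k))) ^ k with hX
  have hX0 : 0 ≤ X := by
    have : 0 < 2 * ((p : ℝ) - 1 - k) := by
      have : (0 : ℝ) ≤ k := by positivity
      linarith
    positivity
  refine ⟨Q, hd, ha, hb, fun x hx => ⟨(hQ x hx).trans ?_, ?_⟩⟩
  · calc Real.pi * (b - a) ^ 2 * X * (M * Λ ^ (k + 2))
        = Real.pi * M * ((b - a) * Λ) ^ 2 * (X * Λ ^ k) := by ring
      _ ≤ Real.pi * M * (p : ℝ) ^ 2 * Real.exp (-k) := by gcongr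
      _ = Real.pi * M * 1 * (p : ℝ) ^ 2 * Real.exp (-k) := by ring
      _ ≤ _ := by gcongr; linarith
  · calc ε * |deriv y x - Q.derivative.eval x|
        ≤ ε * (Real.pi * (b - a) * X * (M * Λ ^ (k + 2))) :=
          mul_le_mul_of_nonneg_left (hQ' x hx) hε
      _ = Real.pi * M * ((b - a) * Λ) * (ε * Λ) * (X * Λ ^ k) := by ring
      _ ≤ Real.pi * M * p * (K * p) * Real.exp (-k) := by gcongr
      _ = Real.pi * M * K * (p : ℝ) ^ 2 * Real.exp (-k) := by ring
      _ ≤ _ := by gcongr; linarith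

set_option maxHeartbeats 1000000 in
/-- Robust exponential approximability of the solution on the cells of the Spectral Boundary
Layer mesh. -/
theorem DataBounds.exists_cellApprox {b r f : ℝ → ℝ} {C₀ γ₀ γ : ℝ}
    (h : DataBounds b r f C₀ γ₀ γ) :
    ∃ κ δ C : ℝ, 0 < κ ∧ 0 < δ ∧ 0 < C ∧
      ∀ (ε ε₂ : ℝ) (u : ℝ → ℝ), 0 < ε → ε ≤ 1 → 0 ≤ ε₂ → ε₂ ≤ ε →
      ContDiff ℝ (⊤ : ℕ∞) u → SolvesBVP (ε ^ 2) ε₂ b r f u → ∀ p : ℕ, 1 ≤ p →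
      (1 / 2 ≤ κ * p * ε ^ 2 →
        CellApprox u ε 0 1 p (C * (p : ℝ) ^ 2 * Real.exp (-δ * p))) ∧
      (κ * p * ε < 1 / 2 →
        CellApprox u ε 0 (κ * p * ε) p (C * (p : ℝ) ^ 2 * Real.exp (-δ * p)) ∧
        CellApprox u ε (κ * p * ε) (1 - κ * p * ε) p (C * (p : ℝ) ^ 2 * Real.exp (-δ * p)) ∧
        CellApprox u ε (1 - κ * p * ε) 1 p (C * (p : ℝ) ^ 2 * Real.exp (-δ * p))) := by
  obtain ⟨M, hM1, hM⟩ := h.exists_solution_bound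
  obtain ⟨Kw, τ, α, Cw, hKw, hτ, hα, hCw, hdec⟩ := h.exists_decomposition
  have hC := h.one_le_C
  have hγ₀ := h.one_le_rate
  set K := 5 * C₀ + 1 with hK
  have hK0 : 0 < K := by linarith
  set κ := 1 / (12 * K) with hκ
  have hκ0 : 0 < κ := by positivity
  have hκK : κ * K = 1 / 12 := by rw [hκ]; field_simp
  obtain ⟨δ, hδ0, hδ4, hδγ, hδw, hδτ, hδα⟩ : ∃ δ : ℝ, 0 < δ ∧ δ ≤ 1 / 4 ∧ δ ≤ 1 / (12 * γ₀) ∧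
      δ ≤ 1 / (12 * Kw) ∧ δ ≤ κ * τ / (2 * Kw) ∧ δ ≤ α * κ / 2 := by
    refine ⟨min (min (1 / 4) (1 / (12 * γ₀))) (min (1 / (12 * Kw))
      (min (κ * τ / (2 * Kw)) (α * κ / 2))), ?_, ?_, ?_, ?_, ?_, ?_⟩
    · have : 0 < γ₀ := by linarith
      refine lt_min (lt_min (by norm_num) (by positivity)) (lt_min (by positivity)
        (lt_min (by positivity) (by positivity)))
    · exact (min_le_left _ _).trans (min_le_left _ _)
    · exact (min_le_left _ _).trans (min_le_right _ _)
    · exact (min_le_right _ _).trans (min_le_left _ _)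
    · exact (min_le_right _ _).trans ((min_le_right _ _).trans (min_le_left _ _))
    · exact (min_le_right _ _).trans ((min_le_right _ _).trans (min_le_right _ _))
  rw [le_div_iff₀ (by positivity)] at hδγ hδw hδτ
  set Cu := Real.pi * M * (1 + (K + 1)) * Real.exp 1 with hCu
  set Cm := (Real.pi * Cw * (1 + τ) + 4 * Cw) * Real.exp 1 with hCm
  set Cl := 2 * M * Real.exp 4 with hCl
  have hCu0 : 0 < Cu := by positivity
  have hCm0 : 0 < Cm := by positivity
  have hCl0 : 0 < Cl := by positivity
  refine ⟨κ, δ, Cu + Cm + Cl, hκ0, hδ0, by positivity, ?_⟩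
  intro ε ε₂ u hε hε1 hε₂ hεε hu hbvp p hp
  have hub := hM ε ε₂ u hε hε1 hε₂ hεε hu hbvp
  have hp1 : (1 : ℝ) ≤ p := by exact_mod_cast hp
  have hp0 : (0 : ℝ) < p := by linarith
  have hs0 : 0 < κ * p * ε := by positivity
  set X := (p : ℝ) ^ 2 * Real.exp (-δ * p) with hX
  have hX0 : 0 < X := by positivity
  have hp2 : (1 : ℝ) ≤ (p : ℝ) ^ 2 := one_le_pow₀ hp1
  rcases lt_or_ge (δ * p) 4 with hδp | hδp
  · have hlin : ∀ a c : ℝ, a < c → 0 ≤ a → c ≤ 1 →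
        CellApprox u ε a c p ((Cu + Cm + Cl) * (p : ℝ) ^ 2 * Real.exp (-δ * p)) := by
      intro a c hac ha hc
      refine (CellApprox.of_bound hac hp hε.le hu
        (fun x hx => (hub x ⟨ha.trans hx.1, hx.2.trans hc⟩).1)
        (fun x hx => (hub x ⟨ha.trans hx.1, hx.2.trans hc⟩).2)).mono ?_
      have h1 : 1 ≤ Real.exp 4 * X := by
        have h2 : (1 : ℝ) ≤ Real.exp 4 * Real.exp (-δ * p) := by
          rw [← Real.exp_add]
          exact Real.one_le_exp (by linarith)
        calc (1 : ℝ) ≤ (p : ℝ) ^ 2 * (Real.exp 4 * Real.exp (-δ * p)) :=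
              one_le_mul_of_one_le_of_one_le hp2 h2
          _ = _ := by rw [hX]; ring
      calc 2 * M = 2 * M * 1 := by ring
        _ ≤ 2 * M * (Real.exp 4 * X) := by gcongr
        _ = Cl * X := by rw [hCl]; ring
        _ ≤ (Cu + Cm + Cl) * X := by gcongr; linarith
        _ = _ := by rw [hX]; ring
    refine ⟨fun _ => hlin _ _ one_pos le_rfl le_rfl, fun hlt => ⟨hlin _ _ hs0 le_rfl ?_,
      hlin _ _ ?_ hs0.le ?_, hlin _ _ ?_ ?_ le_rfl⟩⟩ <;> linarith
  set k := ⌊δ * p⌋₊ with hk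
  have hkle : (k : ℝ) ≤ δ * p := Nat.floor_le (by positivity)
  have hklt : δ * p < k + 1 := Nat.lt_floor_add_one _
  have hk0 : (0 : ℝ) ≤ k := by positivity
  have hexp : Real.exp (-k) ≤ Real.exp 1 * Real.exp (-δ * p) := by
    rw [← Real.exp_add]
    exact Real.exp_le_exp.2 (by linarith)
  have he3 : Real.exp 1 ≤ 3 := by linarith [Real.exp_one_lt_d9]
  have he0 := Real.exp_pos 1
  have hkp : 2 * k + 2 ≤ p := by
    have h1 : δ * p ≤ 1 / 4 * p := by gcongr
    have : 2 * (k : ℝ) + 2 ≤ p := by linarith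
    exact_mod_cast this
  have hkγ : 12 * (k * γ₀) ≤ p := by
    have h1 : k * γ₀ ≤ δ * p * γ₀ := by gcongr
    nlinarith
  set Λ := K / ε + 2 * k * γ₀ with hΛ
  have hΛ0 : 0 < Λ := by positivity
  have hεΛ : ε * Λ = K + ε * (2 * k * γ₀) := by rw [hΛ]; field_simp
  have hkγ0 : 0 ≤ k * γ₀ := by positivity
  have hεk : ε * (2 * k * γ₀) ≤ p := by nlinarith
  have hder : ∀ x ∈ Icc (0 : ℝ) 1, |iteratedDeriv (k + 2) u x| ≤ M * Λ ^ (k + 2) :=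
    fun x hx => abs_iteratedDeriv_solution_le (N₀ := k) hC (by linarith) hε hε₂ hεε hM1
      (by have : 0 < K / ε := by positivity
          linarith)
      (by rw [hεΛ]; have : 0 ≤ ε * (2 * k * γ₀) := by positivity
          linarith)
      h.smooth_b h.smooth_r h.smooth_f hu h.b_le h.r_le h.f_le hbvp.2.2 hx (hub x hx).1
      (hub x hx).2 _ le_rfl
  have hlay : ∀ a c : ℝ, a < c → 0 ≤ a → c ≤ 1 → (c - a) * Λ * 3 ≤ p →
      CellApprox u ε a c p ((Cu + Cm + Cl) * (p : ℝ) ^ 2 * Real.exp (-δ * p)) := by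
    intro a c hac ha hc hlen
    refine (CellApprox.of_scale (K := K + 1) hac hε.le hu (by linarith) hΛ0.le (by linarith)
      (fun x hx => hder x ⟨ha.trans hx.1, hx.2.trans hc⟩) ?_ ?_ hkp).mono ?_
    · refine le_trans ?_ hlen
      have : 0 ≤ (c - a) * Λ := mul_nonneg (by linarith) hΛ0.le
      gcongr
    · rw [hεΛ]
      have : K ≤ K * p := le_mul_of_one_le_right hK0.le hp1
      linarith
    · calc _ ≤ Real.pi * M * (1 + (K + 1)) * (p : ℝ) ^ 2
            * (Real.exp 1 * Real.exp (-δ * p)) := by gcongr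
        _ = Cu * X := by rw [hCu, hX]; ring
        _ ≤ (Cu + Cm + Cl) * X := by gcongr; linarith
        _ = _ := by rw [hX]; ring
  refine ⟨fun hge => hlay 0 1 one_pos le_rfl le_rfl ?_, fun hlt => ?_⟩
  · have h1 : 1 / ε ≤ 2 * κ * p := by
      rw [div_le_iff₀ hε]
      have : κ * p * ε ^ 2 ≤ κ * p * ε := by gcongr; nlinarith
      linarith
    have h2 : K / ε ≤ p / 6 := by
      calc K / ε = K * (1 / ε) := by ring
        _ ≤ K * (2 * κ * p) := by gcongr
        _ = 2 * (κ * K) * p := by ring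
        _ = p / 6 := by rw [hκK]; ring
    rw [hΛ]; linarith
  have hlen : κ * p * ε * Λ * 3 ≤ p := by
    have e : κ * p * ε * Λ = p * (κ * K) + κ * p * ε * (2 * k * γ₀) := by
      rw [hΛ]; field_simp
    rw [e, hκK]
    have : κ * p * ε * (2 * k * γ₀) ≤ 1 / 2 * (2 * k * γ₀) := by gcongr
    linarith
  refine ⟨hlay _ _ hs0 le_rfl (by linarith) (by rwa [sub_zero]), ?_,
    hlay _ _ (by linarith) (by linarith) le_rfl (by rwa [sub_sub_cancel])⟩
  have hΛw : Kw * (3 * k + 4) ≤ 4 * Kw * (δ * p) := by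
    calc Kw * (3 * k + 4) ≤ Kw * (4 * (δ * p)) := by gcongr; linarith
      _ = _ := by ring
  have hεΛw : ε * (Kw * (3 * k + 4)) ≤ τ := by
    have h1 : ε * (Kw * (3 * k + 4)) ≤ ε * (4 * Kw * (δ * p)) := by gcongr
    have h2 : κ * (ε * (4 * Kw * (δ * p))) ≤ κ * τ := by
      calc κ * (ε * (4 * Kw * (δ * p))) = 2 * (δ * (2 * Kw)) * (κ * p * ε) := by ring
        _ ≤ 2 * (κ * τ) * (1 / 2) := by gcongr
        _ = _ := by ring
    exact h1.trans (le_of_mul_le_mul_left h2 hκ0)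
  obtain ⟨w, hws, hwb, hvb⟩ := hdec ε ε₂ u hε hε1 hε₂ hεε hu hbvp k hεΛw
  have hmid : κ * p * ε < 1 - κ * p * ε := by linarith
  have hw := CellApprox.of_scale (k := k) (p := p) (K := τ) hmid hε.le hws hCw.le
    (by positivity : 0 ≤ Kw * (3 * (k : ℝ) + 4)) hτ.le
    (fun x hx => hwb x ⟨by linarith [hx.1], by linarith [hx.2]⟩ _ le_rfl)
    (by
      have h1 : 0 ≤ Kw * (3 * (k : ℝ) + 4) := by positivity
      calc (1 - κ * p * ε - κ * p * ε) * (Kw * (3 * k + 4)) * Real.exp 1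
          ≤ 1 * (Kw * (3 * k + 4)) * 3 := by gcongr; linarith
        _ ≤ 4 * Kw * (δ * p) * 3 := by linarith
        _ = δ * (12 * Kw) * p := by ring
        _ ≤ 1 * p := by gcongr
        _ = p := one_mul _)
    (hεΛw.trans (le_mul_of_one_le_right hτ.le hp1)) hkp
  have hE : Real.exp (-(α * (κ * p * ε / 2) / ε)) ≤ Real.exp (-k) := by
    apply Real.exp_le_exp.2
    have e : α * (κ * p * ε / 2) / ε = α * κ / 2 * p := by field_simp
    rw [e]
    have : δ * p ≤ α * κ / 2 * p := by gcongr
    linarith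
  have hvb' := hvb (κ * p * ε / 2) (by positivity) (by linarith)
  have hEle : Cw * (Real.exp (-k) + Real.exp (-(α * (κ * p * ε / 2) / ε)))
      ≤ 2 * Cw * Real.exp (-k) := by nlinarith
  have hv : CellApprox (fun t => u t - w t) ε (κ * p * ε) (1 - κ * p * ε) p
      (2 * (2 * Cw * Real.exp (-k))) := by
    refine CellApprox.of_bound hmid hp hε.le (hu.sub hws) (fun x hx => ?_) (fun x hx => ?_)
    · exact (hvb' x ⟨by linarith [hx.1], by linarith [hx.2]⟩).1.trans hEle
    · rw [deriv_fun_sub ((hu.differentiable (by simp)) x) ((hws.differentiable (by simp)) x)]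
      exact (hvb' x ⟨by linarith [hx.1], by linarith [hx.2]⟩).2.trans hEle
  refine (CellApprox.of_add hε.le hu hws hw hv).mono ?_
  calc Real.pi * Cw * (1 + τ) * (p : ℝ) ^ 2 * Real.exp (-k) + 2 * (2 * Cw * Real.exp (-k))
      ≤ Real.pi * Cw * (1 + τ) * (p : ℝ) ^ 2 * Real.exp (-k)
        + (p : ℝ) ^ 2 * (2 * (2 * Cw * Real.exp (-k))) := by
        refine (add_le_add_iff_left _).2 (le_mul_of_one_le_left (by positivity) hp2)
    _ = (Real.pi * Cw * (1 + τ) + 4 * Cw) * (p : ℝ) ^ 2 * Real.exp (-k) := by ring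
    _ ≤ (Real.pi * Cw * (1 + τ) + 4 * Cw) * (p : ℝ) ^ 2
        * (Real.exp 1 * Real.exp (-δ * p)) := by gcongr
    _ = Cm * X := by rw [hCm, hX]; ring
    _ ≤ (Cu + Cm + Cl) * X := by gcongr; linarith
    _ = _ := by rw [hX]; ring

/-- Analytic data satisfying the coercivity condition uniformly in the convection parameter. -/
theorem exists_dataBounds {bb rr ff : ℝ → ℝ} (hb : AnalyticData bb) (hr : AnalyticData rr)
    (hf : AnalyticData ff) {γ : ℝ} (hγ : 0 < γ)
    (hγ' : ∀ ε₂ ∈ Ioc (0 : ℝ) 1, ∀ x ∈ Icc (0 : ℝ) 1, γ ≤ rr x - ε₂ * deriv bb x / 2) :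
    ∃ C₀ γ₀ : ℝ, DataBounds bb rr ff C₀ γ₀ γ := by
  obtain ⟨hbs, Cb, gb, hCb, hgb, hbx⟩ := hb
  obtain ⟨hrs, Cr, gr, hCr, hgr, hrx⟩ := hr
  obtain ⟨hfs, Cf, gf, hCf, hgf, hfx⟩ := hf
  have aux : ∀ {C C' g g' : ℝ} {n : ℕ}, 0 < C → 0 < g → C ≤ C' → g ≤ g' →
      C * n.factorial * g ^ n ≤ C' * n.factorial * g' ^ n := by
    intro C C' g g' n hC hg hCC hgg
    have : 0 < C' := hC.trans_le hCC
    gcongr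
  refine ⟨1 + Cb + Cr + Cf, 1 + gb + gr + gf, hbs, hrs, hfs, by linarith, by linarith, hγ,
    fun k x hx => (hbx k x hx).trans (aux hCb hgb (by linarith) (by linarith)),
    fun k x hx => (hrx k x hx).trans (aux hCr hgr (by linarith) (by linarith)),
    fun k x hx => (hfx k x hx).trans (aux hCf hgf (by linarith) (by linarith)), fun x hx => ?_⟩
  refine le_of_forall_pos_le_add fun e he => ?_
  set d := |deriv bb x| with hd
  have hd0 : 0 ≤ d := abs_nonneg _
  have hmin : 0 < min 1 (e / (d + 1)) := lt_min one_pos (by positivity)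
  have h1 := hγ' (min 1 (e / (d + 1))) ⟨hmin, min_le_left _ _⟩ x hx
  have h2 : min 1 (e / (d + 1)) * d ≤ e := by
    have h3 : min 1 (e / (d + 1)) ≤ e / (d + 1) := min_le_right _ _
    rw [le_div_iff₀ (by positivity)] at h3
    linarith
  have h4 : -(min 1 (e / (d + 1)) * deriv bb x) ≤ min 1 (e / (d + 1)) * d := by
    rw [← mul_neg]
    gcongr
    exact neg_le_abs _
  linarith

/-- A polynomial factor is absorbed by part of the exponential decay. -/
theorem cube_mul_exp_neg_le {δ x : ℝ} (hδ : 0 < δ) (hx : 0 ≤ x) :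
    x ^ 3 * Real.exp (-δ * x) ≤ 48 / δ ^ 3 * Real.exp (-(δ / 2) * x) := by
  have h := Real.pow_div_factorial_le_exp (x := δ / 2 * x) (by positivity) 3
  have e : Real.exp (-δ * x) = Real.exp (-(δ / 2) * x) * Real.exp (-(δ / 2 * x)) := by
    rw [← Real.exp_add]; congr 1; ring
  have h2 : x ^ 3 ≤ 48 / δ ^ 3 * Real.exp (δ / 2 * x) := by
    have h3 : x ^ 3 = 48 / δ ^ 3 * ((δ / 2 * x) ^ 3 / (Nat.factorial 3 : ℕ)) := by
      have : ((Nat.factorial 3 : ℕ) : ℝ) = 6 := by norm_num [Nat.factorial]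
      rw [this]; field_simp; ring
    rw [h3]
    gcongr
  rw [e]
  calc _ ≤ 48 / δ ^ 3 * Real.exp (δ / 2 * x)
        * (Real.exp (-(δ / 2) * x) * Real.exp (-(δ / 2 * x))) := by gcongr
    _ = 48 / δ ^ 3 * Real.exp (-(δ / 2) * x)
        * (Real.exp (δ / 2 * x) * Real.exp (-(δ / 2 * x))) := by ring
    _ = _ := by rw [← Real.exp_add, add_neg_cancel, Real.exp_zero, mul_one]

/-- Robust exponential convergence in the reaction-diffusion regime
`ε₂² ≪ ε₁ ≤ 1`: on the Spectral Boundary Layer mesh `ω_BL(κ,p)` there holds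
`|||u − u_p|||_p ≤ C e^{−σ p}`, uniformly in `ε₁, ε₂` and `p`. -/
theorem statement10 (bb rr ff : ℝ → ℝ)
    (hb : AnalyticData bb) (hr : AnalyticData rr) (hf : AnalyticData ff)
    (hbpos : ∀ x ∈ Set.Icc (0 : ℝ) 1, 0 < bb x)
    (hrpos : ∀ x ∈ Set.Icc (0 : ℝ) 1, 0 ≤ rr x)
    (γ : ℝ) (hγ : 0 < γ)
    (hγ' : ∀ ε₂ ∈ Set.Ioc (0 : ℝ) 1, ∀ x ∈ Set.Icc (0 : ℝ) 1,
      γ ≤ rr x - ε₂ * deriv bb x / 2) :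
    ∃ κ σ C : ℝ, 0 < κ ∧ 0 < σ ∧ 0 < C ∧
      ∀ ε₁ ε₂ : ℝ, 0 < ε₁ → 0 < ε₂ → ε₂ ^ 2 ≤ ε₁ → ε₁ ≤ 1 →
      ∀ p : ℕ, 1 ≤ p →
      ∀ (N : ℕ) (m : Mesh N), IsSBLmeshRD κ p ε₁ m →
      ∀ u : ℝ → ℝ, ContDiff ℝ (⊤ : ℕ∞) u → SolvesBVP ε₁ ε₂ bb rr ff u →
      ∀ (up0 : Fin N → ℝ → ℝ) (upb : Fin (N + 1) → ℝ) (Dup Dcup : Fin N → ℝ → ℝ),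
        IsWGsol m ε₁ ε₂ bb rr ff p up0 upb Dup Dcup →
      ∀ D : Fin N → ℝ → ℝ,
        IsWeakDeriv m (p - 1) (fun j t => u t - up0 j t)
          (fun i => u (m.pt i) - upb i) D →
        Real.sqrt (normP2 m ε₁ ε₂ bb (stdPen m ε₁ p)
            (fun j t => u t - up0 j t) (fun i => u (m.pt i) - upb i) D)
          ≤ C * Real.exp (-σ * p) := by
  obtain ⟨C₀, γ₀, h⟩ := exists_dataBounds hb hr hf hγ hγ'
  obtain ⟨κ, δ, C, hκ, hδ, hC, happ⟩ := h.exists_cellApprox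
  set A := (4 + 4 / γ) * (7 + 2 * C₀ ^ 2 / γ) + 4 with hA
  have hA0 : 0 < A := by positivity
  refine ⟨κ, δ / 2, (1 + 3 * A) * C * (48 / δ ^ 3), hκ, by positivity, by positivity, ?_⟩
  intro ε₁ ε₂ hε₁ hε₂ hεε hε₁1 p hp N m hmesh u hu hbvp up0 upb Dup Dcup hwg D hD
  obtain ⟨n, rfl⟩ : ∃ n, p = n + 1 := ⟨p - 1, by omega⟩
  set ε := Real.sqrt ε₁ with hε
  have hε0 : 0 < ε := Real.sqrt_pos.2 hε₁
  have hε1 : ε ≤ 1 := Real.sqrt_le_one.2 hε₁1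
  have hsq : ε ^ 2 = ε₁ := Real.sq_sqrt hε₁.le
  have hε₂ε : ε₂ ≤ ε := Real.le_sqrt_of_sq_le hεε
  have hcell := happ ε ε₂ u hε0 hε1 hε₂.le hε₂ε hu (by rwa [hsq]) (n + 1) hp
  set η := C * ((n + 1 : ℕ) : ℝ) ^ 2 * Real.exp (-δ * ((n + 1 : ℕ) : ℝ)) with hη
  have hη0 : 0 ≤ η := by positivity
  have hmain : N ≤ 3 ∧ ∀ j : Fin N, CellApprox u ε (m.xl j) (m.xr j) (n + 1) η := by
    rcases hmesh with ⟨hge, rfl⟩ | ⟨-, rfl, h1, h2⟩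
    · refine ⟨by norm_num, fun j => ?_⟩
      fin_cases j
      have e1 : m.xl 0 = 0 := m.left
      have e2 : m.xr 0 = 1 := m.right
      simpa [e1, e2] using hcell.1 (by rwa [hsq])
    · have hlt : m.pt 1 < m.pt 2 := m.mono (by decide)
      rw [h1, h2] at hlt
      obtain ⟨c0, c1, c2⟩ := hcell.2 (by linarith)
      refine ⟨le_rfl, fun j => ?_⟩
      have e0 : m.pt 0 = 0 := m.left
      have e3 : m.pt 3 = 1 := m.right
      fin_cases j
      · show CellApprox u ε (m.pt 0) (m.pt 1) (n + 1) η
        rwa [e0, h1]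
      · show CellApprox u ε (m.pt 1) (m.pt 2) (n + 1) η
        rwa [h1, h2]
      · show CellApprox u ε (m.pt 2) (m.pt 3) (n + 1) η
        rwa [h2, e3]
  obtain ⟨hN, hcells⟩ := hmain
  choose Q hQd hQl hQr hQ using hcells
  have hε₂1 : ε₂ ≤ 1 := hε₂ε.trans hε1
  have herr := wg_error_le m hε₁ hε₂ hεε hγ hu h.smooth_b h.smooth_r.continuous
    (fun x hx => h.abs_b_le hx) (fun x hx => h.abs_r_le hx) (fun x hx => (hbpos x hx).le)
    (hγ' ε₂ ⟨hε₂, hε₂1⟩) hbvp hwg hD Q hQd hQl hQr (fun j x hx => (hQ j x hx).1)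
    (fun j x hx => by
      rw [← hsq, ← mul_pow, ← sq_abs, abs_mul, abs_of_pos hε0]
      exact pow_le_pow_left₀ (by positivity) (hQ j x hx).2 2)
  have hN' : (N : ℝ) ≤ 3 := by exact_mod_cast hN
  have hroot : Real.sqrt (normP2 m ε₁ ε₂ bb (stdPen m ε₁ (n + 1)) (fun j t => u t - up0 j t)
      (fun i => u (m.pt i) - upb i) D) ≤ (1 + 3 * A) * ((n + 1 : ℕ) : ℝ) * η := by
    refine Real.sqrt_le_iff.2 ⟨by positivity, herr.trans ?_⟩
    push_cast
    calc N * (A * ((n : ℝ) + 1) ^ 2 * η ^ 2) ≤ 3 * (A * ((n : ℝ) + 1) ^ 2 * η ^ 2) := by gcongr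
      _ = 3 * A * (((n : ℝ) + 1) * η) ^ 2 := by ring
      _ ≤ (1 + 3 * A) ^ 2 * (((n : ℝ) + 1) * η) ^ 2 := by gcongr; nlinarith
      _ = _ := by ring
  refine hroot.trans ?_
  calc _ = (1 + 3 * A) * C * (((n + 1 : ℕ) : ℝ) ^ 3
        * Real.exp (-δ * ((n + 1 : ℕ) : ℝ))) := by rw [hη]; ring
    _ ≤ (1 + 3 * A) * C * (48 / δ ^ 3 * Real.exp (-(δ / 2) * ((n + 1 : ℕ) : ℝ))) := by
        exact mul_le_mul_of_nonneg_left (cube_mul_exp_neg_le hδ (by positivity)) (by positivity)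
    _ = _ := by ring
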